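/- The Hochschild cohomology algebra HH^•(FK(3)) is a finitely generated k-algebra; in fact it admits a minimal generating set consisting of exactly 14 homogeneous elements, of cohomological degrees 0,0,0,1,1,1,1,1,2,2,2,2,3,4 respectively. -/

import Mathlib

/-!
The Hochschild cohomology algebra `HH^•(FK(3)) = ⊕ₙ Extⁿ_{A^e}(A,A)` (with the cup product,
which coincides with the Yoneda composition product) is a finitely generated `k`-algebra;
it admits a minimal generating set of exactly `14` homogeneous elements, of cohomological
degrees `0,0,0,1,1,1,1,1,2,2,2,2,3,4`.
-/

open FreeAlgebra CategoryTheory CategoryTheory.Abelian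
open scoped TensorProduct

/-- The defining relations of the Fomin–Kirillov algebra `FK(3)`. -/
inductive FKRel (k : Type) [Field k] : FreeAlgebra k (Fin 3) → FreeAlgebra k (Fin 3) → Prop
  | sq_a : FKRel k (ι k (0 : Fin 3) * ι k (0 : Fin 3)) 0
  | sq_b : FKRel k (ι k (1 : Fin 3) * ι k (1 : Fin 3)) 0
  | sq_c : FKRel k (ι k (2 : Fin 3) * ι k (2 : Fin 3)) 0
  | rel1 : FKRel k (ι k (0 : Fin 3) * ι k (1 : Fin 3) + ι k (1 : Fin 3) * ι k (2 : Fin 3) +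
      ι k (2 : Fin 3) * ι k (0 : Fin 3)) 0
  | rel2 : FKRel k (ι k (1 : Fin 3) * ι k (0 : Fin 3) + ι k (0 : Fin 3) * ι k (2 : Fin 3) +
      ι k (2 : Fin 3) * ι k (1 : Fin 3)) 0

/-- The Fomin–Kirillov algebra on three generators. -/
abbrev FK3 (k : Type) [Field k] := RingQuot (FKRel k)

variable (k : Type) [Field k]

/-- The enveloping algebra `A^e = A ⊗ₖ Aᵒᵖ` of `A = FK(3)`. -/
abbrev FKAe := FK3 k ⊗[k] (FK3 k)ᵐᵒᵖ

noncomputable instance : Module (FKAe k) (FK3 k) := TensorProduct.Algebra.module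

/-- `A = FK(3)` as a bimodule over itself, i.e. as an `A^e`-module. -/
noncomputable abbrev AAmod : ModuleCat.{0} (FKAe k) := ModuleCat.of (FKAe k) (FK3 k)

noncomputable instance : HasDerivedCategory.{1} (ModuleCat.{0} (FKAe k)) :=
  HasDerivedCategory.standard _

instance : HasExt.{1} (ModuleCat.{0} (FKAe k)) :=
  hasExt_of_hasDerivedCategory.{1} (ModuleCat.{0} (FKAe k))

/-- The Hochschild cohomology `HHⁿ(FK(3)) = Extⁿ_{A^e}(A,A)`. -/
abbrev HHExt (n : ℕ) : Type 1 := Ext (AAmod k) (AAmod k) n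

/-- The cohomological degrees `0,0,0,1,1,1,1,1,2,2,2,2,3,4` of the 14 generators. -/
def hhDegs : Fin 14 → ℕ := ![0, 0, 0, 1, 1, 1, 1, 1, 2, 2, 2, 2, 3, 4]

/-- The graded subalgebra of `HH^•(FK(3))` generated (over `k`) by a family of homogeneous
elements: the closure of the family under addition, negation, `k`-scalars (via composition with
`c • 𝟙`) and the cup (Yoneda composition) product. -/
inductive ExtGen (S : ∀ n : ℕ, Set (HHExt k n)) : ∀ n : ℕ, HHExt k n → Prop
  | of {n : ℕ} (x : HHExt k n) (hx : x ∈ S n) : ExtGen S n x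
  | zero (n : ℕ) : ExtGen S n 0
  | one : ExtGen S 0 (Ext.mk₀ (𝟙 (AAmod k)))
  | add {n : ℕ} (x y : HHExt k n) : ExtGen S n x → ExtGen S n y → ExtGen S n (x + y)
  | neg {n : ℕ} (x : HHExt k n) : ExtGen S n x → ExtGen S n (-x)
  | smul {n : ℕ} (c : k) (x : HHExt k n) :
      ExtGen S n x → ExtGen S n ((Ext.mk₀ (c • 𝟙 (AAmod k))).comp x (zero_add n))
  | mul {a b : ℕ} (x : HHExt k a) (y : HHExt k b) :
      ExtGen S a x → ExtGen S b y → ExtGen S (a + b) (x.comp y rfl)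

/-- The set of the homogeneous elements `g i`, `i ∈ T`, of the respective degrees. -/
def famSet (g : ∀ i : Fin 14, HHExt k (hhDegs i)) (T : Set (Fin 14)) :
    ∀ n : ℕ, Set (HHExt k n) :=
  fun n => {x | ∃ i ∈ T, ∃ h : hhDegs i = n, x = h ▸ g i}

/-!
Let `A = FK(3)`. The Koszul bimodule complex of `A` starts with free modules of ranks
`1, 3, 5, 6, 6, 6`. It is exact there, except in degree `3`, where its homology is `A` again: the
cycles `Z` and the boundaries `B` of degree `3` form an exact sequence `0 → B → Z → A → 0`. The
projection `Z → A` is a class `X₁₄` of degree `4`, and every class of degree `4 + m` comes from an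
extension of degree `m` of `Z` by `A`, whose restriction to `B` is the obstruction to being a
multiple of `X₁₄`. This restriction is also the restriction of another extension of `Z`, which gives
a class already generated: an explicit cocycle for `m = 0`, and a multiple of
`X₉ + X₁₀ - X₁₁` for `m ≥ 1`, because the action of this element on the syzygies agrees with the
periodicity of the complex, which identifies the cycles of degree `5` with `B`. Thus induction on
the degree reduces generation to degrees at most `4`.

In low degrees cocycles are split into coboundaries and products of generators by explicit integral
matrices, in which the only denominators are products of `2` and `3`; hence one computation serves
all characteristics other than these.

For minimality, take a subspace of the component of degree `n` which contains all decomposable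
classes and all generators of degree `n` except a given one. Together with the full components of
the other degrees it is a subalgebra. Such a subspace is found by means of a linear form on the
cochains; most products are in its kernel because the classes of degrees `1` and `3` have values in
the radical of `A`.
-/

namespace FominKirillov

universe w u

/-- Formal integral combinations of natural numbers, as lists of pairs (coefficient, index). All
vectors, matrices and certificates below are given by such combinations of basis indices, so that
identities between them can be decided by the kernel, in all characteristics at once. -/
abbrev IntComb := List (ℤ × ℕ)

namespace IntComb

/-- The multiple of a combination by an integer. -/
def scale (c : ℤ) (L : IntComb) : IntComb := L.map fun p => (c * p.1, p.2)

/-- The difference of two combinations. -/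
def sub (L L' : IntComb) : IntComb := L ++ scale (-1) L'

/-- The combination obtained by applying `f` to the indices. -/
def rename (f : ℕ → ℕ) (L : IntComb) : IntComb := L.map fun p => (p.1, f p.2)

/-- The linear extension of a family of combinations. -/
def subst (t : ℕ → IntComb) (L : IntComb) : IntComb := L.flatMap fun p => scale p.1 (t p.2)

/-- A family of combinations, replaced by zero from the index `N` on. -/
def truncate (N : ℕ) (t : ℕ → IntComb) (i : ℕ) : IntComb := if Nat.blt i N then t i else []

/-- The linear extension of the first `N` members of a family of combinations. -/
def substBelow (N : ℕ) (t : ℕ → IntComb) : IntComb → IntComb := subst (truncate N t)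

/-- The tensor product of two combinations; the index `N * i + j` stands for the pair `(i, j)` with
`j < N`. -/
def tensor (N : ℕ) (L L' : IntComb) : IntComb := subst (fun i => rename (fun j => N * i + j) L') L

/-- Insertion of a term in a combination sorted by index. -/
def insertTerm (c : ℤ) (i : ℕ) : IntComb → IntComb
  | [] => [(c, i)]
  | p :: L => if Nat.blt i p.2 then (c, i) :: p :: L
      else if Nat.beq i p.2 then (c + p.1, i) :: L else p :: insertTerm c i L

/-- The sorted form of a combination, with at most one term for every index. -/
def collect (L : IntComb) : IntComb := L.foldr (fun p => insertTerm p.1 p.2) []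

/-- The test whether a combination vanishes. -/
def isZero (L : IntComb) : Bool := (collect L).all fun p => p.1 == 0

/-- The test whether the first `N` members of a family of combinations vanish. -/
def allZero (N : ℕ) (t : ℕ → IntComb) : Bool := (List.range N).all fun i => isZero (t i)

section Eval

variable {V W : Type*} [AddCommGroup V] [AddCommGroup W] (e : ℕ → V)

/-- The value of a combination at a family of vectors. -/
def eval (L : IntComb) : V := (L.map fun p => p.1 • e p.2).sum

@[simp] theorem eval_nil : eval e [] = 0 := rfl

@[simp] theorem eval_cons (p : ℤ × ℕ) (L : IntComb) :
    eval e (p :: L) = p.1 • e p.2 + eval e L := List.sum_cons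

theorem eval_append (L L' : IntComb) : eval e (L ++ L') = eval e L + eval e L' := by
  simp [eval]

theorem eval_flatMap {α : Type*} (L : List α) (t : α → IntComb) :
    eval e (L.flatMap t) = (L.map fun a => eval e (t a)).sum := by
  induction L with
  | nil => rfl
  | cons a L ih => rw [List.flatMap_cons, eval_append, ih, List.map_cons, List.sum_cons]

theorem eval_scale (c : ℤ) (L : IntComb) : eval e (scale c L) = c • eval e L := by
  simp [eval, scale, List.smul_sum, Function.comp_def, mul_smul]

theorem eval_sub (L L' : IntComb) : eval e (sub L L') = eval e L - eval e L' := by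
  rw [sub, eval_append, eval_scale, neg_one_smul, sub_eq_add_neg]

theorem eval_rename (g : ℕ → ℕ) (L : IntComb) :
    eval e (rename g L) = eval (fun i => e (g i)) L := by
  simp [rename, eval, Function.comp_def]

theorem eval_subst (t : ℕ → IntComb) (L : IntComb) :
    eval e (subst t L) = eval (fun i => eval e (t i)) L := by
  rw [subst, eval_flatMap]; simp only [eval_scale]; rfl

theorem eval_insertTerm (c : ℤ) (i : ℕ) (L : IntComb) :
    eval e (insertTerm c i L) = c • e i + eval e L := by
  induction L with
  | nil => rfl
  | cons p L ih =>
    rw [insertTerm]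
    split_ifs with h1 h2
    · rfl
    · obtain rfl : i = p.2 := Nat.eq_of_beq_eq_true h2
      rw [eval_cons, eval_cons, add_smul, add_assoc]
    · rw [eval_cons, eval_cons, ih, add_left_comm]

theorem eval_collect (L : IntComb) : eval e (collect L) = eval e L := by
  induction L with
  | nil => rfl
  | cons p L ih => rw [eval_cons, ← ih, ← eval_insertTerm]; rfl

theorem eval_eq_zero_of_isZero {L : IntComb} (h : isZero L) : eval e L = 0 := by
  rw [← eval_collect]
  refine List.sum_eq_zero fun x hx => ?_
  obtain ⟨p, hp, rfl⟩ := List.mem_map.1 hx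
  rw [show p.1 = 0 by simpa using List.all_eq_true.1 h p hp, zero_smul]

theorem eval_eq_of_isZero_sub {L L' : IntComb} (h : isZero (sub L L')) : eval e L = eval e L' := by
  rw [← sub_eq_zero, ← eval_sub, eval_eq_zero_of_isZero e h]

theorem map_eval {F : Type*} [FunLike F V W] [AddMonoidHomClass F V W] (φ : F) (L : IntComb) :
    φ (eval e L) = eval (fun i => φ (e i)) L := by
  simp [eval, map_list_sum, Function.comp_def]

theorem eval_congr {e e' : ℕ → V} {L : IntComb} (h : ∀ p ∈ L, e p.2 = e' p.2) :
    eval e L = eval e' L :=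
  congrArg List.sum (List.map_congr_left fun p hp => by rw [h p hp])

theorem eval_tensor {U : Type*} [AddCommGroup U] {N : ℕ} (f : V →+ W →+ U) (e : ℕ → V) (e' : ℕ → W)
    (L : IntComb) {L' : IntComb} (hL' : ∀ p ∈ L', p.2 < N) :
    eval (fun i => f (e (i / N)) (e' (i % N))) (tensor N L L') = f (eval e L) (eval e' L') := by
  have hrow : ∀ i, eval (fun i => f (e (i / N)) (e' (i % N))) (rename (fun j => N * i + j) L') =
      f (e i) (eval e' L') := fun i => by
    rw [eval_rename, map_eval]
    refine eval_congr fun p hp => ?_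
    rw [Nat.mul_add_div (pos_of_gt (hL' p hp)), Nat.mul_add_mod, Nat.div_eq_of_lt (hL' p hp),
      Nat.mod_eq_of_lt (hL' p hp), add_zero]
  rw [tensor, eval_subst]
  simp only [hrow]
  exact (map_eval e (f.flip (eval e' L')) L).symm

theorem eval_apply {ι : Type*} (e : ℕ → ι → V) (L : IntComb) (w : ι) :
    eval e L w = eval (fun i => e i w) L :=
  map_eval e (Pi.evalAddMonoidHom (fun _ => V) w) L

theorem eval_mem {R : Type*} [Ring R] [Module R V] (S : Submodule R V) {e : ℕ → V}
    (h : ∀ i, e i ∈ S) (L : IntComb) : eval e L ∈ S := by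
  refine list_sum_mem fun x hx => ?_
  obtain ⟨p, -, rfl⟩ := List.mem_map.1 hx
  exact zsmul_mem (h _) _

end Eval

section Basis

open Module

variable {k V W : Type*} [CommRing k] [AddCommGroup V] [Module k V] [AddCommGroup W]
  {N N' : ℕ} (b : Basis (Fin N) k V)

/-- The members of a basis indexed by `Fin N` as a sequence, extended by zero. -/
noncomputable def vec (i : ℕ) : V := if h : i < N then b ⟨i, h⟩ else 0

theorem vec_of_lt {i : ℕ} (h : i < N) : vec b i = b ⟨i, h⟩ := dif_pos h

theorem vec_of_le {i : ℕ} (h : N ≤ i) : vec b i = 0 := dif_neg (not_lt.2 h)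

theorem vec_coe (i : Fin N) : vec b i = b i := vec_of_lt b i.2

/-- The additive map `φ` takes the `i`-th member of the basis `b` to the value of `t i` at `f`. -/
def HasTable {F : Type*} [FunLike F V W] (f : ℕ → W) (φ : F) (t : ℕ → IntComb) : Prop :=
  ∀ i : Fin N, φ (b i) = eval f (t i)

variable {b} {f : ℕ → W}

theorem HasTable.map_eval {F : Type*} [FunLike F V W] [AddMonoidHomClass F V W] {φ : F}
    {t : ℕ → IntComb} (h : HasTable b f φ t) (L : IntComb) :
    φ (eval (vec b) L) = eval f (substBelow N t L) := by
  rw [IntComb.map_eval, substBelow, eval_subst]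
  congr 1
  funext i
  rcases lt_or_ge i N with hi | hi
  · rw [vec_of_lt b hi, h ⟨i, hi⟩, truncate, if_pos (by simpa using hi)]
  · rw [vec_of_le b hi, map_zero, truncate, if_neg (by simpa using hi), eval_nil]

variable [Module k W]

theorem HasTable.ext {φ ψ : V →ₗ[k] W} {t s : ℕ → IntComb} (h : HasTable b f φ t)
    (h' : HasTable b f ψ s) (hz : allZero N fun i => sub (t i) (s i)) : φ = ψ :=
  b.ext fun i => by
    rw [h i, h' i]
    exact eval_eq_of_isZero_sub f (List.all_eq_true.1 hz i (List.mem_range.2 i.2))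

theorem HasTable.add {φ ψ : V →ₗ[k] W} {t s : ℕ → IntComb} (h : HasTable b f φ t)
    (h' : HasTable b f ψ s) : HasTable b f (φ + ψ) fun i => t i ++ s i := fun i => by
  rw [LinearMap.add_apply, h i, h' i, eval_append]

theorem HasTable.comp {U : Type*} [AddCommGroup U] [Module k U] {g : ℕ → U}
    {b' : Basis (Fin N') k W} {φ : V →ₗ[k] W} {ψ : W →ₗ[k] U} {t s : ℕ → IntComb}
    (h' : HasTable b' g ψ s) (h : HasTable b (vec b') φ t) :
    HasTable b g (ψ ∘ₗ φ) fun i => substBelow N' s (t i) := fun i => by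
  rw [LinearMap.comp_apply, h i, h'.map_eval]

variable (b f) in
/-- The linear map with prescribed table. -/
noncomputable def ofTable (t : ℕ → IntComb) : V →ₗ[k] W := b.constr ℕ fun i => eval f (t i)

theorem hasTable_ofTable (t : ℕ → IntComb) : HasTable b f (ofTable b f t) t :=
  fun i => b.constr_basis ℕ _ i

theorem ofTable_mem (S : Submodule k W) (hf : ∀ i, f i ∈ S) (t : ℕ → IntComb) (x : V) :
    ofTable b f t x ∈ S := by
  rw [ofTable, Basis.constr_apply_fintype]
  exact S.sum_mem fun i _ => S.smul_mem _ (eval_mem S hf _)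

/-- The standard basis of a finite power, with the coordinates in lexicographic order. -/
noncomputable def powBasis (b : Basis (Fin N) k V) (r : ℕ) : Basis (Fin (r * N)) k (Fin r → V) :=
  ((Pi.basis fun _ : Fin r => b).reindex (Equiv.sigmaEquivProd _ _)).reindex finProdFinEquiv

variable (b) in
theorem powBasis_apply (r : ℕ) (i : Fin (r * N)) :
    powBasis b r i = Pi.single i.divNat (b i.modNat) := by
  simp [powBasis]

variable (b) in
theorem vec_powBasis (r i : ℕ) (w : Fin r) :
    vec (powBasis b r) i w = if w.1 = i / N then vec b (i % N) else 0 := by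
  rcases lt_or_ge i (r * N) with hi | hi
  · have hN : 0 < N := Nat.pos_of_mul_pos_left (pos_of_gt hi)
    rw [vec_of_lt _ hi, powBasis_apply, vec_of_lt b (Nat.mod_lt i hN), Pi.single_apply]
    simp only [Fin.ext_iff]
    rfl
  · rw [vec_of_le _ hi, Pi.zero_apply]
    split_ifs with hw
    · rcases Nat.eq_zero_or_pos N with hN | hN
      · rw [vec_of_le b (hN ▸ Nat.zero_le _)]
      · exact absurd ((Nat.le_div_iff_mul_le hN).2 hi) (hw ▸ w.2.not_ge)
    · rfl

variable (b) in
theorem eval_rename_powBasis {r : ℕ} {L : IntComb} (hL : ∀ p ∈ L, p.2 < N) (w : ℕ) (v : Fin r) :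
    eval (vec (powBasis b r)) (rename (fun l => w * N + l) L) v =
      if v.1 = w then eval (vec b) L else 0 := by
  have hvec : ∀ p ∈ L, vec (powBasis b r) (w * N + p.2) v = if v.1 = w then vec b p.2 else 0 :=
    fun p hp => by
      rw [vec_powBasis, mul_comm, Nat.mul_add_div (pos_of_gt (hL p hp)), Nat.mul_add_mod,
        Nat.div_eq_of_lt (hL p hp), Nat.mod_eq_of_lt (hL p hp), add_zero]
  rw [eval_rename, eval_apply, eval_congr (e' := fun l => if v.1 = w then vec b l else 0) hvec]
  split_ifs
  · rfl
  · simp [eval]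

/-- The table of the linear form whose coefficients in the dual basis are given by `L`, with values
in multiples of `1`. -/
def linearFormTable (L : IntComb) (i : ℕ) : IntComb :=
  (L.filter fun p => Nat.beq p.2 i).map fun p => (p.1, 0)

variable (b) in
/-- The linear form whose coefficients in the basis dual to `b` are given by `L`. -/
noncomputable def linearForm (L : IntComb) : V →ₗ[k] k := ofTable b (fun _ => 1) (linearFormTable L)

theorem hasTable_linearForm (L : IntComb) :
    HasTable b (fun _ => 1) (linearForm b L) (linearFormTable L) :=
  hasTable_ofTable _

theorem linearForm_eval {L L' : IntComb} {n : ℤ}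
    (h : isZero (sub (substBelow N (linearFormTable L) L') [(n, 0)])) :
    linearForm b L (eval (vec b) L') = n := by
  rw [(hasTable_linearForm L).map_eval, eval_eq_of_isZero_sub _ h]
  simp

theorem linearForm_comp_eq_zero {b' : Basis (Fin N') k W} {φ : V →ₗ[k] W} {t : ℕ → IntComb}
    (hφ : HasTable b (vec b') φ t) {L : IntComb}
    (h : allZero N fun i => substBelow N' (linearFormTable L) (t i)) :
    linearForm b' L ∘ₗ φ = 0 :=
  b.ext fun i => by
    rw [((hasTable_linearForm L).comp hφ) i]
    exact eval_eq_zero_of_isZero _ (List.all_eq_true.1 h i (List.mem_range.2 i.2))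

variable (b) in
theorem linearForm_basis (n : ℕ) (i : Fin N) :
    linearForm b [(1, n)] (b i) = if i = n then 1 else 0 := by
  rw [hasTable_linearForm]
  split_ifs with h
  · simp [linearFormTable, h]
  · simp [linearFormTable, Ne.symm h]

variable (b) in
theorem linearForm_powBasis {r : ℕ} (hN : 0 < N) (w : Fin r) (c : Fin r → V) :
    linearForm (powBasis b r) [(1, w * N)] c = linearForm b [(1, 0)] (c w) := by
  suffices h : linearForm (powBasis b r) [(1, w * N)] =
      linearForm b [(1, 0)] ∘ₗ LinearMap.proj w from LinearMap.congr_fun h c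
  refine (powBasis b r).ext fun i => ?_
  rw [linearForm_basis, LinearMap.comp_apply, powBasis_apply, LinearMap.proj_apply,
    Pi.single_apply, apply_ite (linearForm b [(1, 0)]), linearForm_basis, map_zero, ← ite_and]
  refine if_congr ?_ rfl rfl
  rw [Fin.ext_iff, Fin.coe_divNat, Fin.coe_modNat]
  constructor
  · intro h
    rw [h, Nat.mul_div_left _ hN, Nat.mul_mod_left]
    exact ⟨rfl, rfl⟩
  · rintro ⟨h₁, h₂⟩
    rw [h₁, Nat.div_mul_cancel (Nat.dvd_of_mod_eq_zero h₂)]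

end Basis

end IntComb

open IntComb Module

/-! ### Words -/

/-- The multiplication table of the Fomin–Kirillov algebra in the basis of the words
`1, a, b, c, ab, bc, ba, ac, aba, abc, bac, abac`. -/
def wordMulTable : List (List IntComb) := [
    [[(1, 0)], [(1, 1)], [(1, 2)], [(1, 3)], [(1, 4)], [(1, 5)], [(1, 6)], [(1, 7)], [(1, 8)],
      [(1, 9)], [(1, 10)], [(1, 11)]],
    [[(1, 1)], [], [(1, 4)], [(1, 7)], [], [(1, 9)], [(1, 8)], [], [], [], [(1, 11)], []],
    [[(1, 2)], [(1, 6)], [], [(1, 5)], [(1, 8)], [], [], [(1, 10)], [], [(1, 11)], [], []],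
    [[(1, 3)], [(-1, 4), (-1, 5)], [(-1, 6), (-1, 7)], [], [(1, 10)], [(-1, 10)], [(1, 9)],
      [(-1, 9)], [(-1, 11)], [], [], []],
    [[(1, 4)], [(1, 8)], [], [(1, 9)], [], [], [], [(1, 11)], [], [], [], []],
    [[(1, 5)], [(-1, 8)], [(-1, 10)], [], [], [], [(1, 11)], [(-1, 11)], [], [], [], []],
    [[(1, 6)], [], [(1, 8)], [(1, 10)], [], [(1, 11)], [], [], [], [], [], []],
    [[(1, 7)], [(-1, 9)], [(-1, 8)], [], [(1, 11)], [(-1, 11)], [], [], [], [], [], []],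
    [[(1, 8)], [], [], [(1, 11)], [], [], [], [], [], [], [], []],
    [[(1, 9)], [], [(-1, 11)], [], [], [], [], [], [], [], [], []],
    [[(1, 10)], [(-1, 11)], [], [], [], [], [], [], [], [], [], []],
    [[(1, 11)], [], [], [], [], [], [], [], [], [], [], []]]

/-- The product of two words of the basis. -/
def wordMul (i j : ℕ) : IntComb := (wordMulTable.getD i []).getD j []

theorem forall_getD {α : Type*} {P : α → Prop} {l : List α} {d : α} (h : ∀ x ∈ l, P x) (hd : P d)
    (n : ℕ) : P (l.getD n d) := by
  rw [List.getD_eq_getElem?_getD]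
  cases hn : l[n]? with
  | none => exact hd
  | some x => exact h x (List.mem_of_getElem? hn)

theorem wordMul_lt (i j : ℕ) : ∀ p ∈ wordMul i j, p.2 < 12 := by
  have h : ∀ r ∈ wordMulTable, ∀ L ∈ r, ∀ p ∈ L, p.2 < 12 := by decide +kernel
  refine forall_getD (P := fun L : IntComb => ∀ p ∈ L, p.2 < 12) ?_ (by simp) j
  exact forall_getD (P := fun r : List IntComb => ∀ L ∈ r, ∀ p ∈ L, p.2 < 12) h (by simp) i

/-- A factorisation of each nonempty word as a letter times a shorter word. -/
def splitWord : ℕ → ℕ × ℕ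
  | 1 => (1, 0)
  | 2 => (2, 0)
  | 3 => (3, 0)
  | 4 => (1, 2)
  | 5 => (2, 3)
  | 6 => (2, 1)
  | 7 => (1, 3)
  | 8 => (1, 6)
  | 9 => (1, 5)
  | 10 => (2, 7)
  | _ => (1, 10)

theorem splitWord_spec : ∀ i < 12, i ≠ 0 → (splitWord i).1 ∈ [1, 2, 3] ∧ (splitWord i).2 < i := by
  decide

theorem isZero_wordMul_splitWord : ∀ i < 12, i ≠ 0 → ∀ j < 12, isZero (sub (wordMul i j)
    (subst (wordMul (splitWord i).1) (wordMul (splitWord i).2 j))) := by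
  decide +kernel

section Words

variable {A : Type*} [Ring A] (a b c : A)

/-- The words in three elements of a ring, ordered as in `wordMulTable`. -/
def word : ℕ → A
  | 0 => 1
  | 1 => a
  | 2 => b
  | 3 => c
  | 4 => a * b
  | 5 => b * c
  | 6 => b * a
  | 7 => a * c
  | 8 => a * (b * a)
  | 9 => a * (b * c)
  | 10 => b * (a * c)
  | 11 => a * (b * (a * c))
  | _ => 0

/-- The defining relations of the Fomin–Kirillov algebra, for three elements of any ring. -/
structure FKRelations : Prop where
  aa : a * a = 0
  bb : b * b = 0
  cc : c * c = 0
  ab : a * b + b * c + c * a = 0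
  ba : b * a + a * c + c * b = 0

variable {a b c}

theorem FKRelations.braid (h : FKRelations a b c) : b * (a * b) = a * (b * a) := by
  have hcomm : a * (b * a) - b * (a * b) =
      (a * b + b * c + c * a) * a - b * (a * b + b * c + c * a) - c * (a * a) + b * b * c := by
    noncomm_ring
  rw [h.ab, h.aa, h.bb] at hcomm
  exact (sub_eq_zero.1 (by simpa using hcomm)).symm

theorem FKRelations.letter_mul_word (h : FKRelations a b c) {g j : ℕ} (hg : g ∈ [1, 2, 3])
    (hj : j < 12) : word a b c g * word a b c j = eval (word a b c) (wordMul g j) := by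
  have ca : c * a = -(a * b) - b * c := by
    rw [eq_sub_iff_add_eq, eq_neg_iff_add_eq_zero, ← h.ab]; abel
  have cb : c * b = -(b * a) - a * c := by
    rw [eq_sub_iff_add_eq, eq_neg_iff_add_eq_zero, ← h.ba]; abel
  have aa' : ∀ x, a * (a * x) = 0 := fun x => by rw [← mul_assoc, h.aa, zero_mul]
  have bb' : ∀ x, b * (b * x) = 0 := fun x => by rw [← mul_assoc, h.bb, zero_mul]
  have ca' : ∀ x, c * (a * x) = -(a * (b * x)) - b * (c * x) := fun x => by
    rw [← mul_assoc, ca]; noncomm_ring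
  have cb' : ∀ x, c * (b * x) = -(b * (a * x)) - a * (c * x) := fun x => by
    rw [← mul_assoc, cb]; noncomm_ring
  have bab' : ∀ x, b * (a * (b * x)) = a * (b * (a * x)) := fun x => by
    rw [← mul_assoc a b x, ← mul_assoc, h.braid]; simp only [mul_assoc]
  obtain rfl | rfl | rfl : g = 1 ∨ g = 2 ∨ g = 3 := by simpa using hg
  all_goals
    interval_cases j <;>
      simp [word, wordMul, wordMulTable, h.aa, h.bb, h.cc, ca, cb, aa', bb', ca', cb', h.braid,
        bab', mul_add, sub_eq_add_neg, add_comm]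

theorem word_eq_mul_splitWord {i : ℕ} (hi : i < 12) (h0 : i ≠ 0) :
    word a b c i = word a b c (splitWord i).1 * word a b c (splitWord i).2 := by
  interval_cases i <;> simp [word, splitWord] at h0 ⊢

theorem FKRelations.word_mul_word (h : FKRelations a b c) {i j : ℕ} (hi : i < 12) (hj : j < 12) :
    word a b c i * word a b c j = eval (word a b c) (wordMul i j) := by
  rcases eq_or_ne i 0 with rfl | h0
  · interval_cases j <;> simp [word, wordMul, wordMulTable]
  obtain ⟨hletter, hlt⟩ := splitWord_spec i hi h0
  calc word a b c i * word a b c j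
      = word a b c (splitWord i).1 * eval (word a b c) (wordMul (splitWord i).2 j) := by
        rw [word_eq_mul_splitWord hi h0, mul_assoc, word_mul_word h (hlt.trans hi) hj]
    _ = eval (fun l => eval (word a b c) (wordMul (splitWord i).1 l))
          (wordMul (splitWord i).2 j) := by
        refine (IntComb.map_eval _ (AddMonoidHom.mulLeft (word a b c (splitWord i).1)) _).trans ?_
        exact eval_congr fun p hp => h.letter_mul_word hletter (wordMul_lt _ _ p hp)
    _ = eval (word a b c) (wordMul i j) := by
        rw [← eval_subst, eval_eq_of_isZero_sub _ (isZero_wordMul_splitWord i hi h0 j hj)]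
termination_by i

theorem word_of_le {i : ℕ} (hi : 12 ≤ i) : word a b c i = 0 := by
  obtain ⟨j, rfl⟩ := Nat.exists_eq_add_of_le' hi
  rfl

theorem map_word {B F : Type*} [Ring B] [FunLike F A B] [RingHomClass F A B] (f : F) (i : ℕ) :
    f (word a b c i) = word (f a) (f b) (f c) i := by
  rcases lt_or_ge i 12 with hi | hi
  · interval_cases i <;> simp [word]
  · rw [word_of_le hi, word_of_le hi, map_zero]

end Words

/-! ### Free modules over the enveloping algebra -/

/-- The product of two basis vectors of the enveloping algebra; the index `12 * u + v` stands for
the tensor of the words `u` and `v`, the second one in the opposite algebra. -/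
def envMul (i j : ℕ) : IntComb := tensor 12 (wordMul (i / 12) (j / 12)) (wordMul (j % 12) (i % 12))

/-- The action of a basis vector of the enveloping algebra on a word. -/
def envAct (i j : ℕ) : IntComb := subst (fun l => wordMul l (i % 12)) (wordMul (i / 12) j)

theorem envMul_lt (i j : ℕ) : ∀ p ∈ envMul i j, p.2 < 144 := by
  intro p hp
  simp only [envMul, tensor, subst, scale, rename, List.mem_flatMap, List.mem_map] at hp
  obtain ⟨q, hq, _, ⟨r, hr, rfl⟩, rfl⟩ := hp
  have := wordMul_lt _ _ q hq
  have := wordMul_lt _ _ r hr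
  dsimp only
  lia

theorem envAct_lt (i j : ℕ) : ∀ p ∈ envAct i j, p.2 < 12 := by
  intro p hp
  simp only [envAct, subst, scale, List.mem_flatMap, List.mem_map] at hp
  obtain ⟨q, -, r, hr, rfl⟩ := hp
  exact wordMul_lt _ _ r hr

section FreeMap

variable {k E M W : Type*} [CommRing k] [Ring E] [Algebra k E] [AddCommGroup M] [Module k M]
  [Module E M] [AddCommGroup W] [Module E W] {r s : ℕ}

/-- The linear map out of a free module which takes the standard basis to the vectors `D`. -/
noncomputable def freeMap (D : Fin r → W) : (Fin r → E) →ₗ[E] W := Fintype.linearCombination E D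

theorem freeMap_apply (D : Fin r → W) (x : Fin r → E) : freeMap D x = ∑ w, x w • D w := rfl

theorem freeMap_single (D : Fin r → W) (w : Fin r) : freeMap D (Pi.single w (1 : E)) = D w := by
  rw [freeMap, Fintype.linearCombination_apply_single, one_smul]

theorem freeMap_ext {f g : (Fin r → E) →ₗ[E] W}
    (h : ∀ w, f (Pi.single w 1) = g (Pi.single w 1)) : f = g :=
  LinearMap.pi_ext' fun w => LinearMap.ext_ring (h w)

theorem freeMap_eta (f : (Fin r → E) →ₗ[E] W) : freeMap (fun w => f (Pi.single w 1)) = f :=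
  freeMap_ext fun w => freeMap_single _ w

variable [IsScalarTower k E M]

variable (k M) in
/-- Precomposition with the map of free modules given by `D`, for linear maps to `M` that are
identified with the images of the standard basis. -/
noncomputable def precomp (D : Fin s → Fin r → E) : (Fin r → M) →ₗ[k] (Fin s → M) where
  toFun c w := freeMap c (D w)
  map_add' c c' := funext fun w => by simp [freeMap_apply, Finset.sum_add_distrib]
  map_smul' x c := funext fun w => by
    simp [freeMap_apply, Finset.smul_sum, smul_comm x (_ : E) (_ : M)]

theorem freeMap_precomp (D : Fin s → Fin r → E) (c : Fin r → M) :
    freeMap (precomp k M D c) = freeMap c ∘ₗ freeMap D :=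
  freeMap_ext fun w => by rw [LinearMap.comp_apply, freeMap_single, freeMap_single]; rfl

end FreeMap

/-- The vectors given by a list of combinations. -/
noncomputable def evalFamily {V : Type*} [AddCommGroup V] (e : ℕ → V) (s : ℕ) (D : List IntComb)
    (w : Fin s) : V :=
  eval e (D.getD w [])

/-- The table of the map of free modules given by a list of combinations. -/
def freeMapTable (D : List IntComb) (i : ℕ) : IntComb :=
  subst (fun q => rename (fun l => q / 144 * 144 + l) (envMul (i % 144) (q % 144)))
    (D.getD (i / 144) [])

/-- The table of the linear map which takes the standard basis of a free module to the `i`-th basis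
vector of a power of the bimodule. -/
def freeMapVecTable (i q : ℕ) : IntComb :=
  if Nat.beq (q / 144) (i / 12) then envAct (q % 144) (i % 12) else []

/-- The table of the precomposition with the map of free modules given by a list of
combinations. -/
def precompTable (s : ℕ) (D : List IntComb) (i : ℕ) : IntComb :=
  (List.range s).flatMap fun w =>
    rename (fun l => w * 12 + l) (subst (freeMapVecTable i) (D.getD w []))

/-- A ring `E` and an `E`-module `M` with bases in which they multiply like the enveloping algebra
of the Fomin–Kirillov algebra and the Fomin–Kirillov algebra itself do in the bases of words. -/
structure WordBases (k E M : Type*) [CommRing k] [Ring E] [Algebra k E] [AddCommGroup M]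
    [Module k M] [Module E M] where
  /-- the basis of the enveloping algebra -/
  envBasis : Basis (Fin 144) k E
  /-- the basis of the bimodule -/
  basis : Basis (Fin 12) k M
  mul_vec : ∀ i < 144, ∀ j < 144,
    vec envBasis i * vec envBasis j = eval (vec envBasis) (envMul i j)
  smul_vec : ∀ i < 144, ∀ j < 12, vec envBasis i • vec basis j = eval (vec basis) (envAct i j)
  vec_zero : vec envBasis 0 = 1

namespace WordBases

variable {k E M : Type*} [CommRing k] [Ring E] [Algebra k E] [AddCommGroup M] [Module k M]
  [Module E M] (B : WordBases k E M) {r s : ℕ}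

/-- The basis of a free module of chains. -/
noncomputable abbrev chainBasis (r : ℕ) : Basis (Fin (r * 144)) k (Fin r → E) :=
  powBasis B.envBasis r

/-- The basis of a power of the bimodule, the space of cochains on a free module. -/
noncomputable abbrev cochainBasis (r : ℕ) : Basis (Fin (r * 12)) k (Fin r → M) :=
  powBasis B.basis r

theorem smul_vec_chainBasis {i : ℕ} (hi : i < 144) (q : ℕ) :
    vec B.envBasis i • vec (B.chainBasis r) q = eval (vec (B.chainBasis r))
      (rename (fun l => q / 144 * 144 + l) (envMul i (q % 144))) := by
  funext w
  rw [Pi.smul_apply, eval_rename_powBasis _ (envMul_lt _ _), vec_powBasis, smul_ite, smul_zero,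
    smul_eq_mul, B.mul_vec _ hi _ (Nat.mod_lt _ (by norm_num))]

theorem freeMap_vec_chainBasis {W : Type*} [AddCommGroup W] [Module E W] (D : Fin r → W) {i : ℕ}
    (hi : i / 144 < r) :
    freeMap D (vec (B.chainBasis r) i) = vec B.envBasis (i % 144) • D ⟨i / 144, hi⟩ := by
  rw [freeMap_apply, Finset.sum_eq_single ⟨i / 144, hi⟩]
  · rw [vec_powBasis, if_pos rfl]
  · intro w _ hw
    rw [vec_powBasis, if_neg fun h => hw (Fin.ext h), zero_smul]
  · simp

theorem vec_chainBasis_mul (w : Fin r) : vec (B.chainBasis r) (w * 144) = Pi.single w 1 := by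
  funext v
  rw [vec_powBasis, Nat.mul_mod_left, Nat.mul_div_left _ (by norm_num), B.vec_zero, Pi.single_apply]
  simp [Fin.ext_iff]

theorem hasTable_freeMap (D : List IntComb) :
    HasTable (B.chainBasis s) (vec (B.chainBasis r))
      ((freeMap (evalFamily (vec (B.chainBasis r)) s D)).restrictScalars k) (freeMapTable D) := by
  intro i
  have hi : i.1 / 144 < s := Nat.div_lt_of_lt_mul (i.2.trans_eq (mul_comm _ _))
  rw [← vec_coe, LinearMap.restrictScalars_apply, B.freeMap_vec_chainBasis _ hi, evalFamily,
    freeMapTable, eval_subst, ← DistribSMul.toAddMonoidHom_apply, IntComb.map_eval]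
  exact eval_congr fun p _ => B.smul_vec_chainBasis (Nat.mod_lt _ (by norm_num)) _

theorem freeMap_vec_cochainBasis {i : ℕ} (hi : i / 12 < r) (q : ℕ) :
    freeMap (vec (B.cochainBasis r) i) (vec (B.chainBasis r) q) =
      eval (vec B.basis) (freeMapVecTable i q) := by
  rw [freeMapVecTable]
  split_ifs with h <;> rw [Nat.beq_eq] at h
  · rw [B.freeMap_vec_chainBasis _ (h ▸ hi), vec_powBasis, if_pos h,
      B.smul_vec _ (Nat.mod_lt _ (by norm_num)) _ (Nat.mod_lt _ (by norm_num))]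
  · rcases lt_or_ge (q / 144) r with hq | hq
    · rw [B.freeMap_vec_chainBasis _ hq, vec_powBasis, if_neg h, smul_zero, eval_nil]
    · rw [vec_of_le _ ((Nat.le_div_iff_mul_le (by norm_num)).1 hq), map_zero, eval_nil]

theorem freeMapVecTable_lt (i q : ℕ) : ∀ p ∈ freeMapVecTable i q, p.2 < 12 := by
  rw [freeMapVecTable]
  split_ifs
  exacts [envAct_lt _ _, by simp]

theorem hasTable_precomp [IsScalarTower k E M] (D : List IntComb) :
    HasTable (B.cochainBasis r) (vec (B.cochainBasis s))
      (precomp k M (evalFamily (vec (B.chainBasis r)) s D)) (precompTable s D) := by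
  intro i
  have hi : i.1 / 12 < r := Nat.div_lt_of_lt_mul (i.2.trans_eq (mul_comm _ _))
  have hlt : ∀ w, ∀ p ∈ subst (freeMapVecTable i) (D.getD w []), p.2 < 12 := fun w p hp => by
    simp only [subst, scale, List.mem_flatMap, List.mem_map] at hp
    obtain ⟨q, -, p', hp', rfl⟩ := hp
    exact freeMapVecTable_lt _ _ p' hp'
  have hrow : ∀ w, eval (vec B.basis) (subst (freeMapVecTable i) (D.getD w [])) =
      freeMap (vec (B.cochainBasis r) i) (eval (vec (B.chainBasis r)) (D.getD w [])) := fun w => by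
    rw [eval_subst, IntComb.map_eval]
    exact eval_congr fun p _ => (B.freeMap_vec_cochainBasis hi p.2).symm
  funext v
  rw [precompTable, eval_flatMap, ← List.sum_toFinset _ List.nodup_range, Finset.sum_apply]
  simp only [eval_rename_powBasis _ (hlt _), hrow, vec_coe]
  simp [precomp, evalFamily]

end WordBases

/-! ### The basis of words -/

/-- The matrix of the left multiplication by the letter `g` in the basis of words. -/
def letterMatrix (g : ℕ) : Matrix (Fin 12) (Fin 12) ℤ := fun i j =>
  (((wordMul g j).filter fun p => Nat.beq p.2 i).map Prod.fst).sum

theorem fkRelations_letterMatrix :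
    FKRelations (letterMatrix 1) (letterMatrix 2) (letterMatrix 3) := by
  constructor <;> decide +kernel

theorem word_letterMatrix (i j : Fin 12) :
    word (letterMatrix 1) (letterMatrix 2) (letterMatrix 3) i j 0 = if i = j then 1 else 0 := by
  revert i j
  decide +kernel

/-- The generators of the Fomin–Kirillov algebra. -/
noncomputable def gen (i : Fin 3) : FK3 k := RingQuot.mkAlgHom k (FKRel k) (FreeAlgebra.ι k i)

theorem fkRelations_gen : FKRelations (gen k 0) (gen k 1) (gen k 2) := by
  have h := fun x y hxy => RingQuot.mkAlgHom_rel k (s := FKRel k) (x := x) (y := y) hxy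
  constructor
  · simpa [gen] using h _ _ FKRel.sq_a
  · simpa [gen] using h _ _ FKRel.sq_b
  · simpa [gen] using h _ _ FKRel.sq_c
  · simpa [gen] using h _ _ FKRel.rel1
  · simpa [gen] using h _ _ FKRel.rel2

theorem adjoin_range_gen : Algebra.adjoin k (Set.range (gen k)) = ⊤ := by
  rw [show Set.range (gen k) = RingQuot.mkAlgHom k (FKRel k) '' Set.range (FreeAlgebra.ι k) from
    Set.range_comp _ _, ← AlgHom.map_adjoin, FreeAlgebra.adjoin_range_ι, Algebra.map_top,
    AlgHom.range_eq_top]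
  exact RingQuot.mkAlgHom_surjective k (FKRel k)

/-- The words in the generators of the Fomin–Kirillov algebra. -/
noncomputable def genWord (i : ℕ) : FK3 k := word (gen k 0) (gen k 1) (gen k 2) i

theorem genWord_mul {i j : ℕ} (hi : i < 12) (hj : j < 12) :
    genWord k i * genWord k j = eval (genWord k) (wordMul i j) :=
  (fkRelations_gen k).word_mul_word hi hj

/-- The left regular representation of the Fomin–Kirillov algebra. -/
noncomputable def regularRep : FK3 k →ₐ[k] Matrix (Fin 12) (Fin 12) k :=
  RingQuot.liftAlgHom k ⟨FreeAlgebra.lift k fun g : Fin 3 =>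
    (Int.castRingHom k).mapMatrix (letterMatrix (g + 1)), by
      obtain ⟨haa, hbb, hcc, hab, hba⟩ := fkRelations_letterMatrix
      intro x y h
      cases h <;> simp only [map_mul, map_add, map_zero, FreeAlgebra.lift_ι_apply] <;>
        simp only [← map_mul, ← map_add]
      exacts [(congrArg _ haa).trans (map_zero _), (congrArg _ hbb).trans (map_zero _),
        (congrArg _ hcc).trans (map_zero _), (congrArg _ hab).trans (map_zero _),
        (congrArg _ hba).trans (map_zero _)]⟩

theorem regularRep_genWord (i j : Fin 12) :
    regularRep k (genWord k i) j 0 = if i = j then 1 else 0 := by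
  have hgen : ∀ g : Fin 3, regularRep k (gen k g) =
      (Int.castRingHom k).mapMatrix (letterMatrix (g + 1)) := fun g => by
    simp [regularRep, gen]
  have hword : regularRep k (genWord k i) = (Int.castRingHom k).mapMatrix
      (word (letterMatrix 1) (letterMatrix 2) (letterMatrix 3) i) := by
    rw [map_word, genWord, map_word]
    simp only [hgen]
    rfl
  rw [hword, RingHom.mapMatrix_apply, Matrix.map_apply, word_letterMatrix]
  split_ifs <;> simp

theorem linearIndependent_genWord : LinearIndependent k fun i : Fin 12 => genWord k i := by
  rw [Fintype.linearIndependent_iff]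
  intro c hc j
  have h := congrArg (fun x => regularRep k x j 0) hc
  simpa [map_sum, Matrix.sum_apply, regularRep_genWord] using h

theorem genWord_mem_span (i : ℕ) :
    genWord k i ∈ Submodule.span k (Set.range fun i : Fin 12 => genWord k i) := by
  rcases lt_or_ge i 12 with hi | hi
  · exact Submodule.subset_span ⟨⟨i, hi⟩, rfl⟩
  · rw [genWord, word_of_le hi]
    exact zero_mem _

theorem gen_mul_mem_span (g : Fin 3) {x : FK3 k}
    (hx : x ∈ Submodule.span k (Set.range fun i : Fin 12 => genWord k i)) :
    gen k g * x ∈ Submodule.span k (Set.range fun i : Fin 12 => genWord k i) := by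
  induction hx using Submodule.span_induction with
  | mem x hx =>
    obtain ⟨i, rfl⟩ := hx
    rw [show gen k g = genWord k (g + 1) by fin_cases g <;> rfl]
    dsimp only
    rw [genWord_mul k (by lia) i.2]
    exact eval_mem _ (genWord_mem_span k) _
  | zero => simp
  | add x y _ _ hx hy => rw [mul_add]; exact add_mem hx hy
  | smul c x _ hx => rw [mul_smul_comm]; exact Submodule.smul_mem _ _ hx

theorem span_genWord : Submodule.span k (Set.range fun i : Fin 12 => genWord k i) = ⊤ := by
  set S := Submodule.span k (Set.range fun i : Fin 12 => genWord k i)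
  have hmul : ∀ x : FK3 k, ∀ y ∈ S, x * y ∈ S := fun x =>
    Algebra.adjoin_induction (p := fun x _ => ∀ y ∈ S, x * y ∈ S)
      (by rintro _ ⟨g, rfl⟩ y hy; exact gen_mul_mem_span k g hy)
      (fun c y hy => by rw [← Algebra.smul_def]; exact S.smul_mem c hy)
      (fun x x' _ _ hx hx' y hy => by rw [add_mul]; exact add_mem (hx y hy) (hx' y hy))
      (fun x x' _ _ hx hx' y hy => by rw [mul_assoc]; exact hx _ (hx' y hy))
      ((adjoin_range_gen k).ge (Algebra.mem_top (x := x)))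
  exact Submodule.eq_top_iff'.2 fun x => by
    simpa [genWord, word] using hmul x _ (genWord_mem_span k 0)

/-- The basis of words of the Fomin–Kirillov algebra. -/
noncomputable def wordBasis : Basis (Fin 12) k (FK3 k) :=
  Basis.mk (linearIndependent_genWord k) (span_genWord k).ge

theorem vec_wordBasis {i : ℕ} (hi : i < 12) : vec (wordBasis k) i = genWord k i := by
  rw [vec_of_lt _ hi, wordBasis, Basis.mk_apply]

theorem eval_vec_wordBasis {L : IntComb} (hL : ∀ p ∈ L, p.2 < 12) :
    eval (vec (wordBasis k)) L = eval (genWord k) L :=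
  eval_congr fun p hp => vec_wordBasis k (hL p hp)

/-- The basis of the enveloping algebra of the Fomin–Kirillov algebra given by pairs of words. -/
noncomputable def envWordBasis : Basis (Fin 144) k (FKAe k) :=
  ((wordBasis k).tensorProduct ((wordBasis k).map (MulOpposite.opLinearEquiv k))).reindex
    (finProdFinEquiv (m := 12) (n := 12))

theorem vec_envWordBasis {i : ℕ} (hi : i < 144) :
    vec (envWordBasis k) i = genWord k (i / 12) ⊗ₜ MulOpposite.op (genWord k (i % 12)) := by
  have hdiv : i / 12 < 12 := by lia
  have hmod : i % 12 < 12 := by lia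
  rw [vec_of_lt _ hi, envWordBasis, Basis.reindex_apply, show finProdFinEquiv.symm _ =
    ((⟨i / 12, hdiv⟩, ⟨i % 12, hmod⟩) : Fin 12 × Fin 12) from rfl, Basis.tensorProduct_apply,
    Basis.map_apply, ← vec_wordBasis k hdiv, ← vec_wordBasis k hmod, vec_of_lt _ hdiv,
    vec_of_lt _ hmod]
  rfl

theorem eval_tensor_tmul_op {A : Type*} [Ring A] [Algebra k A] {N : ℕ} (g : ℕ → A) (L : IntComb)
    {L' : IntComb} (hL' : ∀ p ∈ L', p.2 < N) :
    eval (fun i => g (i / N) ⊗ₜ[k] MulOpposite.op (g (i % N))) (tensor N L L') =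
      eval g L ⊗ₜ[k] MulOpposite.op (eval g L') :=
  eval_tensor (LinearMap.toAddMonoidHom'.comp ((TensorProduct.mk k A Aᵐᵒᵖ).compl₂
    (MulOpposite.opLinearEquiv k).toLinearMap).toAddMonoidHom) g g L hL'

theorem eval_vec_envWordBasis {L L' : IntComb} (hL : ∀ p ∈ L, p.2 < 12)
    (hL' : ∀ p ∈ L', p.2 < 12) : eval (vec (envWordBasis k)) (tensor 12 L L') =
      eval (genWord k) L ⊗ₜ MulOpposite.op (eval (genWord k) L') := by
  refine (eval_congr fun p hp => vec_envWordBasis k ?_).trans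
    (eval_tensor_tmul_op k (genWord k) L hL')
  simp only [tensor, subst, scale, rename, List.mem_flatMap, List.mem_map] at hp
  obtain ⟨q, hq, _, ⟨r, hr, rfl⟩, rfl⟩ := hp
  have := hL q hq
  have := hL' r hr
  dsimp only
  lia

theorem tmul_op_smul (x y z : FK3 k) : (x ⊗ₜ[k] MulOpposite.op y : FKAe k) • z = x * z * y := by
  change x • (MulOpposite.op y • z) = _
  rw [op_smul_eq_mul, smul_eq_mul, mul_assoc]

-- The instance `IsScalarTower k (FKAe k) (FK3 k)` below would change the elaboration of `c • 𝟙 _`.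
theorem mk₀_smul_id_comp (c : k) {n : ℕ} (x : HHExt k n) :
    (Ext.mk₀ (c • 𝟙 (AAmod k))).comp x (zero_add n) = c • x := by
  rw [Ext.mk₀_smul, Ext.smul_comp, Ext.mk₀_id_comp]

instance : IsScalarTower k (FKAe k) (FK3 k) where
  smul_assoc c x m := by
    refine (congrArg (· • m) (Algebra.smul_def c x)).trans ((mul_smul _ x m).trans ?_)
    refine (tmul_op_smul k (algebraMap k (FK3 k) c) 1 (x • m)).trans ?_
    rw [mul_one, ← Algebra.smul_def]

/-- The Fomin–Kirillov algebra as a bimodule over itself, in the bases of words. -/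
noncomputable def fkWordBases : WordBases k (FKAe k) (FK3 k) where
  envBasis := envWordBasis k
  basis := wordBasis k
  mul_vec i hi j hj := by
    rw [vec_envWordBasis k hi, vec_envWordBasis k hj, Algebra.TensorProduct.tmul_mul_tmul,
      ← MulOpposite.op_mul, genWord_mul k (by lia) (by lia), genWord_mul k (by lia) (by lia),
      envMul, eval_vec_envWordBasis k (wordMul_lt _ _) (wordMul_lt _ _)]
  smul_vec i hi j hj := by
    rw [vec_envWordBasis k hi, vec_wordBasis k hj, tmul_op_smul, genWord_mul k (by lia) hj,
      eval_vec_wordBasis k (envAct_lt i j), envAct, eval_subst]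
    refine (IntComb.map_eval _ (AddMonoidHom.mulRight (genWord k (i % 12))) _).trans ?_
    exact eval_congr fun p hp => genWord_mul k (wordMul_lt _ _ p hp) (by lia)
  vec_zero := vec_envWordBasis k (by norm_num)

/-! ### Maps commuting with the right multiplications -/

/-- The table of a map commuting with the right multiplications, given by its values on the basis
vectors whose right factor is trivial. Here `i / 12` and `i % 12` are the left and the right factor
of the `i`-th basis vector. -/
def rightTable (S : List IntComb) (i : ℕ) : IntComb :=
  subst (fun q => rename (fun l => q / 12 * 12 + l) (wordMul (q % 12) (i % 12)))
    (S.getD (i / 12) [])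

theorem wordMul_zero : ∀ j < 12, wordMul 0 j = [(1, j)] := by decide +kernel

theorem envMul_right : ∀ i < 144, ∀ j < 12,
    envMul j i = rename (fun l => i / 12 * 12 + l) (wordMul (i % 12) j) := by decide +kernel

theorem envMul_eq_wordMul : ∀ i < 12, ∀ j < 12, envMul j i = wordMul i j := by decide +kernel

theorem envAct_right : ∀ i < 12, ∀ j < 12, envAct j i = wordMul i j := by decide +kernel

namespace WordBases

variable {k E M : Type*} [CommRing k] [Ring E] [Algebra k E] [AddCommGroup M] [Module k M]
  [Module E M] (B : WordBases k E M)

/-- A basis on which the first twelve basis vectors of the enveloping algebra, which are the right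
multiplications by the words, act through the multiplication table of the words. -/
def IsRightBasis {V : Type*} [AddCommGroup V] [Module k V] [Module E V] {N : ℕ}
    (b : Basis (Fin N) k V) : Prop :=
  ∀ i, ∀ j < 12, vec B.envBasis j • vec b i =
    eval (vec b) (rename (fun l => i / 12 * 12 + l) (wordMul (i % 12) j))

theorem isRightBasis_basis : B.IsRightBasis B.basis := by
  intro i j hj
  rcases lt_or_ge i 12 with hi | hi
  · rw [B.smul_vec j (by lia) i hi, envAct_right i hi j hj, eval_rename, Nat.div_eq_of_lt hi,
      Nat.mod_eq_of_lt hi]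
    simp
  · have hvec : ∀ l, vec B.basis (i / 12 * 12 + l) = 0 := fun l => vec_of_le _ (by lia)
    rw [vec_of_le _ hi, smul_zero, eval_rename]
    simp [IntComb.eval, hvec]

theorem isRightBasis_chainBasis (r : ℕ) : B.IsRightBasis (B.chainBasis r) := by
  intro i j hj
  rw [B.smul_vec_chainBasis (by lia), envMul_right _ (Nat.mod_lt _ (by norm_num)) j hj,
    eval_rename, eval_rename, eval_rename, show i % 144 % 12 = i % 12 by lia]
  exact eval_congr fun p _ => congrArg _ (by lia)

section RightTable

variable {V W X : Type*} [AddCommGroup V] [Module k V] [Module E V] [AddCommGroup W] [Module k W]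
  [Module E W] [AddCommGroup X] [Module k X] [Module E X] {N N' : ℕ} {b : Basis (Fin N) k V}
  {b' : Basis (Fin N') k W}

/-- The map `φ` has the table `t` and commutes with the right multiplications. -/
structure HasRightTable (b : Basis (Fin N) k V) (f : ℕ → W) (φ : V →ₗ[k] W)
    (t : ℕ → IntComb) : Prop where
  hasTable : HasTable b f φ t
  map_smul : ∀ j < 12, ∀ x, φ (vec B.envBasis j • x) = vec B.envBasis j • φ x

variable {B} {f : ℕ → W} {g : ℕ → X} {φ ψ : V →ₗ[k] W} {t s : ℕ → IntComb}

theorem HasRightTable.comp {χ : W →ₗ[k] X} (h' : B.HasRightTable b' g χ s)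
    (h : B.HasRightTable b (vec b') φ t) :
    B.HasRightTable b g (χ ∘ₗ φ) fun i => substBelow N' s (t i) where
  hasTable := h'.hasTable.comp h.hasTable
  map_smul j hj x := by
    rw [LinearMap.comp_apply, h.map_smul j hj, h'.map_smul j hj, LinearMap.comp_apply]

theorem HasRightTable.add (h : B.HasRightTable b f φ t) (h' : B.HasRightTable b f ψ s) :
    B.HasRightTable b f (φ + ψ) fun i => t i ++ s i where
  hasTable := h.hasTable.add h'.hasTable
  map_smul j hj x := by
    rw [LinearMap.add_apply, h.map_smul j hj, h'.map_smul j hj, LinearMap.add_apply, smul_add]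

theorem hasRightTable_id : B.HasRightTable b (vec b) LinearMap.id fun i => [(1, i)] where
  hasTable i := by simp [vec_coe]
  map_smul _ _ _ := rfl

theorem hasRightTable_zero : B.HasRightTable b f 0 fun _ => [] where
  hasTable _ := rfl
  map_smul _ _ _ := (smul_zero _).symm

theorem hasRightTable_of_hasTable [IsScalarTower k E V] [IsScalarTower k E W] {φ : V →ₗ[E] W}
    (h : HasTable b f (φ.restrictScalars k) t) : B.HasRightTable b f (φ.restrictScalars k) t where
  hasTable := h
  map_smul _ _ _ := map_smul φ _ _

theorem vec_eq_smul_vec (hb : B.IsRightBasis b) (i : ℕ) :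
    vec b i = vec B.envBasis (i % 12) • vec b (i / 12 * 12) := by
  rw [hb _ _ (Nat.mod_lt _ (by norm_num)), Nat.mul_mod_left,
    wordMul_zero _ (Nat.mod_lt _ (by norm_num)), Nat.mul_div_left _ (by norm_num)]
  simp [rename, Nat.div_add_mod']

theorem eval_rightTable (hb : B.IsRightBasis b) (S : List IntComb) (i : ℕ) :
    eval (vec b) (rightTable S i) =
      vec B.envBasis (i % 12) • eval (vec b) (S.getD (i / 12) []) := by
  rw [rightTable, eval_subst, ← DistribSMul.toAddMonoidHom_apply, IntComb.map_eval]
  exact eval_congr fun p _ => (hb _ _ (Nat.mod_lt _ (by norm_num))).symm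

theorem HasRightTable.ext (h : B.HasRightTable b f φ t) (h' : B.HasRightTable b f ψ s)
    (hb : B.IsRightBasis b) {n : ℕ} (hN : N = n * 12)
    (hz : allZero n fun i => sub (t (i * 12)) (s (i * 12))) : φ = ψ := by
  have hrow : ∀ i < n, φ (vec b (i * 12)) = ψ (vec b (i * 12)) := fun i hi => by
    rw [vec_of_lt b (by lia), h.hasTable, h'.hasTable]
    exact eval_eq_of_isZero_sub f (List.all_eq_true.1 hz i (List.mem_range.2 hi))
  refine b.ext fun i => ?_
  rw [← vec_coe, vec_eq_smul_vec hb, h.map_smul _ (Nat.mod_lt _ (by norm_num)),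
    h'.map_smul _ (Nat.mod_lt _ (by norm_num)), hrow _ (by lia)]

theorem ofTable_rightTable_smul_vec (hb : B.IsRightBasis b) (hb' : B.IsRightBasis b')
    (S : List IntComb) {n : ℕ} (hN : N = n * 12) {j : ℕ} (hj : j < 12) (i : Fin N) :
    ofTable b (vec b') (rightTable S) (vec B.envBasis j • b i) =
      vec B.envBasis j • ofTable b (vec b') (rightTable S) (b i) := by
  have happly : ∀ l < N, ofTable b (vec b') (rightTable S) (vec b l) =
      vec B.envBasis (l % 12) • eval (vec b') (S.getD (l / 12) []) := fun l hl => by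
    rw [vec_of_lt b hl, hasTable_ofTable, eval_rightTable hb']
  have hi := i.2
  rw [← vec_coe, hb i j hj, eval_rename, IntComb.map_eval, happly i hi, ← mul_smul,
    B.mul_vec j (by lia) _ (by lia), envMul_eq_wordMul _ (Nat.mod_lt _ (by norm_num)) j hj]
  refine Eq.trans (eval_congr fun p hp => ?_)
    (IntComb.map_eval _ (LinearMap.toSpanSingleton E W _) _).symm
  have := wordMul_lt _ _ p hp
  rw [happly _ (by lia), LinearMap.toSpanSingleton_apply,
    show (i / 12 * 12 + p.2) % 12 = p.2 by lia,
    show (i / 12 * 12 + p.2) / 12 = i / 12 by lia]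

theorem hasRightTable_ofTable [IsScalarTower k E V] [IsScalarTower k E W]
    (hb : B.IsRightBasis b) (hb' : B.IsRightBasis b') (S : List IntComb) {n : ℕ}
    (hN : N = n * 12) :
    B.HasRightTable b (vec b') (ofTable b (vec b') (rightTable S)) (rightTable S) where
  hasTable := hasTable_ofTable _
  map_smul j hj x := by
    have hext : ofTable b (vec b') (rightTable S) ∘ₗ Algebra.lsmul k k V (vec B.envBasis j) =
        Algebra.lsmul k k W (vec B.envBasis j) ∘ₗ ofTable b (vec b') (rightTable S) :=
      b.ext (ofTable_rightTable_smul_vec hb hb' S hN hj)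
    exact LinearMap.congr_fun hext x

end RightTable

end WordBases

/-! ### The Koszul bimodule complex in degrees at most five -/

/-- The values of the differential of degree `1` of the Koszul bimodule complex on the generators.
-/
def diff1 : List IntComb := [
  [(-1, 1), (1, 12)], [(-1, 2), (1, 24)], [(-1, 3), (1, 36)]]

/-- The differential of degree `2` of the Koszul bimodule complex. -/
def diff2 : List IntComb := [
  [(1, 1), (1, 12)], [(1, 146), (1, 168)], [(1, 291), (1, 324)], [(1, 2), (1, 36), (1, 147),
  (1, 156), (1, 289), (1, 312)], [(1, 3), (1, 24), (1, 145), (1, 180), (1, 290), (1, 300)]]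

/-- The differential of degree `3` of the Koszul bimodule complex. -/
def diff3 : List IntComb := [
  [(-1, 1), (1, 12)], [(-1, 146), (1, 168)], [(-1, 291), (1, 324)], [(-1, 1), (1, 12), (-1, 145),
  (1, 156), (-1, 289), (1, 300), (-1, 434), (1, 468), (-1, 579), (1, 600)], [(-1, 2), (1, 24),
  (-1, 146), (1, 168), (-1, 290), (1, 312), (-1, 435), (1, 444), (-1, 577), (1, 612)], [(-1, 3),
  (1, 36), (-1, 147), (1, 180), (-1, 291), (1, 324), (-1, 433), (1, 456), (-1, 578), (1, 588)]]

/-- The differential of degree `4` of the Koszul bimodule complex. -/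
def diff4 : List IntComb := [
  [(1, 1), (1, 12)], [(1, 146), (1, 168)], [(1, 291), (1, 324)], [(1, 433), (1, 444), (1, 578),
  (1, 600), (1, 723), (1, 756)], [(1, 434), (1, 468), (1, 579), (1, 588), (1, 721), (1, 744)],
  [(1, 435), (1, 456), (1, 577), (1, 612), (1, 722), (1, 732)]]

/-- The differential of degree `5` of the Koszul bimodule complex. -/
def diff5 : List IntComb := [
  [(-1, 1), (1, 12)], [(-1, 146), (1, 168)], [(-1, 291), (1, 324)], [(-1, 433), (1, 444),
  (-1, 578), (1, 612), (-1, 723), (1, 744)], [(-1, 434), (1, 456), (-1, 579), (1, 588),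
  (-1, 721), (1, 756)], [(-1, 435), (1, 468), (-1, 577), (1, 600), (-1, 722), (1, 732)]]

/-- The contracting homotopy in degree `0`, up to the augmentation. -/
def homotopy0 : List IntComb := [
  [], [(1, 0)], [(1, 144)], [(1, 288)], [(1, 2), (1, 156)], [(1, 147), (1, 312)], [(-1, 3),
  (-1, 180), (-1, 290), (-1, 300)], [(1, 3), (1, 300)], [(1, 6), (1, 7), (-1, 228), (-1, 302)],
  [(1, 5), (1, 159), (1, 336)], [(-1, 183), (-1, 293), (-1, 303), (1, 360)], [(1, 10), (-1, 231),
  (-1, 305), (1, 384)]]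

/-- The contracting homotopy in degree `1`. -/
def homotopy1 : List IntComb := [
  [], [(1, 0)], [(1, 576)], [(1, 432)], [(-1, 3), (1, 588)], [(-1, 147), (1, 180), (1, 456),
  (-1, 578)], [(1, 2), (1, 290), (-1, 312), (1, 435), (-1, 444), (-1, 612)], [(-1, 2), (1, 444)],
  [(-1, 5), (1, 148), (1, 181), (1, 204), (-1, 293), (1, 315), (1, 447), (-1, 582), (-1, 583),
  (-1, 602), (1, 615), (1, 648)], [(-1, 6), (-1, 7), (-1, 151), (1, 228), (-1, 295), (1, 303),
  (-1, 437), (1, 471), (1, 480), (-1, 590), (1, 603)], [(1, 183), (1, 314), (1, 459), (1, 580),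
  (1, 601), (-1, 636)], [(-1, 10), (-1, 184), (-1, 206), (1, 231), (-1, 298), (1, 318), (1, 319),
  (1, 483), (1, 592), (1, 618), (1, 619), (1, 625), (-1, 650), (-1, 662), (-1, 684)], [], [],
  [(1, 144)], [], [(1, 145), (1, 289), (-1, 300), (1, 434), (-1, 468), (1, 579), (-1, 600)],
  [(-1, 145), (-1, 579), (1, 600)], [(-1, 180)], [], [(-1, 228)], [(1, 301), (-1, 438), (1, 469),
  (1, 580), (1, 581), (-1, 591), (1, 601), (1, 624)], [(-1, 148), (-1, 204), (1, 582), (1, 583),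
  (1, 602)], [(-1, 153), (-1, 187), (-1, 207), (1, 229), (1, 586), (1, 605), (-1, 651),
  (1, 672)], [], [], [], [(1, 288)], [], [(1, 312)], [], [(1, 300)], [], [(-1, 148), (-1, 181),
  (-1, 204), (1, 293), (1, 302), (-1, 315), (1, 582), (1, 583), (1, 602), (-1, 615), (-1, 648),
  (-1, 660)], [(1, 150), (1, 182), (1, 228), (1, 313), (1, 458), (-1, 492), (1, 603)],
  [(-1, 205), (1, 230), (1, 316), (1, 317), (-1, 474), (1, 482), (-1, 540), (1, 616), (1, 617),
  (1, 627), (-1, 649), (-1, 661)]]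

/-- The contracting homotopy in degree `2`. -/
def homotopy2 : List IntComb := [
  [], [(1, 0)], [(-1, 144), (1, 576)], [(-1, 288), (1, 720)], [(-1, 36), (1, 289), (1, 312),
  (-1, 579), (-1, 721), (-1, 744)], [(-1, 312), (1, 579), (1, 744)], [(1, 24), (-1, 145),
  (1, 577)], [(-1, 300), (1, 435), (1, 732)], [(-1, 60), (1, 313), (1, 580), (1, 581),
  (-1, 745)], [(-1, 84), (1, 301), (1, 436), (1, 437), (-1, 733)], [(1, 27), (-1, 151),
  (-1, 183), (1, 204), (-1, 360), (1, 583), (1, 724), (1, 725), (1, 735), (-1, 757), (1, 792),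
  (1, 804)], [(1, 28), (1, 29), (-1, 120), (-1, 153), (-1, 184), (-1, 185), (-1, 205), (1, 361),
  (1, 585), (1, 736), (1, 737), (-1, 793), (-1, 805)], [], [(-1, 0), (1, 432)], [(1, 144)], [],
  [(-1, 2), (1, 156), (1, 434)], [], [(-1, 180)], [], [(-1, 228)], [(-1, 5), (-1, 39), (1, 84),
  (1, 159), (1, 295), (-1, 301), (1, 315), (-1, 336), (-1, 436), (-1, 727), (1, 733), (-1, 747),
  (1, 768)], [(-1, 204)], [(-1, 10), (-1, 42), (-1, 43), (-1, 86), (1, 162), (1, 163), (-1, 252),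
  (1, 296), (1, 304), (1, 318), (1, 319), (1, 338), (-1, 728), (-1, 736), (-1, 750), (-1, 751),
  (-1, 770)], [], [], [], [(1, 288)], [(1, 2), (1, 36), (-1, 156), (-1, 289), (-1, 312),
  (1, 579), (1, 588), (1, 721), (1, 744)], [(1, 312)], [(-1, 24), (1, 145), (1, 180), (-1, 435),
  (-1, 577), (-1, 612), (-1, 722), (-1, 732)], [(1, 300)], [(1, 60), (1, 228), (-1, 313),
  (1, 438), (1, 439), (-1, 580), (1, 603), (-1, 660), (-1, 734), (1, 745), (1, 759)], [(1, 5),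
  (1, 39), (-1, 159), (-1, 295), (-1, 315), (1, 336), (1, 591), (1, 727), (1, 747)], [(-1, 27),
  (1, 151), (1, 183), (1, 360), (-1, 583), (-1, 615), (-1, 725), (-1, 735)], [(1, 63), (1, 231),
  (-1, 319), (1, 384), (1, 442), (-1, 585), (-1, 663), (-1, 737), (1, 751)], [], [], [], [], [],
  [], [(1, 578), (1, 600)], [(-1, 578), (-1, 600), (-1, 723), (-1, 756)], [(1, 582), (1, 601),
  (-1, 724), (-1, 725), (-1, 735), (1, 757), (-1, 804)], [], [(-1, 747), (-1, 780)], [(-1, 771),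
  (-1, 828)], [], [], [], [], [], [], [], [], [], [], [(-1, 614), (1, 648), (1, 660), (-1, 759)],
  [(-1, 650), (-1, 662), (-1, 729), (-1, 748), (-1, 749), (-1, 762), (1, 781), (-1, 795),
  (-1, 807), (-1, 840)]]

/-- The contracting homotopy in degree `3`, up to the multiples of `cycle3`. -/
def homotopy3 : List IntComb := [
  [], [(1, 0)], [], [], [(-1, 36)], [], [(1, 24)], [], [(-1, 60)], [(-1, 84)], [], [(-1, 120)],
  [], [], [(1, 144)], [], [(1, 156)], [], [(-1, 180)], [], [(-1, 228)], [], [(-1, 204)],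
  [(-1, 252)], [], [], [], [(1, 288)], [], [(1, 312)], [], [(1, 300)], [], [(1, 336)],
  [(1, 360)], [(1, 384)], [], [(1, 432)], [(1, 720)], [(1, 576)], [(-1, 435), (1, 732)],
  [(1, 600), (-1, 722)], [(1, 434), (1, 579), (-1, 588), (-1, 756)], [(-1, 434), (1, 588)],
  [(-1, 437), (1, 591), (-1, 804)], [(-1, 438), (-1, 439), (-1, 581), (-1, 602), (1, 615),
  (1, 624), (1, 636), (-1, 734)], [(-1, 39), (-1, 183), (1, 603), (-1, 780)], [(1, 40), (1, 41),
  (1, 184), (1, 185), (-1, 442), (-1, 605), (1, 627), (1, 639), (-1, 728), (1, 736), (1, 769),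
  (-1, 828)], [], [], [], [], [(1, 578), (-1, 612), (1, 723), (-1, 744)], [(-1, 723), (1, 744)],
  [], [], [(1, 602), (-1, 636), (1, 747)], [(-1, 39), (-1, 183), (-1, 582), (1, 613), (1, 725),
  (-1, 735), (1, 768)], [(1, 759), (1, 792), (1, 804)], [(1, 42), (1, 43), (1, 186), (1, 187),
  (-1, 606), (1, 637), (1, 749), (1, 807), (1, 816)], [], [], [], [], [], [], [], [], [(1, 39),
  (1, 183), (1, 724), (1, 745)], [], [], [(-1, 618), (1, 626), (1, 638), (-1, 684), (1, 771)]]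

/-- The contracting homotopy in degree `4`. -/
def homotopy4 : List IntComb := [
  [], [(1, 0)], [], [], [(-1, 36)], [], [(1, 24)], [], [(-1, 60)], [(-1, 84)], [], [(-1, 120)],
  [], [], [(1, 144)], [], [(1, 156)], [], [(-1, 180)], [], [(-1, 228)], [], [(-1, 204)],
  [(-1, 252)], [], [], [], [(1, 288)], [], [(1, 312)], [], [(1, 300)], [], [(1, 336)],
  [(1, 360)], [(1, 384)], [], [(1, 432)], [(1, 576)], [(1, 720)], [(1, 434), (1, 588)],
  [(1, 579), (1, 744)], [(-1, 435), (-1, 612), (-1, 722), (-1, 732)], [(1, 435), (1, 732)],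
  [(1, 438), (1, 439), (1, 581), (1, 603), (-1, 660), (-1, 734), (1, 759)], [(1, 437), (1, 591),
  (1, 768)], [(-1, 615), (1, 724), (-1, 757), (1, 792), (1, 804)], [(1, 442), (-1, 663),
  (1, 736), (-1, 805), (1, 816)], [], [], [], [], [], [], [(1, 578), (1, 600)], [(-1, 578),
  (-1, 600), (-1, 723), (-1, 756)], [(1, 582), (1, 601), (-1, 724), (-1, 725), (-1, 735),
  (1, 757), (-1, 804)], [], [(-1, 747), (-1, 780)], [(-1, 771), (-1, 828)], [], [], [], [], [],
  [], [], [], [], [], [(-1, 614), (1, 648), (1, 660), (-1, 759)], [(-1, 650), (-1, 662),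
  (-1, 729), (-1, 748), (-1, 749), (-1, 762), (1, 781), (-1, 795), (-1, 807), (-1, 840)]]

/-- A cycle of degree `3` which is not a boundary. -/
def cycle3 : List IntComb := [
  [(-1, 10), (1, 28), (1, 29), (-1, 42), (-1, 51), (-1, 86), (-1, 120), (-1, 153), (1, 162),
  (1, 163), (-1, 184), (-1, 205), (-1, 219), (-1, 252), (1, 296), (1, 304), (1, 318), (1, 338),
  (1, 361), (1, 384), (1, 442), (-1, 461), (1, 616), (1, 637), (-1, 770), (-1, 816)]]

/-- A functional that reads off the class of a cycle of degree `3` as a multiple of the class of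
`cycle3`. -/
def cycleCoeffTable : List IntComb := [
  [], [], [], [], [], [], [], [], [], [], [], [], [], [], [], [], [], [], [], [], [], [], [], [],
  [], [], [], [], [], [], [], [], [], [], [], [], [], [], [], [], [], [], [], [], [], [],
  [(1, 0)], [(1, 1)], [], [], [], [], [], [], [], [], [], [(1, 0)], [], [(1, 2)], [], [], [], [],
  [], [], [], [], [(-1, 0)], [], [], [(1, 3)]]

/-- The contraction with the periodicity element of the Koszul dual algebra, from degree `5` to
degree `3`. -/
def contraction3 : List IntComb := [
  [(1, 0)], [(1, 144)], [(-1, 288)], [(1, 432)], [(1, 576)], [(1, 720)]]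

namespace WordBases

variable {k E M : Type*} [CommRing k] [Ring E] [Algebra k E] [AddCommGroup M] [Module k M]
  [Module E M] (B : WordBases k E M)

/-- The map of free modules which takes the standard basis to a list of combinations. -/
noncomputable def chainMap (s r : ℕ) (D : List IntComb) : (Fin s → E) →ₗ[E] (Fin r → E) :=
  freeMap (evalFamily (vec (B.chainBasis r)) s D)

/-- The map of free modules, commuting with the right multiplications, given by a list of
combinations. -/
noncomputable def rightMap (s r : ℕ) (S : List IntComb) : (Fin s → E) →ₗ[k] (Fin r → E) :=
  ofTable (B.chainBasis s) (vec (B.chainBasis r)) (rightTable S)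

/-- The augmentation of the Koszul bimodule complex. -/
noncomputable def aug : (Fin 1 → E) →ₗ[E] M := freeMap fun _ => vec B.basis 0

/-- A section of the augmentation. -/
noncomputable def augSection : M →ₗ[k] (Fin 1 → E) :=
  ofTable B.basis (vec (B.chainBasis 1)) (rightTable [[(1, 0)]])

/-- The multiples of a cycle of degree `3` whose class generates the homology. -/
noncomputable abbrev cycleMap : (Fin 1 → E) →ₗ[E] (Fin 6 → E) := B.chainMap 1 6 cycle3

/-- A `k`-linear map which reads off the class of a cycle of degree `3`. -/
noncomputable def cycleCoeff : (Fin 6 → E) →ₗ[k] M :=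
  ofTable (B.chainBasis 6) (vec B.basis) (rightTable cycleCoeffTable)

variable {p q r r' s : ℕ}

theorem chainMap_single (D : List IntComb) (w : Fin s) :
    B.chainMap s r D (Pi.single w 1) = eval (vec (B.chainBasis r)) (D.getD w []) :=
  freeMap_single _ w

theorem hasRightTable_chainMap (D : List IntComb) :
    B.HasRightTable (B.chainBasis s) (vec (B.chainBasis r))
      ((B.chainMap s r D).restrictScalars k) (freeMapTable D) :=
  hasRightTable_of_hasTable (B.hasTable_freeMap D)

theorem hasRightTable_rightMap (S : List IntComb) :
    B.HasRightTable (B.chainBasis s) (vec (B.chainBasis r)) (B.rightMap s r S) (rightTable S) :=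
  hasRightTable_ofTable (B.isRightBasis_chainBasis s) (B.isRightBasis_chainBasis r) S
    (n := s * 12) (by ring)

theorem chainMap_comp_chainMap {D₁ D₂ D₃ D₄ : List IntComb}
    (h : allZero s fun w => sub (substBelow (r * 144) (freeMapTable D₂) (D₁.getD w []))
      (substBelow (r' * 144) (freeMapTable D₄) (D₃.getD w []))) :
    B.chainMap r q D₂ ∘ₗ B.chainMap s r D₁ = B.chainMap r' q D₄ ∘ₗ B.chainMap s r' D₃ := by
  refine freeMap_ext fun w => ?_
  rw [LinearMap.comp_apply, LinearMap.comp_apply, chainMap_single, chainMap_single]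
  exact ((B.hasTable_freeMap D₂).map_eval _).trans <| (eval_eq_of_isZero_sub _
    (List.all_eq_true.1 h w (List.mem_range.2 w.2))).trans
    ((B.hasTable_freeMap D₄).map_eval _).symm

theorem chainMap_comp_chainMap_eq_zero {D₁ D₂ : List IntComb}
    (h : allZero s fun w => substBelow (r * 144) (freeMapTable D₂) (D₁.getD w [])) :
    B.chainMap r q D₂ ∘ₗ B.chainMap s r D₁ = 0 := by
  refine freeMap_ext fun w => ?_
  rw [LinearMap.comp_apply, chainMap_single]
  exact ((B.hasTable_freeMap D₂).map_eval _).trans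
    (eval_eq_zero_of_isZero _ (List.all_eq_true.1 h w (List.mem_range.2 w.2)))

theorem diff1_comp_diff2 : B.chainMap 3 1 diff1 ∘ₗ B.chainMap 5 3 diff2 = 0 :=
  B.chainMap_comp_chainMap_eq_zero (by decide +kernel)

theorem diff2_comp_diff3 : B.chainMap 5 3 diff2 ∘ₗ B.chainMap 6 5 diff3 = 0 :=
  B.chainMap_comp_chainMap_eq_zero (by decide +kernel)

theorem diff3_comp_diff4 : B.chainMap 6 5 diff3 ∘ₗ B.chainMap 6 6 diff4 = 0 :=
  B.chainMap_comp_chainMap_eq_zero (by decide +kernel)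

theorem diff4_comp_diff5 : B.chainMap 6 6 diff4 ∘ₗ B.chainMap 6 6 diff5 = 0 :=
  B.chainMap_comp_chainMap_eq_zero (by decide +kernel)

theorem diff3_comp_cycleMap : B.chainMap 6 5 diff3 ∘ₗ B.cycleMap = 0 :=
  B.chainMap_comp_chainMap_eq_zero (by decide +kernel)

theorem contraction3_comp_contraction3 :
    B.chainMap 6 6 contraction3 ∘ₗ B.chainMap 6 6 contraction3 = LinearMap.id := by
  have hid : ∀ w < 6, isZero (sub
      (substBelow (6 * 144) (freeMapTable contraction3) (contraction3.getD w []))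
      [(1, w * 144)]) := by
    decide +kernel
  refine freeMap_ext fun w => ?_
  rw [LinearMap.comp_apply, chainMap_single, LinearMap.id_apply, ← B.vec_chainBasis_mul]
  refine ((B.hasTable_freeMap contraction3).map_eval _).trans ?_
  rw [eval_eq_of_isZero_sub _ (hid w w.2)]
  simp

theorem diff5_comp_contraction3_comp_diff4 :
    B.chainMap 6 6 diff5 ∘ₗ B.chainMap 6 6 contraction3 ∘ₗ B.chainMap 6 6 diff4 = 0 := by
  have hzero : ∀ w < 6, isZero (substBelow (6 * 144)
      (fun i => substBelow (6 * 144) (freeMapTable diff5) (freeMapTable contraction3 i))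
      (diff4.getD w [])) := by
    decide +kernel
  refine freeMap_ext fun w => ?_
  rw [LinearMap.comp_apply, LinearMap.comp_apply, chainMap_single, LinearMap.zero_apply]
  have h := (B.hasTable_freeMap (s := 6) (r := 6) diff5).comp
    (B.hasTable_freeMap (s := 6) contraction3)
  exact (h.map_eval _).trans (eval_eq_zero_of_isZero _ (hzero w w.2))

theorem chainMap_rightMap_apply {D D' S S' : List IntComb}
    (h : allZero (q * 12) fun i => sub
      (substBelow (p * 144) (freeMapTable D) (rightTable S (i * 12)) ++
        substBelow (r * 144) (rightTable S') (freeMapTable D' (i * 12))) [(1, i * 12)])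
    {x : Fin q → E} (hx : B.chainMap q r D' x = 0) :
    B.chainMap p q D (B.rightMap q p S x) = x := by
  have hid : (B.chainMap p q D).restrictScalars k ∘ₗ B.rightMap q p S +
      B.rightMap r q S' ∘ₗ (B.chainMap q r D').restrictScalars k = LinearMap.id :=
    (((B.hasRightTable_chainMap D).comp (B.hasRightTable_rightMap S)).add
      ((B.hasRightTable_rightMap S').comp (B.hasRightTable_chainMap D'))).ext hasRightTable_id
      (B.isRightBasis_chainBasis q) (by ring) h
  simpa [hx] using LinearMap.congr_fun hid x

theorem exists_diff2_eq {x : Fin 3 → E} (hx : B.chainMap 3 1 diff1 x = 0) :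
    ∃ y, B.chainMap 5 3 diff2 y = x :=
  ⟨_, B.chainMap_rightMap_apply (S := homotopy1) (S' := homotopy0) (by decide +kernel) hx⟩

theorem exists_diff3_eq {x : Fin 5 → E} (hx : B.chainMap 5 3 diff2 x = 0) :
    ∃ y, B.chainMap 6 5 diff3 y = x :=
  ⟨_, B.chainMap_rightMap_apply (S := homotopy2) (S' := homotopy1) (by decide +kernel) hx⟩

theorem exists_diff5_eq {x : Fin 6 → E} (hx : B.chainMap 6 6 diff4 x = 0) :
    ∃ y, B.chainMap 6 6 diff5 y = x :=
  ⟨_, B.chainMap_rightMap_apply (S := homotopy4) (S' := homotopy3) (by decide +kernel) hx⟩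

section Augmentation

variable [IsScalarTower k E M]

theorem hasTable_aug : HasTable (B.chainBasis 1) (vec B.basis) (B.aug.restrictScalars k)
    fun i => envAct i 0 := by
  intro i
  have := i.2
  rw [← vec_coe, LinearMap.restrictScalars_apply, aug, B.freeMap_vec_chainBasis _ (by lia),
    B.smul_vec _ (Nat.mod_lt _ (by norm_num)) _ (by norm_num), Nat.mod_eq_of_lt (by lia)]

theorem hasRightTable_aug : B.HasRightTable (B.chainBasis 1) (vec B.basis)
    (B.aug.restrictScalars k) fun i => envAct i 0 :=
  hasRightTable_of_hasTable B.hasTable_aug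

theorem hasRightTable_augSection : B.HasRightTable B.basis (vec (B.chainBasis 1)) B.augSection
    (rightTable [[(1, 0)]]) :=
  hasRightTable_ofTable B.isRightBasis_basis (B.isRightBasis_chainBasis 1) _ (n := 1) rfl

theorem hasRightTable_cycleCoeff : B.HasRightTable (B.chainBasis 6) (vec B.basis) B.cycleCoeff
    (rightTable cycleCoeffTable) :=
  hasRightTable_ofTable (B.isRightBasis_chainBasis 6) B.isRightBasis_basis _ (n := 72) rfl

theorem aug_augSection (m : M) : B.aug (B.augSection m) = m :=
  LinearMap.congr_fun ((B.hasRightTable_aug.comp B.hasRightTable_augSection).ext hasRightTable_id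
    B.isRightBasis_basis (n := 1) rfl (by decide +kernel)) m

theorem aug_comp_diff1 : B.aug ∘ₗ B.chainMap 3 1 diff1 = 0 := by
  have hzero : ∀ w < 3, isZero (substBelow (1 * 144) (fun i => envAct i 0) (diff1.getD w [])) := by
    decide +kernel
  refine freeMap_ext fun w => ?_
  rw [LinearMap.comp_apply, chainMap_single]
  exact (B.hasTable_aug.map_eval _).trans (eval_eq_zero_of_isZero _ (hzero w w.2))

theorem exists_diff1_eq {x : Fin 1 → E} (hx : B.aug x = 0) : ∃ y, B.chainMap 3 1 diff1 y = x := by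
  have hid : (B.chainMap 3 1 diff1).restrictScalars k ∘ₗ B.rightMap 1 3 homotopy0 +
      B.augSection ∘ₗ B.aug.restrictScalars k = LinearMap.id :=
    (((B.hasRightTable_chainMap diff1).comp (B.hasRightTable_rightMap homotopy0)).add
      (B.hasRightTable_augSection.comp B.hasRightTable_aug)).ext hasRightTable_id
      (B.isRightBasis_chainBasis 1) (n := 12) rfl (by decide +kernel)
  exact ⟨B.rightMap 1 3 homotopy0 x, by simpa [hx] using LinearMap.congr_fun hid x⟩

theorem exists_diff4_add_cycleMap_eq {x : Fin 6 → E} (hx : B.chainMap 6 5 diff3 x = 0) :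
    ∃ y, B.chainMap 6 6 diff4 y + B.cycleMap (B.augSection (B.cycleCoeff x)) = x := by
  have hid : (B.chainMap 6 6 diff4).restrictScalars k ∘ₗ B.rightMap 6 6 homotopy3 +
      B.rightMap 5 6 homotopy2 ∘ₗ (B.chainMap 6 5 diff3).restrictScalars k +
      B.cycleMap.restrictScalars k ∘ₗ B.augSection ∘ₗ B.cycleCoeff = LinearMap.id :=
    ((((B.hasRightTable_chainMap diff4).comp (B.hasRightTable_rightMap homotopy3)).add
      ((B.hasRightTable_rightMap homotopy2).comp (B.hasRightTable_chainMap diff3))).add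
      ((B.hasRightTable_chainMap cycle3).comp
        (B.hasRightTable_augSection.comp B.hasRightTable_cycleCoeff))).ext hasRightTable_id
      (B.isRightBasis_chainBasis 6) (n := 72) rfl (by decide +kernel)
  exact ⟨B.rightMap 6 6 homotopy3 x, by simpa [hx] using LinearMap.congr_fun hid x⟩

theorem cycleCoeff_diff4 (x : Fin 6 → E) : B.cycleCoeff (B.chainMap 6 6 diff4 x) = 0 :=
  LinearMap.congr_fun ((B.hasRightTable_cycleCoeff.comp (B.hasRightTable_chainMap diff4)).ext
    hasRightTable_zero (B.isRightBasis_chainBasis 6) (n := 72) rfl (by decide +kernel)) x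

theorem cycleCoeff_cycleMap (x : Fin 1 → E) : B.cycleCoeff (B.cycleMap x) = B.aug x :=
  LinearMap.congr_fun ((B.hasRightTable_cycleCoeff.comp (B.hasRightTable_chainMap cycle3)).ext
    B.hasRightTable_aug (B.isRightBasis_chainBasis 1) (n := 12) rfl (by decide +kernel)) x

theorem cycleCoeff_contraction3 {x : Fin 6 → E} (hx : B.chainMap 6 6 diff5 x = 0) :
    B.cycleCoeff (B.chainMap 6 6 contraction3 x) = 0 := by
  have hcomp := B.hasRightTable_cycleCoeff.comp (B.hasRightTable_chainMap (s := 6) contraction3)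
  have hid : B.cycleCoeff ∘ₗ (B.chainMap 6 6 contraction3).restrictScalars k =
      (B.cycleCoeff ∘ₗ (B.chainMap 6 6 contraction3).restrictScalars k) ∘ₗ
        B.rightMap 6 6 homotopy4 ∘ₗ (B.chainMap 6 6 diff5).restrictScalars k :=
    hcomp.ext (hcomp.comp ((B.hasRightTable_rightMap homotopy4).comp
      (B.hasRightTable_chainMap diff5))) (B.isRightBasis_chainBasis 6) (n := 72) rfl
      (by decide +kernel)
  simpa [hx] using LinearMap.congr_fun hid x

end Augmentation

end WordBases

/-! ### Extensions of modules and dimension shifting -/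

section Extensions

variable {E : Type u} [Ring E] {X Y Z T : Type u} [AddCommGroup X] [Module E X] [AddCommGroup Y]
  [Module E Y] [AddCommGroup Z] [Module E Z] [AddCommGroup T] [Module E T]

/-- The short exact sequence of a surjective map. -/
noncomputable def kerSequence (g : X →ₗ[E] Y) : ShortComplex (ModuleCat.{u} E) :=
  ShortComplex.mk (ModuleCat.ofHom (LinearMap.ker g).subtype) (ModuleCat.ofHom g) <| by
    ext x
    exact x.2

theorem kerSequence_shortExact {g : X →ₗ[E] Y} (hg : Function.Surjective g) :
    (kerSequence g).ShortExact :=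
  ShortComplex.ShortExact.mk'
    ((ShortComplex.moduleCat_exact_iff _).2 fun x hx => ⟨⟨x, hx⟩, rfl⟩)
    ((ModuleCat.mono_iff_injective _).2 (Submodule.subtype_injective _))
    ((ModuleCat.epi_iff_surjective _).2 hg)

/-- The map between kernels induced by a commutative square. -/
def kerMap {g : X →ₗ[E] Y} {g' : Z →ₗ[E] T} (F : X →ₗ[E] Z) (f : Y →ₗ[E] T)
    (h : f ∘ₗ g = g' ∘ₗ F) : LinearMap.ker g →ₗ[E] LinearMap.ker g' :=
  F.restrict fun x hx => by
    rw [LinearMap.mem_ker, ← LinearMap.comp_apply, ← h, LinearMap.comp_apply,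
      LinearMap.mem_ker.1 hx, map_zero]

/-- The multiplication by a central element. -/
def centralSMul {z : E} (hz : ∀ s, Commute z s) (X : Type*) [AddCommGroup X] [Module E X] :
    X →ₗ[E] X where
  toFun x := z • x
  map_add' := smul_add z
  map_smul' s x := by rw [← mul_smul, hz s, mul_smul, RingHom.id_apply]

theorem exists_comp_eq_of_surjective {g : X →ₗ[E] Y} (hg : Function.Surjective g) (f : X →ₗ[E] Z)
    (h : LinearMap.ker g ≤ LinearMap.ker f) : ∃ φ : Y →ₗ[E] Z, φ ∘ₗ g = f :=
  ⟨(LinearMap.ker g).liftQ f h ∘ₗ (g.quotKerEquivOfSurjective hg).symm.toLinearMap,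
    LinearMap.ext fun x => by
      have hx : (g.quotKerEquivOfSurjective hg).symm (g x) = (LinearMap.ker g).mkQ x :=
        (LinearEquiv.symm_apply_eq _).2 rfl
      simp [hx]⟩

variable [HasExt.{w} (ModuleCat.{u} E)]

/-- The extension groups of modules. -/
abbrev ModuleExt (E X Y : Type u) [Ring E] [HasExt.{w} (ModuleCat.{u} E)] [AddCommGroup X]
    [Module E X] [AddCommGroup Y] [Module E Y] (n : ℕ) : Type w :=
  Ext (ModuleCat.of E X) (ModuleCat.of E Y) n

/-- A linear map as an extension of degree zero. -/
noncomputable def ofLinear (f : X →ₗ[E] Y) : ModuleExt.{w} E X Y 0 := Ext.mk₀ (ModuleCat.ofHom f)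

theorem ofLinear_comp_ofLinear (f : X →ₗ[E] Y) (g : Y →ₗ[E] Z) :
    (ofLinear.{w} f).comp (ofLinear g) (zero_add 0) = ofLinear (g ∘ₗ f) := by
  rw [ofLinear, ofLinear, Ext.mk₀_comp_mk₀]
  rfl

theorem exists_eq_ofLinear (x : ModuleExt.{w} E X Y 0) : ∃ f, x = ofLinear f := by
  obtain ⟨f, rfl⟩ := (Ext.mk₀_bijective _ _).2 x
  exact ⟨f.hom, rfl⟩

theorem ofLinear_injective :
    Function.Injective (ofLinear.{w} : (X →ₗ[E] Y) → ModuleExt.{w} E X Y 0) :=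
  fun _ _ h => congrArg ModuleCat.Hom.hom ((Ext.mk₀_bijective _ _).1 h)

@[simp] theorem ofLinear_zero : ofLinear.{w} (0 : X →ₗ[E] Y) = 0 := Ext.mk₀_zero _ _

theorem ofLinear_add (f g : X →ₗ[E] Y) : ofLinear.{w} (f + g) = ofLinear f + ofLinear g :=
  Ext.mk₀_add _ _

@[simp] theorem ofLinear_id_comp {n : ℕ} (x : ModuleExt.{w} E X Y n) :
    (ofLinear LinearMap.id).comp x (zero_add n) = x :=
  Ext.mk₀_id_comp x

@[simp] theorem comp_ofLinear_id {n : ℕ} (x : ModuleExt.{w} E X Y n) :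
    x.comp (ofLinear LinearMap.id) (add_zero n) = x :=
  Ext.comp_mk₀_id x

theorem comp_ofLinear_comp_ofLinear {n : ℕ} (x : ModuleExt.{w} E X Y n) (f : Y →ₗ[E] Z)
    (g : Z →ₗ[E] T) : (x.comp (ofLinear f) (add_zero n)).comp (ofLinear g) (add_zero n) =
      x.comp (ofLinear (g ∘ₗ f)) (add_zero n) := by
  rw [Ext.comp_assoc _ _ _ (add_zero n) (zero_add 0) (by lia), ofLinear_comp_ofLinear]

theorem ofLinear_comp_ofLinear_comp {n : ℕ} (f : X →ₗ[E] Y) (g : Y →ₗ[E] Z)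
    (x : ModuleExt.{w} E Z T n) :
    (ofLinear f).comp ((ofLinear g).comp x (zero_add n)) (zero_add n) =
      (ofLinear (g ∘ₗ f)).comp x (zero_add n) := by
  rw [← Ext.comp_assoc _ _ _ (zero_add 0) (zero_add n) (by lia), ofLinear_comp_ofLinear]

/-- The class of the extension given by a surjective map. -/
noncomputable def syzygyClass (g : X →ₗ[E] Y) (hg : Function.Surjective g) :
    ModuleExt.{w} E Y (LinearMap.ker g) 1 :=
  (kerSequence_shortExact hg).extClass

theorem syzygyClass_comp_kerMap {g : X →ₗ[E] Y} {g' : Z →ₗ[E] T} (hg : Function.Surjective g)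
    (hg' : Function.Surjective g') (F : X →ₗ[E] Z) (f : Y →ₗ[E] T) (h : f ∘ₗ g = g' ∘ₗ F) :
    (syzygyClass.{w} g hg).comp (ofLinear (kerMap F f h)) (add_zero 1) =
      (ofLinear f).comp (syzygyClass g' hg') (zero_add 1) :=
  let φ : kerSequence g ⟶ kerSequence g' :=
    { τ₁ := ModuleCat.ofHom (kerMap F f h)
      τ₂ := ModuleCat.ofHom F
      τ₃ := ModuleCat.ofHom f
      comm₁₂ := rfl
      comm₂₃ := congrArg ModuleCat.ofHom h.symm }
  ShortComplex.ShortExact.extClass_naturality _ _ φ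

section SyzygyClass

theorem exists_of_subtype_comp_eq_zero {g : X →ₗ[E] Y} (hg : Function.Surjective g)
    {m : ℕ} (x : ModuleExt.{w} E X Z m)
    (hx : (ofLinear (LinearMap.ker g).subtype).comp x (zero_add m) = 0) :
    ∃ x' : ModuleExt.{w} E Y Z m, (ofLinear g).comp x' (zero_add m) = x :=
  Ext.contravariant_sequence_exact₂ (kerSequence_shortExact hg) _ x hx

variable {g : X →ₗ[E] Y} (hg : Function.Surjective g)

theorem syzygyClass_comp_restrict (f : X →ₗ[E] Z) :
    (syzygyClass.{w} g hg).comp (ofLinear (f ∘ₗ (LinearMap.ker g).subtype)) (add_zero 1) = 0 := by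
  rw [← ofLinear_comp_ofLinear]
  exact ShortComplex.ShortExact.extClass_comp_assoc _ _

theorem eq_zero_of_projective [Module.Projective E X] {p : ℕ} (h : 0 < p)
    (x : ModuleExt.{w} E X Z p) : x = 0 := by
  obtain ⟨p, rfl⟩ := Nat.exists_eq_succ_of_ne_zero h.ne'
  have : Projective (ModuleCat.of E X) := ModuleCat.projective_of_categoryTheory_projective _
  exact Ext.eq_zero_of_projective x

theorem exists_syzygyClass_comp [Module.Projective E X] {m p : ℕ} (h : 1 + m = p)
    (x : ModuleExt.{w} E Y Z p) :
    ∃ x' : ModuleExt.{w} E (LinearMap.ker g) Z m, (syzygyClass g hg).comp x' h = x :=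
  Ext.contravariant_sequence_exact₃ (kerSequence_shortExact hg) _ x
    (eq_zero_of_projective (X := X) (by lia) _) h

theorem exists_of_syzygyClass_comp_eq_zero {m p : ℕ} (h : 1 + m = p)
    (x : ModuleExt.{w} E (LinearMap.ker g) Z m) (hx : (syzygyClass g hg).comp x h = 0) :
    ∃ x' : ModuleExt.{w} E X Z m, (ofLinear (LinearMap.ker g).subtype).comp x' (zero_add m) = x :=
  Ext.contravariant_sequence_exact₁ (kerSequence_shortExact hg) _ x h hx

theorem eq_zero_of_syzygyClass_comp_eq_zero [Module.Projective E X] {m p : ℕ} (h : 1 + m = p)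
    (hm : 0 < m) (x : ModuleExt.{w} E (LinearMap.ker g) Z m)
    (hx : (syzygyClass g hg).comp x h = 0) : x = 0 := by
  obtain ⟨x', rfl⟩ := exists_of_syzygyClass_comp_eq_zero hg h x hx
  rw [eq_zero_of_projective hm x', Ext.comp_zero]

theorem exists_restrict_of_syzygyClass_comp_eq_zero (f : LinearMap.ker g →ₗ[E] Z)
    (hf : (syzygyClass.{w} g hg).comp (ofLinear f) (add_zero 1) = 0) :
    ∃ F : X →ₗ[E] Z, F ∘ₗ (LinearMap.ker g).subtype = f := by
  obtain ⟨x', hx⟩ := exists_of_syzygyClass_comp_eq_zero hg _ _ hf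
  obtain ⟨F, rfl⟩ := exists_eq_ofLinear x'
  exact ⟨F, ofLinear_injective.{w} (by rw [← hx, ofLinear_comp_ofLinear])⟩

end SyzygyClass

theorem centralSMul_comp {z : E} (hz : ∀ s, Commute z s) {n : ℕ} (x : ModuleExt.{w} E X Y n) :
    (ofLinear (centralSMul hz X)).comp x (zero_add n) =
      x.comp (ofLinear (centralSMul hz Y)) (add_zero n) := by
  induction n generalizing X with
  | zero =>
    obtain ⟨f, rfl⟩ := exists_eq_ofLinear x
    rw [ofLinear_comp_ofLinear, ofLinear_comp_ofLinear]
    exact congrArg ofLinear (LinearMap.ext fun v => map_smul f z v)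
  | succ n ih =>
    let g : (X →₀ E) →ₗ[E] X := Finsupp.linearCombination E id
    have hg : Function.Surjective g := Finsupp.linearCombination_id_surjective E X
    obtain ⟨x', rfl⟩ := exists_syzygyClass_comp hg (add_comm 1 n) x
    have h : centralSMul hz X ∘ₗ g = g ∘ₗ centralSMul hz _ :=
      LinearMap.ext fun v => (map_smul g z v).symm
    have hker : kerMap (centralSMul hz _) (centralSMul hz X) h =
        centralSMul hz (LinearMap.ker g) := rfl
    rw [← Ext.comp_assoc _ _ _ (zero_add 1) (add_comm 1 n) (by lia),
      ← syzygyClass_comp_kerMap hg hg _ _ h, hker,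
      Ext.comp_assoc _ _ _ (add_zero 1) (zero_add n) (by lia), ih,
      Ext.comp_assoc _ _ _ (add_comm 1 n) (add_zero n) (by lia)]

variable {M : Type u} [AddCommGroup M] [Module E M] {n : ℕ}

/-- The multiplication with an extension from `M` to `Y`, the class of an exact sequence with
projective modules in between, is bijective in high degrees and surjective in its own degree. -/
structure ShiftsDegree (cl : ModuleExt.{w} E M Y n) : Prop where
  exists_comp_eq : ∀ ⦃Z : Type u⦄ [AddCommGroup Z] [Module E Z] ⦃m p : ℕ⦄ (h : n + m = p)
    (x : ModuleExt.{w} E M Z p), ∃ x' : ModuleExt.{w} E Y Z m, cl.comp x' h = x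
  eq_zero_of_comp_eq_zero : ∀ ⦃Z : Type u⦄ [AddCommGroup Z] [Module E Z] ⦃m p : ℕ⦄ (h : n + m = p)
    (_ : 0 < m) (x : ModuleExt.{w} E Y Z m), cl.comp x h = 0 → x = 0

theorem shiftsDegree_id : ShiftsDegree (ofLinear.{w} (LinearMap.id : M →ₗ[E] M)) where
  exists_comp_eq _ _ _ m p h x := by
    obtain rfl : m = p := by lia
    exact ⟨x, ofLinear_id_comp x⟩
  eq_zero_of_comp_eq_zero _ _ _ m p h _ x hx := by
    obtain rfl : m = p := by lia
    rwa [ofLinear_id_comp] at hx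

variable {g : X →ₗ[E] Y} {hg : Function.Surjective g} {cl : ModuleExt.{w} E M Y n}

theorem ShiftsDegree.comp_syzygyClass [Module.Projective E X] (hcl : ShiftsDegree cl) :
    ShiftsDegree (cl.comp (syzygyClass g hg) (rfl : n + 1 = n + 1)) where
  exists_comp_eq _ _ _ m p h x := by
    obtain ⟨x₁, rfl⟩ := hcl.exists_comp_eq (show n + (1 + m) = p by lia) x
    obtain ⟨x₂, rfl⟩ := exists_syzygyClass_comp hg rfl x₁
    exact ⟨x₂, Ext.comp_assoc _ _ _ _ _ (by lia)⟩
  eq_zero_of_comp_eq_zero _ _ _ m p h hm x hx := by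
    rw [Ext.comp_assoc _ _ _ _ (rfl : 1 + m = 1 + m) (by lia)] at hx
    exact eq_zero_of_syzygyClass_comp_eq_zero hg rfl hm x
      (hcl.eq_zero_of_comp_eq_zero (by lia) (by lia) _ hx)

theorem ShiftsDegree.exists_eq_comp_ofLinear (hcl : ShiftsDegree cl) (x : ModuleExt.{w} E M Z n) :
    ∃ f : Y →ₗ[E] Z, x = cl.comp (ofLinear f) (add_zero n) := by
  obtain ⟨x', rfl⟩ := hcl.exists_comp_eq (add_zero n) x
  obtain ⟨f, rfl⟩ := exists_eq_ofLinear x'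
  exact ⟨f, rfl⟩

theorem ShiftsDegree.exists_restrict (hcl : ShiftsDegree cl) (f : LinearMap.ker g →ₗ[E] Z)
    (hf : (cl.comp (syzygyClass g hg) (rfl : n + 1 = n + 1)).comp (ofLinear f) (add_zero _) = 0) :
    ∃ F : X →ₗ[E] Z, F ∘ₗ (LinearMap.ker g).subtype = f := by
  rw [Ext.comp_assoc _ _ _ _ (add_zero 1) (by lia)] at hf
  exact exists_restrict_of_syzygyClass_comp_eq_zero hg f
    (hcl.eq_zero_of_comp_eq_zero rfl one_pos _ hf)

theorem comp_syzygyClass_comp_restrict (F : X →ₗ[E] Z) :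
    (cl.comp (syzygyClass g hg) (rfl : n + 1 = n + 1)).comp
      (ofLinear (F ∘ₗ (LinearMap.ker g).subtype)) (add_zero _) = 0 := by
  rw [Ext.comp_assoc _ _ _ _ (add_zero 1) (by lia), syzygyClass_comp_restrict, Ext.comp_zero]

/-- One step in the comparison of two resolutions. -/
theorem comp_syzygyClass_comp_kerMap {A B C : Type u} [AddCommGroup A] [Module E A]
    [AddCommGroup B] [Module E B] [AddCommGroup C] [Module E C] {m p : ℕ}
    {x : ModuleExt.{w} E C M m} {cl' : ModuleExt.{w} E C B p} {g' : A →ₗ[E] B}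
    {hg' : Function.Surjective g'} (h : m + n = p) {f : B →ₗ[E] Y}
    (hf : cl'.comp (ofLinear f) (add_zero p) = x.comp cl h) (F : A →ₗ[E] X)
    (hF : f ∘ₗ g' = g ∘ₗ F) :
    (cl'.comp (syzygyClass g' hg') (rfl : p + 1 = p + 1)).comp (ofLinear (kerMap F f hF))
        (add_zero _) =
      x.comp (cl.comp (syzygyClass g hg) (rfl : n + 1 = n + 1))
        (show m + (n + 1) = p + 1 by lia) := by
  rw [Ext.comp_assoc _ _ _ _ (add_zero 1) (by lia), syzygyClass_comp_kerMap hg' hg,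
    ← Ext.comp_assoc _ _ _ (add_zero p) (zero_add 1) (by lia), hf,
    Ext.comp_assoc _ _ _ h rfl (by lia)]

end Extensions

/-! ### Cochains -/

/-- Cocycles of degree `0` whose classes span the cohomology. -/
def cocycles0 : List IntComb := [
  [(1, 0)], [(1, 4), (1, 6)], [(1, 4), (1, 5), (-1, 7)], [(1, 11)]]

/-- The coefficients of the cochains at `cocycles0`, up to a scalar factor. -/
def coeffs0 : List IntComb := [
  [(2, 0)], [], [], [], [(2, 1)], [(-2, 1), (2, 2)], [], [], [], [], [], [(2, 3)]]

/-- The parts of the cochains of degree `0` determined by their coboundary, up to a scalar factor.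
-/
def corrections0 : List IntComb := [
  [], [], [], [], [(2, 2)], [(-2, 2), (2, 3)], [], [], [(2, 6)], [(2, 7)], [], [(1, 10)], [], [],
  [], [], [(-2, 1)], [], [], [], [], [], [], [(1, 9)], [], [], [], [], [], [], [], [], [], [],
  [], [(-1, 8)]]

/-- Cocycles of degree `1` whose classes span the cohomology. -/
def cocycles1 : List IntComb := [
  [(1, 1), (1, 14), (1, 27)], [(1, 8), (1, 20), (1, 33), (1, 34)], [(1, 9), (1, 20), (-1, 22),
  (1, 33)], [(-1, 8), (1, 9)], [(1, 10)], [(1, 21)], [(1, 32)]]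

/-- The coefficients of the cochains at `cocycles1`, up to a scalar factor. -/
def coeffs1 : List IntComb := [
  [], [(2, 0)], [], [], [], [], [], [], [(-1, 1), (1, 2), (-2, 3)], [(-1, 1), (1, 2)], [(2, 4)],
  [], [], [], [], [], [], [], [], [], [(1, 1)], [(2, 5)], [(2, 1), (-2, 2), (2, 3)], [], [], [],
  [], [], [], [], [], [], [(2, 6)], [(2, 1), (-1, 2), (2, 3)]]

/-- The coboundary parts of the cochains of degree `1`, up to a scalar factor. -/
def primitives1 : List IntComb := [
  [], [], [], [], [(2, 2)], [(-2, 2), (2, 3)], [], [], [(1, 5)], [(1, 5)], [], [(1, 10)], [], [],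
  [], [], [(-2, 1)], [], [], [], [(1, 4)], [], [], [(1, 9)], [], [], [], [], [], [], [], [], [],
  [(-1, 4), (-1, 5)], [], [(-1, 8)]]

/-- The parts of the cochains of degree `1` determined by their coboundary, up to a scalar factor.
-/
def corrections1 : List IntComb := [
  [], [(1, 0), (1, 12), (-1, 24)], [], [], [(2, 2)], [(-2, 2), (-2, 3)], [], [], [(2, 6),
  (-1, 17), (-1, 18), (-1, 19), (1, 29), (1, 30), (1, 31)], [(-2, 7), (-1, 17), (-1, 18),
  (-1, 19), (1, 29), (1, 30), (1, 31)], [], [], [], [], [], [], [(2, 13)], [(2, 15)], [], [],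
  [(-1, 17), (1, 18), (-1, 19), (-1, 28), (-1, 29), (-1, 31)], [], [(-1, 17), (1, 18), (1, 19),
  (-1, 28), (-1, 29), (-1, 31)], [], [], [], [], [], [(-2, 25), (-2, 26)], [(2, 26)], [], [], [],
  [(1, 28), (2, 29), (1, 30)], [(-1, 28), (-2, 29), (1, 30)], [], [], [(2, 12)], [(-2, 12),
  (2, 24)], [], [(-2, 27)], [(2, 14), (2, 27)], [], [], [(1, 28), (-1, 30)], [(1, 17), (1, 18),
  (1, 19), (-1, 28), (-1, 29), (-1, 31)], [(1, 17), (1, 18), (1, 19), (1, 29), (1, 30), (1, 31)],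
  [(-2, 34)]]

/-- Cocycles of degree `2` whose classes span the cohomology. -/
def cocycles2 : List IntComb := [
  [(1, 0)], [(1, 12)], [(1, 24)], [(1, 36), (1, 48)], [(1, 4), (1, 6)], [(1, 16), (1, 18)],
  [(1, 11)], [(1, 23)], [(1, 35)], [(1, 47), (1, 59)]]

/-- The coefficients of the cochains at `cocycles2`, up to a scalar factor. -/
def coeffs2 : List IntComb := [
  [(2, 0)], [], [], [], [(2, 4)], [(-4, 4)], [], [], [], [], [], [(2, 6)], [(2, 1)], [], [], [],
  [(2, 5)], [(2, 5)], [], [], [], [], [], [(2, 7)], [(2, 2)], [], [], [], [(4, 4), (4, 5)],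
  [(-2, 4), (-2, 5)], [], [], [], [], [], [(2, 8)], [(2, 3)], [], [], [], [], [], [(2, 4),
  (2, 5)], [(-2, 5)], [], [], [], [(1, 9)], [], [], [], [], [], [], [], [], [], [], [], [(1, 9)]]

/-- The coboundary parts of the cochains of degree `2`, up to a scalar factor. -/
def primitives2 : List IntComb := [
  [], [(1, 0), (1, 12), (-1, 24)], [], [], [], [(2, 2), (-2, 3)], [], [], [(2, 4), (1, 5),
  (1, 6), (1, 7)], [(2, 4), (1, 5), (-1, 6), (-1, 7)], [], [], [], [], [], [], [], [(-2, 13),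
  (2, 15)], [], [], [(1, 4), (1, 5), (1, 7), (1, 16), (1, 18)], [], [(-1, 4), (-1, 5), (-1, 7),
  (1, 16), (-2, 17), (-1, 18)], [], [], [], [], [], [(-4, 2), (-4, 13), (-2, 25), (-2, 26)],
  [(2, 2), (2, 13), (2, 26)], [], [], [], [(1, 4), (-1, 6), (1, 16), (-1, 18), (2, 28), (2, 29)],
  [(1, 4), (-1, 6), (1, 16), (-1, 18), (-2, 29)], [], [], [(2, 12)], [(-2, 12), (2, 24)], [],
  [(2, 1), (2, 14)], [(-2, 1)], [(-2, 2), (-2, 13)], [(2, 13)], [(-1, 4), (1, 6), (-1, 16),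
  (1, 18)], [(-1, 4), (-1, 5), (-1, 7), (1, 16), (-1, 18)], [(-1, 5), (-1, 6), (-1, 7)],
  [(-1, 8)], [], [], [], [], [], [], [], [], [], [], [], [(1, 8)]]

/-- The parts of the cochains of degree `2` determined by their coboundary, up to a scalar factor.
-/
def corrections2 : List IntComb := [
  [], [], [], [], [(2, 2), (-2, 14)], [(-2, 2), (2, 3), (2, 14), (-2, 27)], [], [], [(2, 6),
  (-2, 52)], [(2, 7), (-2, 53)], [], [(1, 10), (1, 56), (-1, 57), (1, 58)], [], [], [], [],
  [(-2, 13), (-2, 14), (2, 27), (-2, 39), (-2, 51)], [(2, 15), (-2, 27)], [], [], [(-2, 18),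
  (2, 52)], [], [(2, 18), (2, 19), (-2, 52), (-2, 53)], [(1, 21), (1, 56), (1, 57), (-1, 58)],
  [], [], [], [], [(-4, 14), (-2, 25), (2, 26), (2, 27), (-2, 39), (-2, 51)], [(2, 14),
  (-2, 26)], [], [], [], [(-2, 31), (2, 53)], [(-2, 30), (-2, 31), (2, 52), (2, 53)], [(-1, 32),
  (-1, 56), (-1, 57), (-1, 58)], [], [], [(2, 48)], [], [(2, 14), (2, 49), (2, 50), (2, 51)],
  [(2, 39), (-2, 49), (-4, 50), (-2, 51)], [(2, 49), (2, 50), (2, 51)], [], [(2, 52), (2, 53)],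
  [], [(2, 55)], [(-1, 56), (1, 57), (-1, 58)], [], [], [], [], [(2, 14), (-2, 27), (2, 49),
  (2, 50), (4, 51)], [(-2, 14), (2, 27), (-2, 39), (2, 50)], [], [], [(2, 53)], [(2, 54),
  (2, 55)], [], [(-1, 56), (-1, 57), (1, 58)], [], [], [], [], [(2, 39), (-2, 49), (-2, 50),
  (-2, 51)], [], [], [], [], [], [], [(1, 56), (1, 57), (1, 58)]]

/-- Cocycles of degree `3` whose classes span the cohomology. -/
def cocycles3 : List IntComb := [
  [(1, 1), (1, 37), (1, 50), (1, 63)], [(1, 8), (1, 44), (1, 56), (1, 69), (1, 70)], [(-1, 8),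
  (1, 9), (-1, 44), (1, 45)], [(1, 10), (1, 46)], [(1, 57)], [(1, 14), (1, 37), (1, 50),
  (1, 63)], [(1, 20), (1, 44), (1, 56), (1, 69), (1, 70)], [(1, 21), (1, 57)], [(1, 27), (1, 37),
  (1, 50), (1, 63)], [(1, 32), (1, 68)], [(1, 38), (1, 39), (1, 49), (1, 51), (1, 61), (1, 62)],
  [(1, 37), (1, 50), (1, 63)]]

/-- The coefficients of the cochains at `cocycles3`, up to a scalar factor. -/
def coeffs3 : List IntComb := [
  [], [(6, 0), (-6, 11)], [], [], [], [], [], [], [(3, 1), (-3, 6)], [(-6, 1), (-3, 6)], [(6, 3),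
  (-6, 4)], [], [], [], [(6, 5), (-6, 11)], [], [], [], [], [], [(-3, 1), (3, 6)], [(-6, 4),
  (6, 7)], [(-3, 1), (-6, 6)], [], [], [], [], [(6, 8), (-6, 11)], [], [], [], [], [(6, 4),
  (6, 9)], [(6, 1), (3, 6)], [(3, 1), (6, 6)], [], [], [(6, 11)], [(3, 10)], [(3, 10)], [], [],
  [], [], [(-9, 1), (-6, 2), (3, 6)], [(3, 6)], [(6, 4)], [], [], [], [], [], [], [], [], [],
  [(3, 1)], [(6, 4)], [(12, 1), (6, 2)], [], [], [], [], [], [], [], [], [], [(-6, 4)], [(9, 1),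
  (6, 2)]]

/-- The coboundary parts of the cochains of degree `3`, up to a scalar factor. -/
def primitives3 : List IntComb := [
  [], [], [], [], [(6, 2), (-6, 14)], [(-6, 2), (6, 3), (6, 14), (-6, 27)], [], [], [(-3, 4),
  (3, 16)], [(6, 5), (3, 16), (6, 42), (12, 43)], [(-6, 40)], [(3, 10), (-3, 22)], [], [], [],
  [], [(6, 1), (-6, 13)], [(6, 15), (-6, 27)], [], [], [(-3, 4), (3, 16)], [], [(-3, 4), (6, 16),
  (6, 17), (6, 42), (12, 43)], [(-3, 9), (3, 21)], [], [], [], [], [(6, 1), (-6, 14), (-6, 25),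
  (6, 26)], [(6, 14), (-6, 26)], [], [], [(-6, 41)], [(6, 4), (-3, 16), (-6, 28), (-6, 29),
  (-6, 42), (-12, 43)], [(3, 4), (-6, 16), (-6, 29), (-6, 42), (-12, 43)], [(3, 8), (-3, 32)],
  [], [], [(-3, 36)], [(3, 36)], [(-6, 1), (-6, 27), (-6, 37), (-6, 38), (-6, 39)], [(12, 1),
  (12, 27), (6, 37), (12, 38), (12, 39)], [(-6, 1), (-6, 14), (-6, 27), (-6, 37), (-6, 38),
  (-6, 39)], [], [(3, 4), (6, 5), (-3, 16), (6, 42), (6, 43)], [(-3, 16), (-6, 43)], [(6, 40)],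
  [(3, 22)], [], [], [], [], [(-12, 1), (-6, 14), (-6, 27), (-6, 37), (-6, 38), (-12, 39)],
  [(-6, 1), (-6, 38), (-6, 39)], [], [], [(3, 4)], [], [(-6, 5), (-12, 42), (-12, 43)], [(3, 9)],
  [], [], [], [], [(6, 1), (6, 14), (6, 27), (6, 37), (6, 38), (12, 39)], [], [], [], [(6, 41)],
  [(-3, 4), (-6, 5), (-6, 42), (-6, 43)], [], [(-3, 8)]]

/-- The parts of the cochains of degree `3` determined by their coboundary, up to a scalar factor.
-/
def corrections3 : List IntComb := [
  [], [(3, 0)], [], [], [(6, 2)], [(-6, 2), (-6, 3)], [], [], [(6, 6)], [(-6, 7)], [], [], [],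
  [], [(3, 12)], [], [(6, 13)], [(6, 15)], [], [], [(6, 18)], [], [(6, 18), (6, 19)], [], [], [],
  [], [(3, 24)], [(-6, 25), (-6, 26)], [(6, 26)], [], [], [], [(-6, 31)], [(6, 30), (6, 31)], [],
  [], [(3, 36), (3, 48), (-3, 60)], [], [], [(4, 49), (-4, 51), (-2, 61), (2, 62)], [(-2, 49),
  (2, 51), (-2, 61), (2, 62)], [], [], [(6, 43), (6, 54), (-6, 67)], [(-6, 43), (-6, 54),
  (-6, 55), (6, 66), (6, 67)], [(6, 43), (6, 54), (6, 55), (-6, 67)], [], [], [(6, 48)],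
  [(-6, 48), (6, 60)], [], [(-6, 63)], [(6, 50), (6, 63)], [(2, 49), (-2, 51), (2, 61), (4, 62)],
  [(2, 49), (4, 51), (2, 61), (-2, 62)], [(-6, 43), (-6, 54), (-6, 55), (-6, 65), (6, 67)],
  [(6, 43), (12, 54), (12, 55), (6, 65), (-6, 66), (-12, 67)], [(6, 54), (6, 55), (6, 65)],
  [(-6, 70)]]

/-- Cocycles of degree `4` whose classes span the cohomology. -/
def cocycles4 : List IntComb := [
  [(1, 0), (1, 36)], [(1, 36)], [(1, 48), (1, 60)], [(1, 11), (1, 47)], [(1, 47)], [(1, 59),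
  (1, 71)], [(1, 12), (1, 36)], [(1, 23), (1, 47)], [(1, 24), (1, 36)], [(1, 35), (1, 47)]]

/-- The coefficients of the cochains at `cocycles4`, up to a scalar factor. -/
def coeffs4 : List IntComb := [
  [(6, 0), (-6, 1)], [], [], [], [], [], [], [], [], [], [], [(6, 3), (-6, 4)], [(-6, 1),
  (6, 6)], [], [], [], [], [], [], [], [], [], [], [(-6, 4), (6, 7)], [(-6, 1), (6, 8)], [], [],
  [], [], [], [], [], [], [], [], [(-6, 4), (6, 9)], [(6, 1)], [], [], [], [], [], [], [], [],
  [], [], [(6, 4)], [(6, 2)], [], [], [], [], [], [], [], [], [], [], [(3, 5)], [], [], [], [],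
  [], [], [], [], [], [], [], [(3, 5)]]

/-- The coboundary parts of the cochains of degree `4`, up to a scalar factor. -/
def primitives4 : List IntComb := [
  [], [(3, 0)], [], [], [(6, 2)], [(-6, 2), (-6, 3)], [], [], [(6, 4)], [(6, 4), (6, 5)], [], [],
  [], [], [(3, 12)], [], [(6, 13)], [(6, 15)], [], [], [(6, 16)], [], [(-6, 17)], [], [], [], [],
  [(3, 24)], [(-6, 25), (-6, 26)], [(6, 26)], [], [], [], [(6, 28), (6, 29)], [(-6, 29)], [], [],
  [(3, 36), (3, 48), (-3, 60)], [], [], [(2, 38), (-2, 39), (2, 49), (-2, 51)], [(2, 38),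
  (-2, 39), (-4, 49), (4, 51)], [], [], [(6, 40), (3, 41), (3, 42), (3, 43)], [(6, 40), (3, 41),
  (-3, 42), (-3, 43)], [(-6, 40), (-3, 41), (-3, 42), (-3, 43), (6, 52), (-6, 53)], [], [],
  [(6, 48)], [(-6, 48), (6, 60)], [], [(6, 37), (6, 50)], [(-6, 37)], [(-2, 38), (-4, 39),
  (-2, 49), (-4, 51)], [(-2, 38), (2, 39), (4, 49), (2, 51)], [(6, 42), (-6, 52)], [(-6, 40),
  (-3, 41), (-3, 42), (-3, 43), (6, 52)], [(-3, 41), (-3, 42), (-3, 43)], [(-3, 44)], [], [], [],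
  [], [], [], [], [], [], [], [], [(3, 44)]]

/-- The parts of the cochains of degree `4` determined by their coboundary, up to a scalar factor.
-/
def corrections4 : List IntComb := [
  [], [], [], [], [(6, 2)], [(-6, 2), (6, 3)], [], [], [(6, 6)], [(6, 7)], [], [(3, 10)], [], [],
  [], [], [(-6, 13)], [(6, 15)], [], [], [(-6, 18)], [], [(6, 18), (6, 19)], [(3, 21)], [], [],
  [], [], [(-6, 25), (6, 26)], [(-6, 26)], [], [], [], [(-6, 31)], [(-6, 30), (-6, 31)],
  [(-3, 32)], [], [], [(6, 60)], [], [(6, 38), (6, 61), (6, 62), (6, 63)], [(6, 51), (-6, 61),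
  (-12, 62), (-6, 63)], [(6, 61), (6, 62), (6, 63)], [], [(4, 42), (2, 43), (2, 64), (4, 65)],
  [(4, 42), (2, 43), (-4, 64), (-2, 65)], [(6, 67)], [(-3, 68), (3, 69), (-3, 70)], [], [], [],
  [], [(6, 38), (-6, 39), (6, 61), (6, 62), (12, 63)], [(-6, 38), (6, 39), (-6, 51), (6, 62)],
  [], [], [(-2, 42), (2, 43), (2, 64), (4, 65)], [(6, 66), (6, 67)], [(-2, 42), (2, 43), (2, 64),
  (-2, 65)], [(-3, 68), (-3, 69), (3, 70)], [], [], [], [], [(6, 51), (-6, 61), (-6, 62),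
  (-6, 63)], [], [], [], [], [], [], [(3, 68), (3, 69), (3, 70)]]

/-- The value of a cochain of degree `3` at `cycle3`, in terms of its coboundary. -/
def cycleCorrections : List IntComb := [
  [], [(1, 8), (-1, 9), (-1, 10)], [], [], [], [], [], [], [], [], [], [], [], [], [(1, 8),
  (-1, 9), (-1, 10)], [], [], [], [], [], [], [], [], [], [], [], [], [(1, 8)], [], [], [], [],
  [], [], [], [], [], [(1, 10)], [], [], [], [], [], [], [], [], [], [], [], [(-1, 8), (1, 10)],
  [(-1, 10)]]

/-- The table of the multiplication by the element `z` of the enveloping algebra on a power of the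
bimodule. -/
def smulTable (z : IntComb) (i : ℕ) : IntComb :=
  rename (fun l => i / 12 * 12 + l) (substBelow 144 (fun q => envAct q (i % 12)) z)

namespace WordBases

variable {k E M : Type*} [CommRing k] [Ring E] [Algebra k E] [AddCommGroup M] [Module k M]
  [Module E M] (B : WordBases k E M) {q r s : ℕ}

/-- The cochain with the values given by a combination of basis vectors of the bimodule; the index
`12 * w + u` stands for the word `u` in the place `w`. -/
noncomputable def cochain (r : ℕ) (L : IntComb) : Fin r → M := eval (vec (B.cochainBasis r)) L

/-- The element of the enveloping algebra given by a combination of basis vectors. -/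
noncomputable def envElem (z : IntComb) : E := eval (vec B.envBasis) z

theorem commute_envElem {z : IntComb} (h : allZero 144 fun j =>
      sub (substBelow 144 (fun q => envMul q j) z) (substBelow 144 (envMul j) z)) (x : E) :
    Commute (B.envElem z) x := by
  have hbasis : ∀ i, B.envElem z * B.envBasis i = B.envBasis i * B.envElem z := fun i => by
    have hright : HasTable B.envBasis (vec B.envBasis) (LinearMap.mulRight k (B.envBasis i))
        fun q => envMul q i := fun q => by
      rw [← vec_coe, ← vec_coe, LinearMap.mulRight_apply, B.mul_vec _ q.2 _ i.2]
    have hleft : HasTable B.envBasis (vec B.envBasis) (LinearMap.mulLeft k (B.envBasis i))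
        (envMul i) := fun q => by
      rw [← vec_coe, ← vec_coe, LinearMap.mulLeft_apply, B.mul_vec _ i.2 _ q.2]
    exact (hright.map_eval z).trans ((eval_eq_of_isZero_sub _
      (List.all_eq_true.1 h i (List.mem_range.2 i.2))).trans (hleft.map_eval z).symm)
  have hlin : LinearMap.mulLeft k (B.envElem z) = LinearMap.mulRight k (B.envElem z) :=
    B.envBasis.ext hbasis
  exact LinearMap.congr_fun hlin x

section Tower

variable [IsScalarTower k E M]

/-- Precomposition of cochains with the map of free modules whose matrix is given by `D`. -/
noncomputable def cochainMap (r s : ℕ) (D : List IntComb) : (Fin r → M) →ₗ[k] (Fin s → M) :=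
  precomp k M (evalFamily (vec (B.chainBasis r)) s D)

theorem hasTable_cochainMap (D : List IntComb) :
    HasTable (B.cochainBasis r) (vec (B.cochainBasis s)) (B.cochainMap r s D) (precompTable s D) :=
  B.hasTable_precomp D

theorem freeMap_cochainMap (D : List IntComb) (c : Fin r → M) :
    freeMap (B.cochainMap r s D c) = freeMap c ∘ₗ B.chainMap s r D :=
  freeMap_precomp _ c

theorem cochainMap_cochain {D : List IntComb} {L L' : IntComb}
    (h : isZero (sub (substBelow (r * 12) (precompTable s D) L) L')) :
    B.cochainMap r s D (B.cochain r L) = B.cochain s L' :=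
  ((B.hasTable_cochainMap D).map_eval L).trans (eval_eq_of_isZero_sub _ h)

theorem cochainMap_cochain_eq_zero {D : List IntComb} {L : IntComb}
    (h : isZero (substBelow (r * 12) (precompTable s D) L)) :
    B.cochainMap r s D (B.cochain r L) = 0 :=
  ((B.hasTable_cochainMap D).map_eval L).trans (eval_eq_zero_of_isZero _ h)

theorem hasTable_smul (z : IntComb) :
    HasTable (B.cochainBasis r) (vec (B.cochainBasis r))
      (Algebra.lsmul k k (Fin r → M) (B.envElem z)) (smulTable z) := by
  intro i
  have hrow : HasTable B.envBasis (vec B.basis) ((LinearMap.toSpanSingleton E M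
      (vec B.basis (i % 12))).restrictScalars k) fun q => envAct q (i % 12) := fun q => by
    rw [← vec_coe, LinearMap.restrictScalars_apply, LinearMap.toSpanSingleton_apply,
      B.smul_vec _ q.2 _ (Nat.mod_lt _ (by norm_num))]
  have hlt : ∀ p ∈ substBelow 144 (fun q => envAct q (i % 12)) z, p.2 < 12 := fun p hp => by
    simp only [substBelow, subst, scale, truncate, List.mem_flatMap, List.mem_map] at hp
    obtain ⟨q, -, p', hp', rfl⟩ := hp
    split_ifs at hp'
    · exact envAct_lt _ _ p' hp'
    · simp at hp'
  funext w
  rw [smulTable, eval_rename_powBasis _ hlt, ← hrow.map_eval, Algebra.lsmul_apply, Pi.smul_apply,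
    ← vec_coe, vec_powBasis, smul_ite, smul_zero]
  rfl

theorem envElem_smul_cochain {z L L' : IntComb}
    (h : isZero (sub (substBelow (r * 12) (smulTable z) L) L')) :
    B.envElem z • B.cochain r L = B.cochain r L' :=
  ((B.hasTable_smul z).map_eval L).trans (eval_eq_of_isZero_sub _ h)

/-- The cocycles of the complex `(Fin q → M) → (Fin r → M) → (Fin s → M)` are combinations of
coboundaries and the cochains from the list `R`. -/
def SpansCocycles (q r s : ℕ) (D D' R : List IntComb) : Prop :=
  LinearMap.ker (B.cochainMap r s D') ≤
    LinearMap.range (B.cochainMap q r D) ⊔ Submodule.span k (B.cochain r '' {L | L ∈ R})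

/-- A certificate for `SpansCocycles`: every cochain of the form `m • c` is the sum of a correction
which depends only on the coboundary of `c`, a coboundary and a combination of cochains from `R`. -/
theorem spansCocycles_of_certificate {D D' R V U C : List IntComb} {m : ℤ} (hm : IsUnit (m : k))
    (h : allZero (r * 12) fun i => sub
      (substBelow (s * 12) (fun l => U.getD l []) (precompTable s D' i) ++
        (substBelow (q * 12) (precompTable r D) (V.getD i []) ++
          subst (fun t => R.getD t []) (C.getD i []))) [(m, i)]) :
    B.SpansCocycles q r s D D' R := by
  intro c hc
  let correction : (Fin s → M) →ₗ[k] (Fin r → M) :=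
    ofTable (B.cochainBasis s) (vec (B.cochainBasis r)) fun l => U.getD l []
  let primitive : (Fin r → M) →ₗ[k] (Fin q → M) :=
    ofTable (B.cochainBasis r) (vec (B.cochainBasis q)) fun i => V.getD i []
  let combination : (Fin r → M) →ₗ[k] (Fin r → M) :=
    ofTable (B.cochainBasis r) (fun t => B.cochain r (R.getD t [])) fun i => C.getD i []
  have hcombination : HasTable (B.cochainBasis r) (vec (B.cochainBasis r)) combination
      fun i => subst (fun t => R.getD t []) (C.getD i []) := fun i => by
    rw [eval_subst]
    exact hasTable_ofTable _ i
  have hid : correction ∘ₗ B.cochainMap r s D' + (B.cochainMap q r D ∘ₗ primitive + combination) =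
      m • LinearMap.id :=
    (((hasTable_ofTable _).comp (B.hasTable_cochainMap D')).add
      (((B.hasTable_cochainMap D).comp (hasTable_ofTable _)).add hcombination)).ext
      (fun i => by simp [vec_coe]) h
  have hmem : ∀ t, B.cochain r (R.getD t []) ∈ Submodule.span k (B.cochain r '' {L | L ∈ R}) := by
    intro t
    rcases lt_or_ge t R.length with ht | ht
    · rw [List.getD_eq_getElem _ _ ht]
      exact Submodule.subset_span ⟨_, List.getElem_mem ht, rfl⟩
    · rw [List.getD_eq_default _ _ ht]
      exact Submodule.zero_mem _
  have hsum : B.cochainMap q r D (primitive c) + combination c = (m : k) • c := by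
    have := LinearMap.congr_fun hid c
    rw [LinearMap.add_apply, LinearMap.comp_apply, LinearMap.mem_ker.1 hc, map_zero,
      zero_add] at this
    rw [Int.cast_smul_eq_zsmul]
    exact this
  rw [← Submodule.smul_mem_iff_of_isUnit _ hm, ← hsum]
  exact Submodule.add_mem_sup ⟨_, rfl⟩ (ofTable_mem _ hmem _ c)

variable {B} in
theorem SpansCocycles.linearForm_eq_zero {r' : ℕ} {D D' R : List IntComb}
    (hB : B.SpansCocycles q r s D D' R) {L : IntComb} {ψ : (Fin r → M) →ₗ[k] (Fin r' → M)}
    {t : ℕ → IntComb} (hψ : HasTable (B.cochainBasis r) (vec (B.cochainBasis r')) ψ t)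
    (hR : R.all fun x =>
      isZero (substBelow (r' * 12) (linearFormTable L) (substBelow (r * 12) t x)))
    (hD : allZero (q * 12) fun i => substBelow (r' * 12) (linearFormTable L)
      (substBelow (r * 12) t (precompTable r D i)))
    {c : Fin r → M} (hc : B.cochainMap r s D' c = 0) :
    linearForm (B.cochainBasis r') L (ψ c) = 0 := by
  refine (le_trans hB (sup_le ?_ (Submodule.span_le.2 ?_)) :
    _ ≤ LinearMap.ker (linearForm (B.cochainBasis r') L ∘ₗ ψ)) hc
  · rw [LinearMap.range_le_ker_iff, LinearMap.comp_assoc]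
    exact linearForm_comp_eq_zero (hψ.comp (B.hasTable_cochainMap D)) hD
  · rintro _ ⟨x, hx, rfl⟩
    rw [SetLike.mem_coe, LinearMap.mem_ker, LinearMap.comp_apply, cochain, hψ.map_eval,
      (hasTable_linearForm L).map_eval]
    exact eval_eq_zero_of_isZero _ (List.all_eq_true.1 hR x hx)

theorem spansCocycles0 (h2 : IsUnit (2 : k)) : B.SpansCocycles 0 1 3 [] diff1 cocycles0 :=
  B.spansCocycles_of_certificate (C := coeffs0) (V := []) (U := corrections0) (m := 2)
    (by exact_mod_cast h2) (by decide +kernel)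

theorem spansCocycles1 (h2 : IsUnit (2 : k)) : B.SpansCocycles 1 3 5 diff1 diff2 cocycles1 :=
  B.spansCocycles_of_certificate (C := coeffs1) (V := primitives1) (U := corrections1) (m := 2)
    (by exact_mod_cast h2) (by decide +kernel)

theorem spansCocycles2 (h2 : IsUnit (2 : k)) : B.SpansCocycles 3 5 6 diff2 diff3 cocycles2 :=
  B.spansCocycles_of_certificate (C := coeffs2) (V := primitives2) (U := corrections2) (m := 2)
    (by exact_mod_cast h2) (by decide +kernel)

theorem spansCocycles3 (h6 : IsUnit (6 : k)) : B.SpansCocycles 5 6 6 diff3 diff4 cocycles3 :=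
  B.spansCocycles_of_certificate (C := coeffs3) (V := primitives3) (U := corrections3) (m := 6)
    (by exact_mod_cast h6) (by decide +kernel)

theorem spansCocycles4 (h6 : IsUnit (6 : k)) : B.SpansCocycles 6 6 6 diff4 diff5 cocycles4 :=
  B.spansCocycles_of_certificate (C := coeffs4) (V := primitives4) (U := corrections4) (m := 6)
    (by exact_mod_cast h6) (by decide +kernel)

theorem freeMap_comp_cycleMap {c : Fin 6 → M} (hc : B.cochainMap 6 6 diff4 c = 0) :
    freeMap c ∘ₗ B.cycleMap = 0 := by
  have hfactor : B.cochainMap 6 1 cycle3 = ofTable (B.cochainBasis 6) (vec (B.cochainBasis 1))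
      (fun l => cycleCorrections.getD l []) ∘ₗ B.cochainMap 6 6 diff4 :=
    (B.hasTable_cochainMap cycle3).ext
      ((hasTable_ofTable _).comp (B.hasTable_cochainMap diff4)) (by decide +kernel)
  rw [← B.freeMap_cochainMap, hfactor, LinearMap.comp_apply, hc, map_zero]
  exact freeMap_ext fun w => by rw [freeMap_single]; rfl

end Tower

/-- The coefficient of the empty word. -/
noncomputable def coeff : M →ₗ[k] k := linearForm B.basis [(1, 0)]

theorem isZero_coeff_envAct : ∀ i < 144, ∀ j < 12, j ≠ 0 →
    isZero (substBelow 12 (linearFormTable [(1, 0)]) (envAct i j)) := by decide +kernel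

theorem linearForm_eq_coeff (w : Fin r) (c : Fin r → M) :
    linearForm (B.cochainBasis r) [(1, w * 12)] c = B.coeff (c w) :=
  linearForm_powBasis _ (by norm_num) w c

variable [IsScalarTower k E M]

theorem coeff_smul (x : E) (m : M) :
    B.coeff (x • m) = B.coeff (x • B.basis 0) * B.coeff m := by
  let lsmul : E →ₗ[k] M →ₗ[k] M := (Algebra.lsmul k k M).toLinearMap
  suffices h : lsmul.compr₂ B.coeff =
      (LinearMap.mul k k).compl₁₂ (B.coeff ∘ₗ lsmul.flip (B.basis 0)) B.coeff from
    LinearMap.congr_fun₂ h x m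
  refine LinearMap.ext_basis B.envBasis B.basis fun i j => ?_
  change B.coeff (B.envBasis i • B.basis j) =
    B.coeff (B.envBasis i • B.basis 0) * B.coeff (B.basis j)
  rw [coeff, linearForm_basis]
  split_ifs with hj
  · rw [mul_one, show j = 0 from Fin.ext hj]
  · rw [mul_zero, ← vec_coe, ← vec_coe, B.smul_vec _ i.2 _ j.2,
      (hasTable_linearForm _).map_eval]
    exact eval_eq_zero_of_isZero _ (isZero_coeff_envAct _ i.2 _ j.2 hj)

/-- The submodule of elements without constant coefficient. -/
noncomputable def radical : Submodule E M where
  carrier := {m | B.coeff m = 0}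
  add_mem' {m m'} (hm : _ = _) (hm' : _ = _) := by
    rw [Set.mem_ofPred_eq, map_add, hm, hm', add_zero]
  zero_mem' := map_zero _
  smul_mem' x m (hm : _ = _) := by rw [Set.mem_ofPred_eq, coeff_smul, hm, mul_zero]

theorem mem_radical {m : M} : m ∈ B.radical ↔ B.coeff m = 0 := Iff.rfl

end WordBases

/-! ### Extensions represented by cochains -/

section Represents

variable {E M N : Type u} [Ring E] [AddCommGroup M] [Module E M] [AddCommGroup N] [Module E N]
  {n r : ℕ}

theorem freeMap_add (c c' : Fin r → M) : freeMap (E := E) (c + c') = freeMap c + freeMap c' :=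
  freeMap_ext fun w => by simp only [freeMap_single, LinearMap.add_apply, Pi.add_apply]

theorem freeMap_zero : freeMap (E := E) (0 : Fin r → M) = 0 :=
  freeMap_ext fun w => by simp only [freeMap_single, LinearMap.zero_apply, Pi.zero_apply]

theorem freeMap_injective : Function.Injective (freeMap (E := E) : (Fin r → M) → _) :=
  fun c c' h => funext fun w => by rw [← freeMap_single (E := E) c, h, freeMap_single]

theorem freeMap_smul {z : E} (hz : ∀ s, Commute z s) (c : Fin r → M) :
    freeMap (E := E) (z • c) = centralSMul hz M ∘ₗ freeMap c :=
  freeMap_ext fun w => by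
    rw [freeMap_single, LinearMap.comp_apply, freeMap_single]
    rfl

variable [HasExt.{w} (ModuleCat.{u} E)]

/-- The extension `x` is represented by the cochain `c`: the values of `c` on the standard basis
define a map which factors through the map `g` onto the syzygy module `N`, and `x` is the image
under this factorisation of the class `cl` of the truncated resolution. -/
def Represents (cl : ModuleExt.{w} E M N n) (g : (Fin r → E) →ₗ[E] N) (c : Fin r → M)
    (x : ModuleExt.{w} E M M n) : Prop :=
  ∃ φ : N →ₗ[E] M, φ ∘ₗ g = freeMap c ∧ x = cl.comp (ofLinear φ) (add_zero n)

variable {cl : ModuleExt.{w} E M N n} {g : (Fin r → E) →ₗ[E] N} {c c' : Fin r → M}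
  {x x' : ModuleExt.{w} E M M n}

theorem Represents.zero : Represents cl g (0 : Fin r → M) 0 :=
  ⟨0, by rw [freeMap_zero, LinearMap.zero_comp], by rw [ofLinear_zero, Ext.comp_zero]⟩

theorem Represents.add (h : Represents cl g c x) (h' : Represents cl g c' x') :
    Represents cl g (c + c') (x + x') := by
  obtain ⟨φ, hφ, rfl⟩ := h
  obtain ⟨φ', hφ', rfl⟩ := h'
  exact ⟨φ + φ', by rw [freeMap_add, LinearMap.add_comp, hφ, hφ'],
    by rw [ofLinear_add, Ext.comp_add]⟩

theorem Represents.centralSMul_comp (h : Represents cl g c x) {z : E} (hz : ∀ s, Commute z s) :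
    Represents cl g (z • c) ((ofLinear (centralSMul hz M)).comp x (zero_add n)) := by
  obtain ⟨φ, hφ, rfl⟩ := h
  exact ⟨centralSMul hz M ∘ₗ φ, by rw [freeMap_smul hz, ← hφ, LinearMap.comp_assoc],
    by rw [FominKirillov.centralSMul_comp, comp_ofLinear_comp_ofLinear]⟩

theorem smul_eq_centralSMul_comp {k : Type*} [Field k] [Algebra k E] (a : k)
    (x : ModuleExt.{w} E M N n) :
    a • x = (ofLinear (centralSMul (Algebra.commutes (A := E) a) M)).comp x (zero_add n) :=
  (Ext.smul_eq_comp_mk₀ x a).trans (centralSMul_comp (Algebra.commutes a) x).symm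

theorem Represents.smul {k : Type*} [Field k] [Algebra k E] [Module k M] [IsScalarTower k E M]
    (h : Represents cl g c x) (a : k) : Represents cl g (a • c) (a • x) := by
  rw [smul_eq_centralSMul_comp, ← algebraMap_smul E]
  exact h.centralSMul_comp _

theorem Represents.unique (hg : Function.Surjective g) (h : Represents cl g c x)
    (h' : Represents cl g c x') : x = x' := by
  obtain ⟨φ, hφ, rfl⟩ := h
  obtain ⟨φ', hφ', rfl⟩ := h'
  rw [(LinearMap.cancel_right hg).1 (hφ.trans hφ'.symm)]

theorem ShiftsDegree.exists_represents (hcl : ShiftsDegree cl) (g : (Fin r → E) →ₗ[E] N)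
    (x : ModuleExt.{w} E M M n) : ∃ c, Represents cl g c x := by
  obtain ⟨φ, rfl⟩ := hcl.exists_eq_comp_ofLinear x
  exact ⟨_, φ, (freeMap_eta (φ ∘ₗ g)).symm, rfl⟩

section Coboundary

variable {k : Type*} [CommRing k] [Algebra k E] [Module k M] [IsScalarTower k E M]
  {N₀ : Type u} [AddCommGroup N₀] [Module E N₀] {q : ℕ} {g₀ : (Fin q → E) →ₗ[E] N₀}
  {hg₀ : Function.Surjective g₀} {cl₀ : ModuleExt.{w} E M N₀ n}
  {d : (Fin r → E) →ₗ[E] LinearMap.ker g₀} {D : Fin r → Fin q → E}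

theorem represents_precomp_zero (hd : (LinearMap.ker g₀).subtype ∘ₗ d = freeMap D)
    (c : Fin q → M) :
    Represents (cl₀.comp (syzygyClass g₀ hg₀) (rfl : n + 1 = n + 1)) d (precomp k M D c) 0 := by
  refine ⟨freeMap c ∘ₗ (LinearMap.ker g₀).subtype, ?_, (comp_syzygyClass_comp_restrict _).symm⟩
  rw [freeMap_precomp, LinearMap.comp_assoc, hd]

theorem ShiftsDegree.exists_eq_precomp (hcl : ShiftsDegree cl₀)
    (hd : (LinearMap.ker g₀).subtype ∘ₗ d = freeMap D) {c : Fin r → M}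
    (h : Represents (cl₀.comp (syzygyClass g₀ hg₀) (rfl : n + 1 = n + 1)) d c 0) :
    ∃ c₀, c = precomp k M D c₀ := by
  obtain ⟨φ, hφ, hzero⟩ := h
  obtain ⟨F, rfl⟩ := hcl.exists_restrict φ hzero.symm
  refine ⟨fun w => F (Pi.single w 1), freeMap_injective (E := E) ?_⟩
  rw [freeMap_precomp, freeMap_eta, ← hφ, LinearMap.comp_assoc, hd]

end Coboundary

end Represents

namespace WordBases

section Represents

variable {k : Type*} {E M N : Type u} [Ring E] [AddCommGroup M] [Module E M] [AddCommGroup N]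
  [Module E N] [HasExt.{w} (ModuleCat.{u} E)] {n q r s : ℕ} {cl : ModuleExt.{w} E M N n}
  {g : (Fin r → E) →ₗ[E] N} {D D' R : List IntComb}

section CommRing

variable [CommRing k] [Algebra k E] [Module k M] [IsScalarTower k E M] (B : WordBases k E M)

theorem cochainMap_eq_zero_of_represents (hD' : g ∘ₗ B.chainMap s r D' = 0) {c : Fin r → M}
    {x : ModuleExt.{w} E M M n} (h : Represents cl g c x) : B.cochainMap r s D' c = 0 := by
  obtain ⟨φ, hφ, -⟩ := h
  refine freeMap_injective (E := E) ?_
  rw [freeMap_cochainMap, ← hφ, LinearMap.comp_assoc, hD', LinearMap.comp_zero, freeMap_zero]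

theorem exists_represents_of_cochainMap_eq_zero (hg : Function.Surjective g)
    (hD' : ∀ x, g x = 0 → ∃ y, B.chainMap s r D' y = x) {c : Fin r → M}
    (hc : B.cochainMap r s D' c = 0) : ∃ x, Represents cl g c x := by
  obtain ⟨φ, hφ⟩ := exists_comp_eq_of_surjective hg (freeMap c) fun x hx => by
    obtain ⟨y, rfl⟩ := hD' x hx
    rw [LinearMap.mem_ker, ← LinearMap.comp_apply, ← freeMap_cochainMap, hc, freeMap_zero,
      LinearMap.zero_apply]
  exact ⟨_, φ, hφ, rfl⟩

end CommRing

variable [Field k] [Algebra k E] [Module k M] [IsScalarTower k E M] {B : WordBases k E M}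

theorem SpansCocycles.exists_represents_mem (hB : B.SpansCocycles q r s D D' R)
    (hD : ∀ c, Represents cl g (B.cochainMap q r D c) 0)
    (S : Submodule k (ModuleExt.{w} E M M n))
    (hR : ∀ L ∈ R, ∃ x ∈ S, Represents cl g (B.cochain r L) x) {c : Fin r → M}
    (hc : B.cochainMap r s D' c = 0) : ∃ x ∈ S, Represents cl g c x := by
  let G : Submodule k (Fin r → M) :=
    { carrier := {c | ∃ x ∈ S, Represents cl g c x}
      zero_mem' := ⟨0, S.zero_mem, Represents.zero⟩
      add_mem' := by
        rintro c c' ⟨x, hxS, hx⟩ ⟨x', hxS', hx'⟩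
        exact ⟨x + x', S.add_mem hxS hxS', hx.add hx'⟩
      smul_mem' := by
        rintro a c ⟨x, hxS, hx⟩
        exact ⟨a • x, S.smul_mem a hxS, hx.smul a⟩ }
  suffices h : LinearMap.range (B.cochainMap q r D) ⊔
      Submodule.span k (B.cochain r '' {L | L ∈ R}) ≤ G from h (hB hc)
  refine sup_le ?_ (Submodule.span_le.2 ?_)
  · rintro _ ⟨c, rfl⟩
    exact ⟨0, S.zero_mem, hD c⟩
  · rintro _ ⟨L, hL, rfl⟩
    exact hR L hL

theorem SpansCocycles.mem (hB : B.SpansCocycles q r s D D' R) (hcl : ShiftsDegree cl)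
    (hg : Function.Surjective g) (hD : ∀ c, Represents cl g (B.cochainMap q r D c) 0)
    (hD' : g ∘ₗ B.chainMap s r D' = 0) (S : Submodule k (ModuleExt.{w} E M M n))
    (hR : ∀ L ∈ R, ∃ x ∈ S, Represents cl g (B.cochain r L) x) (x : ModuleExt.{w} E M M n) :
    x ∈ S := by
  obtain ⟨c, hc⟩ := hcl.exists_represents g x
  obtain ⟨x', hxS', hx'⟩ :=
    hB.exists_represents_mem hD S hR (B.cochainMap_eq_zero_of_represents hD' hc)
  rwa [hc.unique hg hx']

end Represents

/-! ### The syzygies of the algebra as a bimodule -/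

variable {k : Type*} {E M : Type u} [CommRing k] [Ring E] [Algebra k E] [AddCommGroup M]
  [Module k M] [Module E M] [IsScalarTower k E M] (B : WordBases k E M)

theorem aug_surjective : Function.Surjective B.aug := fun m => ⟨_, B.aug_augSection m⟩

/-- The first differential as a map onto the kernel of the augmentation. -/
noncomputable def cover1 : (Fin 3 → E) →ₗ[E] LinearMap.ker B.aug :=
  (B.chainMap 3 1 diff1).codRestrict _ (LinearMap.congr_fun B.aug_comp_diff1)

/-- The second differential as a map onto the cycles of degree `1`. -/
noncomputable def cover2 : (Fin 5 → E) →ₗ[E] LinearMap.ker B.cover1 :=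
  (B.chainMap 5 3 diff2).codRestrict _ fun x =>
    Subtype.ext (LinearMap.congr_fun B.diff1_comp_diff2 x)

/-- The third differential as a map onto the cycles of degree `2`. -/
noncomputable def cover3 : (Fin 6 → E) →ₗ[E] LinearMap.ker B.cover2 :=
  (B.chainMap 6 5 diff3).codRestrict _ fun x =>
    Subtype.ext (LinearMap.congr_fun B.diff2_comp_diff3 x)

/-- The fourth differential as a map to the cycles of degree `3`; it is not surjective. -/
noncomputable def toCycles3 : (Fin 6 → E) →ₗ[E] LinearMap.ker B.cover3 :=
  (B.chainMap 6 6 diff4).codRestrict _ fun x =>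
    Subtype.ext (LinearMap.congr_fun B.diff3_comp_diff4 x)

theorem cover1_surjective : Function.Surjective B.cover1 := fun x => by
  obtain ⟨y, hy⟩ := B.exists_diff1_eq x.2
  exact ⟨y, Subtype.ext hy⟩

theorem cover2_surjective : Function.Surjective B.cover2 := fun x => by
  obtain ⟨y, hy⟩ := B.exists_diff2_eq (congrArg Subtype.val x.2)
  exact ⟨y, Subtype.ext hy⟩

theorem cover3_surjective : Function.Surjective B.cover3 := fun x => by
  obtain ⟨y, hy⟩ := B.exists_diff3_eq (congrArg Subtype.val x.2)
  exact ⟨y, Subtype.ext hy⟩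

theorem diff3_apply_ker_cover3 (x : LinearMap.ker B.cover3) : B.chainMap 6 5 diff3 x.1 = 0 :=
  congrArg Subtype.val x.2

theorem cover1_comp_diff2 : B.cover1 ∘ₗ B.chainMap 5 3 diff2 = 0 :=
  LinearMap.ext fun x => Subtype.ext (LinearMap.congr_fun B.diff1_comp_diff2 x)

theorem cover2_comp_diff3 : B.cover2 ∘ₗ B.chainMap 6 5 diff3 = 0 :=
  LinearMap.ext fun x => Subtype.ext (LinearMap.congr_fun B.diff2_comp_diff3 x)

theorem cover3_comp_diff4 : B.cover3 ∘ₗ B.chainMap 6 6 diff4 = 0 :=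
  LinearMap.ext fun x => Subtype.ext (LinearMap.congr_fun B.diff3_comp_diff4 x)

variable [HasExt.{w} (ModuleCat.{u} E)]

/-- The class of the truncation of length `1` of the Koszul bimodule complex. -/
noncomputable def truncClass1 : ModuleExt.{w} E M (LinearMap.ker B.aug) 1 :=
  (ofLinear LinearMap.id).comp (syzygyClass B.aug B.aug_surjective) (rfl : 0 + 1 = 0 + 1)

/-- The class of the truncation of length `2` of the Koszul bimodule complex. -/
noncomputable def truncClass2 : ModuleExt.{w} E M (LinearMap.ker B.cover1) 2 :=
  B.truncClass1.comp (syzygyClass B.cover1 B.cover1_surjective) (rfl : 1 + 1 = 1 + 1)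

/-- The class of the truncation of length `3` of the Koszul bimodule complex. -/
noncomputable def truncClass3 : ModuleExt.{w} E M (LinearMap.ker B.cover2) 3 :=
  B.truncClass2.comp (syzygyClass B.cover2 B.cover2_surjective) (rfl : 2 + 1 = 2 + 1)

/-- The class of the truncation of length `4` of the Koszul bimodule complex. -/
noncomputable def truncClass4 : ModuleExt.{w} E M (LinearMap.ker B.cover3) 4 :=
  B.truncClass3.comp (syzygyClass B.cover3 B.cover3_surjective) (rfl : 3 + 1 = 3 + 1)

theorem shiftsDegree_truncClass1 : ShiftsDegree (B.truncClass1 : ModuleExt.{w} E M _ 1) :=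
  shiftsDegree_id.comp_syzygyClass

theorem shiftsDegree_truncClass2 : ShiftsDegree (B.truncClass2 : ModuleExt.{w} E M _ 2) :=
  B.shiftsDegree_truncClass1.comp_syzygyClass

theorem shiftsDegree_truncClass3 : ShiftsDegree (B.truncClass3 : ModuleExt.{w} E M _ 3) :=
  B.shiftsDegree_truncClass2.comp_syzygyClass

theorem shiftsDegree_truncClass4 : ShiftsDegree (B.truncClass4 : ModuleExt.{w} E M _ 4) :=
  B.shiftsDegree_truncClass3.comp_syzygyClass

theorem represents0_cochainMap (c : Fin 0 → M) :
    Represents (ofLinear.{w} (LinearMap.id : M →ₗ[E] M)) B.aug (B.cochainMap 0 1 [] c) 0 := by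
  rw [Subsingleton.elim c 0, map_zero]
  exact Represents.zero

theorem represents1_cochainMap (c : Fin 1 → M) :
    Represents.{w} B.truncClass1 B.cover1 (B.cochainMap 1 3 diff1 c) 0 :=
  represents_precomp_zero (d := B.cover1) rfl c

theorem represents2_cochainMap (c : Fin 3 → M) :
    Represents.{w} B.truncClass2 B.cover2 (B.cochainMap 3 5 diff2 c) 0 :=
  represents_precomp_zero (d := B.cover2) rfl c

theorem represents3_cochainMap (c : Fin 5 → M) :
    Represents.{w} B.truncClass3 B.cover3 (B.cochainMap 5 6 diff3 c) 0 :=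
  represents_precomp_zero (d := B.cover3) rfl c

theorem represents4_cochainMap (c : Fin 6 → M) :
    Represents.{w} B.truncClass4 B.toCycles3 (B.cochainMap 6 6 diff4 c) 0 :=
  represents_precomp_zero (d := B.toCycles3) rfl c

theorem exists_eq_cochainMap_of_represents1 {c : Fin 3 → M}
    (h : Represents.{w} B.truncClass1 B.cover1 c 0) : ∃ c', c = B.cochainMap 1 3 diff1 c' :=
  shiftsDegree_id.exists_eq_precomp (d := B.cover1) rfl h

theorem exists_eq_cochainMap_of_represents2 {c : Fin 5 → M}
    (h : Represents.{w} B.truncClass2 B.cover2 c 0) : ∃ c', c = B.cochainMap 3 5 diff2 c' :=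
  B.shiftsDegree_truncClass1.exists_eq_precomp (d := B.cover2) rfl h

theorem exists_eq_cochainMap_of_represents3 {c : Fin 6 → M}
    (h : Represents.{w} B.truncClass3 B.cover3 c 0) : ∃ c', c = B.cochainMap 5 6 diff3 c' :=
  B.shiftsDegree_truncClass2.exists_eq_precomp (d := B.cover3) rfl h

end WordBases

/-! ### The generators and their multiplication -/

/-- The central elements `ab + ba`, `ab + bc - ac` and `abac`, acting from the left. -/
def gens0 : Fin 3 → IntComb :=
  ![[(1, 48), (1, 72)], [(1, 48), (1, 60), (-1, 84)], [(1, 132)]]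

/-- The generators of degree `1`, as derivations. -/
def gens1 : Fin 5 → IntComb :=
  ![[(1, 1), (1, 14), (1, 27)], [(-1, 8), (1, 9)], [(1, 10)], [(1, 21)], [(1, 32)]]

/-- The generators of degree `2`, as cochains. -/
def gens2 : Fin 4 → IntComb := ![[(1, 0)], [(1, 12)], [(1, 24)], [(1, 36), (1, 48)]]

/-- The generator of degree `3`, as a cochain. -/
def gen3 : IntComb := [(1, 37), (1, 50), (1, 63)]

/-- The components from degree `2` to degree `0` of chain maps which lift `gens2`. -/
def quadLift0 : Fin 4 → List IntComb := ![
  [[(1, 0)], [], [], [], []],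
  [[], [(1, 0)], [], [], []],
  [[], [], [(1, 0)], [], []],
  [[], [], [], [(1, 0)], [(1, 0)]]]

/-- The components from degree `3` to degree `1` of chain maps which lift `gens2`. -/
def quadLift1 : Fin 4 → List IntComb := ![
  [[(1, 0)], [], [], [(1, 0)], [(1, 144)], [(1, 288)]],
  [[], [(1, 144)], [], [(1, 0)], [(1, 144)], [(1, 288)]],
  [[], [], [(1, 288)], [(1, 0)], [(1, 144)], [(1, 288)]],
  [[], [], [], [(1, 144), (1, 288)], [(1, 0), (1, 288)], [(1, 0), (1, 144)]]]

/-- The components from degree `4` to degree `2` of chain maps which lift `gens2`. -/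
def quadLift2 : Fin 4 → List IntComb := ![
  [[(1, 0)], [], [], [(1, 0), (1, 144), (1, 288)], [(1, 432)], [(1, 576)]],
  [[], [(1, 144)], [], [(1, 0), (1, 144), (1, 288)], [(1, 432)], [(1, 576)]],
  [[], [], [(1, 288)], [(1, 0), (1, 144), (1, 288)], [(1, 432)], [(1, 576)]],
  [[], [], [], [(1, 432), (1, 576)], [(1, 0), (1, 144), (1, 288), (1, 576)],
    [(1, 0), (1, 144), (1, 288), (1, 432)]]]

/-- The component at the differential `D` of a chain map which lifts the derivation with the values
`c` on the letters: every letter acting from the left is replaced by its value under `c`, up to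
the sign `s`. -/
def derivationLift (s : ℤ) (D : List IntComb) (c : IntComb) : List IntComb :=
  D.map fun row => row.flatMap fun p => if Nat.beq (p.2 % 12) 0 then
    (c.filter fun q => Nat.beq (q.2 / 12 + 1) (p.2 % 144 / 12)).map fun q =>
      (s * p.1 * q.1, p.2 / 144 * 144 + q.2 % 12 * 12) else []

section ClassLifts

variable {E M N N' X X' : Type u} [Ring E] [AddCommGroup M] [Module E M] [AddCommGroup N]
  [Module E N] [AddCommGroup N'] [Module E N'] [AddCommGroup X] [Module E X] [AddCommGroup X']
  [Module E X'] [HasExt.{w} (ModuleCat.{u} E)] {m n p : ℕ}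

/-- The map `F` of projective modules covers a map of syzygy modules through which the extension `x`
carries the class `cl'` of a truncated resolution to the class `cl`. -/
def IsLift (x : ModuleExt.{w} E M M m) (cl' : ModuleExt.{w} E M N' p) (g' : X' →ₗ[E] N')
    (cl : ModuleExt.{w} E M N n) (g : X →ₗ[E] N) (F : X' →ₗ[E] X) (h : m + n = p) : Prop :=
  ∃ f : N' →ₗ[E] N, f ∘ₗ g' = g ∘ₗ F ∧ cl'.comp (ofLinear f) (add_zero p) = x.comp cl h

variable {x : ModuleExt.{w} E M M m} {cl' : ModuleExt.{w} E M N' p} {g' : X' →ₗ[E] N'}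
  {cl : ModuleExt.{w} E M N n} {g : X →ₗ[E] N} {F : X' →ₗ[E] X} {h : m + n = p}

theorem Represents.isLift {r : ℕ} {g' : (Fin r → E) →ₗ[E] N'} {g : X →ₗ[E] M}
    {F : (Fin r → E) →ₗ[E] X} {c : Fin r → M} {x : ModuleExt.{w} E M M p}
    (hx : Represents cl' g' c x) (hF : freeMap c = g ∘ₗ F) :
    IsLift x cl' g' (ofLinear LinearMap.id) g F (add_zero p) := by
  obtain ⟨φ, hφ, rfl⟩ := hx
  exact ⟨φ, hφ.trans hF, (comp_ofLinear_id _).symm⟩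

theorem IsLift.comp_syzygyClass (hF : IsLift x cl' g' cl g F h) (hg' : Function.Surjective g')
    (hg : Function.Surjective g) {Y Y' : Type u} [AddCommGroup Y] [Module E Y] [AddCommGroup Y']
    [Module E Y'] {d' : Y' →ₗ[E] LinearMap.ker g'} {d : Y →ₗ[E] LinearMap.ker g} {G : Y' →ₗ[E] Y}
    (hG : (LinearMap.ker g).subtype ∘ₗ d ∘ₗ G = F ∘ₗ (LinearMap.ker g').subtype ∘ₗ d') :
    IsLift x (cl'.comp (syzygyClass g' hg') (rfl : p + 1 = p + 1)) d'
      (cl.comp (syzygyClass g hg) (rfl : n + 1 = n + 1)) d G (by lia) := by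
  obtain ⟨f, hf, hcl⟩ := hF
  exact ⟨kerMap F f hf, LinearMap.ext fun v => Subtype.ext (LinearMap.congr_fun hG.symm v),
    comp_syzygyClass_comp_kerMap h hcl F hf⟩

end ClassLifts

namespace WordBases

variable {k : Type*} {E M : Type u} [CommRing k] [Ring E] [Algebra k E] [AddCommGroup M]
  [Module k M] [Module E M] (B : WordBases k E M)

theorem commute_gens0 (i : Fin 3) (x : E) : Commute (B.envElem (gens0 i)) x :=
  B.commute_envElem (by revert i; decide +kernel) x

theorem freeMap_cochain_unit : freeMap (B.cochain 1 [(1, 0)]) = B.aug := by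
  have hunit : B.cochain 1 [(1, 0)] = fun _ => vec B.basis 0 := by
    funext w
    rw [cochain, eval_cons, eval_nil, add_zero, one_smul, cochainBasis, vec_powBasis]
    simp
  rw [hunit, aug]

theorem represents_one [HasExt.{w} (ModuleCat.{u} E)] :
    Represents.{w} (ofLinear (LinearMap.id : M →ₗ[E] M)) B.aug
    (B.cochain 1 [(1, 0)]) (ofLinear LinearMap.id) :=
  ⟨LinearMap.id, by rw [freeMap_cochain_unit, LinearMap.id_comp], by rw [comp_ofLinear_id]⟩

variable [IsScalarTower k E M]

theorem exists_comp_cover3_eq {c : Fin 6 → M} (hc : B.cochainMap 6 6 diff4 c = 0) :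
    ∃ φ : LinearMap.ker B.cover2 →ₗ[E] M, φ ∘ₗ B.cover3 = freeMap c := by
  refine exists_comp_eq_of_surjective B.cover3_surjective (freeMap c) fun x hx => ?_
  obtain ⟨y, hxy⟩ := B.exists_diff4_add_cycleMap_eq (congrArg Subtype.val hx)
  have hy : freeMap c (B.chainMap 6 6 diff4 y) = 0 := by
    rw [← LinearMap.comp_apply, ← freeMap_cochainMap, hc, freeMap_zero, LinearMap.zero_apply]
  rw [LinearMap.mem_ker, ← hxy, map_add, hy, zero_add]
  exact LinearMap.congr_fun (B.freeMap_comp_cycleMap hc) _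

/-- The projection of the cycles of degree `3` onto the homology, which is the module itself. -/
noncomputable def homologyProj : LinearMap.ker B.cover3 →ₗ[E] M where
  toFun x := B.cycleCoeff x.1
  map_add' _ _ := map_add B.cycleCoeff _ _
  map_smul' a x := by
    obtain ⟨y, hy⟩ := B.exists_diff4_add_cycleMap_eq (B.diff3_apply_ker_cover3 x)
    have h (y z) : B.cycleCoeff (B.chainMap 6 6 diff4 y + B.cycleMap z) = B.aug z := by
      rw [map_add, cycleCoeff_diff4, cycleCoeff_cycleMap, zero_add]
    rw [RingHom.id_apply, Submodule.coe_smul]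
    conv_lhs => rw [← hy, smul_add, ← map_smul, ← map_smul, h, map_smul, aug_augSection]

theorem homologyProj_apply (x : LinearMap.ker B.cover3) : B.homologyProj x = B.cycleCoeff x.1 := rfl

theorem homologyProj_surjective : Function.Surjective B.homologyProj := fun m =>
  ⟨⟨B.cycleMap (B.augSection m), Subtype.ext (LinearMap.congr_fun B.diff3_comp_cycleMap _)⟩, by
    rw [homologyProj_apply, cycleCoeff_cycleMap, aug_augSection]⟩

/-- The module of boundaries of degree `3`. It is not reducible to a kernel: unifying the instances
on submodules of submodules is costly. -/
def Boundaries : Type u := LinearMap.ker B.homologyProj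

noncomputable instance : AddCommGroup B.Boundaries :=
  inferInstanceAs (AddCommGroup (LinearMap.ker B.homologyProj))

noncomputable instance : Module E B.Boundaries :=
  inferInstanceAs (Module E (LinearMap.ker B.homologyProj))

/-- The inclusion of the boundaries of degree `3` in the cycles. -/
noncomputable def boundariesSubtype : B.Boundaries →ₗ[E] LinearMap.ker B.cover3 :=
  (LinearMap.ker B.homologyProj).subtype

/-- The corestriction to the boundaries of degree `3` of a map to the cycles. -/
noncomputable def codRestrictBoundaries {N : Type*} [AddCommGroup N] [Module E N]
    (f : N →ₗ[E] LinearMap.ker B.cover3) (h : ∀ x, B.homologyProj (f x) = 0) :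
    N →ₗ[E] B.Boundaries :=
  f.codRestrict (LinearMap.ker B.homologyProj) h

/-- The fourth differential as a map onto the boundaries of degree `3`. -/
noncomputable def cover4 : (Fin 6 → E) →ₗ[E] B.Boundaries :=
  B.codRestrictBoundaries B.toCycles3 B.cycleCoeff_diff4

theorem boundariesSubtype_comp_cover4 : B.boundariesSubtype ∘ₗ B.cover4 = B.toCycles3 := rfl

theorem cover4_surjective : Function.Surjective B.cover4 := fun x => by
  obtain ⟨y, hy⟩ := B.exists_diff4_add_cycleMap_eq (B.diff3_apply_ker_cover3 x.1)
  have hx : B.cycleCoeff x.1.1 = 0 := x.2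
  rw [hx, map_zero, map_zero, add_zero] at hy
  exact ⟨y, Subtype.ext (Subtype.ext hy)⟩

theorem cover4_comp_diff5 : B.cover4 ∘ₗ B.chainMap 6 6 diff5 = 0 :=
  LinearMap.ext fun x => Subtype.ext (Subtype.ext (LinearMap.congr_fun B.diff4_comp_diff5 x))

/-- The fifth differential as a map onto the cycles of degree `4`. -/
noncomputable def cover5 : (Fin 6 → E) →ₗ[E] LinearMap.ker B.cover4 :=
  (B.chainMap 6 6 diff5).codRestrict _ (LinearMap.congr_fun B.cover4_comp_diff5)

theorem cover5_surjective : Function.Surjective B.cover5 := fun x => by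
  obtain ⟨y, hy⟩ := B.exists_diff5_eq (congrArg (fun v => v.1.1) x.2)
  exact ⟨y, Subtype.ext hy⟩

variable [HasExt.{w} (ModuleCat.{u} E)]

theorem exists_represents1 {c : Fin 3 → M} (hc : B.cochainMap 3 5 diff2 c = 0) :
    ∃ x, Represents.{w} B.truncClass1 B.cover1 c x :=
  B.exists_represents_of_cochainMap_eq_zero B.cover1_surjective
    (fun _ hx => B.exists_diff2_eq (congrArg Subtype.val hx)) hc

theorem exists_represents2 {c : Fin 5 → M} (hc : B.cochainMap 5 6 diff3 c = 0) :
    ∃ x, Represents.{w} B.truncClass2 B.cover2 c x :=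
  B.exists_represents_of_cochainMap_eq_zero B.cover2_surjective
    (fun _ hx => B.exists_diff3_eq (congrArg Subtype.val hx)) hc

theorem exists_represents3 {c : Fin 6 → M} (hc : B.cochainMap 6 6 diff4 c = 0) :
    ∃ x, Represents.{w} B.truncClass3 B.cover3 c x := by
  obtain ⟨φ, hφ⟩ := B.exists_comp_cover3_eq hc
  exact ⟨_, φ, hφ, rfl⟩

theorem exists_represents_gens1 (s : Fin 5) :
    ∃ x, Represents.{w} B.truncClass1 B.cover1 (B.cochain 3 (gens1 s)) x :=
  B.exists_represents1 (B.cochainMap_cochain_eq_zero (by revert s; decide +kernel))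

theorem exists_represents_gens2 (t : Fin 4) :
    ∃ x, Represents.{w} B.truncClass2 B.cover2 (B.cochain 5 (gens2 t)) x :=
  B.exists_represents2 (B.cochainMap_cochain_eq_zero (by revert t; decide +kernel))

theorem exists_represents_gen3 :
    ∃ x, Represents.{w} B.truncClass3 B.cover3 (B.cochain 6 gen3) x :=
  B.exists_represents3 (B.cochainMap_cochain_eq_zero (by decide +kernel))

/-- The generators of degree `0`, called `X₁`, `X₂`, `X₃` in the literature. -/
noncomputable def x0 (i : Fin 3) : ModuleExt.{w} E M M 0 :=
  ofLinear (centralSMul (B.commute_gens0 i) M)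

/-- The generators `X₄`, …, `X₈` of degree `1`. -/
noncomputable def x1 (s : Fin 5) : ModuleExt.{w} E M M 1 := (B.exists_represents_gens1 s).choose

/-- The generators `X₉`, …, `X₁₂` of degree `2`. -/
noncomputable def x2 (t : Fin 4) : ModuleExt.{w} E M M 2 := (B.exists_represents_gens2 t).choose

/-- The generator `X₁₃` of degree `3`. -/
noncomputable def x3 : ModuleExt.{w} E M M 3 := B.exists_represents_gen3.choose

/-- The generator `X₁₄` of degree `4`. -/
noncomputable def x4 : ModuleExt.{w} E M M 4 :=
  B.truncClass4.comp (ofLinear B.homologyProj) (add_zero 4)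

theorem represents_x1 (s : Fin 5) :
    Represents.{w} B.truncClass1 B.cover1 (B.cochain 3 (gens1 s)) (B.x1 s) :=
  (B.exists_represents_gens1 s).choose_spec

theorem represents_x2 (t : Fin 4) :
    Represents.{w} B.truncClass2 B.cover2 (B.cochain 5 (gens2 t)) (B.x2 t) :=
  (B.exists_represents_gens2 t).choose_spec

theorem represents_x3 : Represents.{w} B.truncClass3 B.cover3 (B.cochain 6 gen3) B.x3 :=
  B.exists_represents_gen3.choose_spec

section Lifts

variable {B}

theorem _root_.FominKirillov.IsLift.represents_comp {N N' : Type u} [AddCommGroup N] [Module E N]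
    [AddCommGroup N'] [Module E N'] {m n p r r' : ℕ} {x : ModuleExt.{w} E M M m}
    {cl' : ModuleExt.{w} E M N' p} {g' : (Fin r' → E) →ₗ[E] N'} {cl : ModuleExt.{w} E M N n}
    {g : (Fin r → E) →ₗ[E] N} {W : List IntComb} {h : m + n = p}
    (hW : IsLift x cl' g' cl g (B.chainMap r' r W) h) {c : Fin r → M} {y : ModuleExt.{w} E M M n}
    (hy : Represents cl g c y) : Represents cl' g' (B.cochainMap r r' W c) (x.comp y h) := by
  obtain ⟨φ, hφ, rfl⟩ := hy
  obtain ⟨f, hf, hcl⟩ := hW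
  refine ⟨φ ∘ₗ f, ?_, ?_⟩
  · rw [freeMap_cochainMap, ← hφ, LinearMap.comp_assoc, hf, LinearMap.comp_assoc]
  · rw [← comp_ofLinear_comp_ofLinear, hcl, Ext.comp_assoc _ _ _ h (add_zero n) (by lia)]

theorem _root_.FominKirillov.Represents.isLift_aug {N : Type u} [AddCommGroup N] [Module E N]
    {n r : ℕ} {cl : ModuleExt.{w} E M N n} {g : (Fin r → E) →ₗ[E] N} {L : IntComb}
    {x : ModuleExt.{w} E M M n} (hx : Represents cl g (B.cochain r L) x) {W : List IntComb}
    (h : isZero (sub (substBelow (1 * 12) (precompTable r W) [(1, 0)]) L)) :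
    IsLift x cl g (ofLinear LinearMap.id) B.aug (B.chainMap r 1 W) (add_zero n) :=
  hx.isLift (by rw [← B.cochainMap_cochain h, freeMap_cochainMap, freeMap_cochain_unit])

theorem isLift_x2_quadLift0 (t : Fin 4) :
    IsLift.{w} (B.x2 t) B.truncClass2 B.cover2 (ofLinear LinearMap.id) B.aug
      (B.chainMap 5 1 (quadLift0 t)) rfl :=
  (B.represents_x2 t).isLift_aug (by revert t; decide +kernel)

theorem isLift_x2_quadLift1 (t : Fin 4) :
    IsLift.{w} (B.x2 t) B.truncClass3 B.cover3 B.truncClass1 B.cover1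
      (B.chainMap 6 3 (quadLift1 t)) rfl :=
  (isLift_x2_quadLift0 t).comp_syzygyClass _ _
    (B.chainMap_comp_chainMap (D₂ := diff1) (D₃ := diff3) (by revert t; decide +kernel))

theorem isLift_x2_quadLift2 (t : Fin 4) :
    IsLift.{w} (B.x2 t) B.truncClass4 B.toCycles3 B.truncClass2 B.cover2
      (B.chainMap 6 5 (quadLift2 t)) rfl :=
  (isLift_x2_quadLift1 t).comp_syzygyClass _ _
    (B.chainMap_comp_chainMap (D₂ := diff2) (D₃ := diff4) (by revert t; decide +kernel))

theorem isLift_x1_derivationLift0 (s : Fin 5) :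
    IsLift.{w} (B.x1 s) B.truncClass1 B.cover1 (ofLinear LinearMap.id) B.aug
      (B.chainMap 3 1 (derivationLift 1 diff1 (gens1 s))) rfl :=
  (B.represents_x1 s).isLift_aug (by revert s; decide +kernel)

theorem isLift_x1_derivationLift1 (s : Fin 5) :
    IsLift.{w} (B.x1 s) B.truncClass2 B.cover2 B.truncClass1 B.cover1
      (B.chainMap 5 3 (derivationLift (-1) diff2 (gens1 s))) rfl :=
  (isLift_x1_derivationLift0 s).comp_syzygyClass _ _
    (B.chainMap_comp_chainMap (D₂ := diff1) (D₃ := diff2) (by revert s; decide +kernel))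

theorem isLift_x1_derivationLift2 (s : Fin 5) :
    IsLift.{w} (B.x1 s) B.truncClass3 B.cover3 B.truncClass2 B.cover2
      (B.chainMap 6 5 (derivationLift 1 diff3 (gens1 s))) rfl :=
  (isLift_x1_derivationLift1 s).comp_syzygyClass _ _
    (B.chainMap_comp_chainMap (D₂ := diff2) (D₃ := diff3) (by revert s; decide +kernel))

end Lifts

end WordBases

/-! ### The generators generate -/

/-- A graded subalgebra of the algebra of self-extensions of `M`. -/
structure ExtSubalgebra (k : Type*) (E M : Type u) [Field k] [Ring E] [Algebra k E] [AddCommGroup M]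
    [Module E M] [HasExt.{w} (ModuleCat.{u} E)] where
  /-- The homogeneous component of degree `n`. -/
  deg (n : ℕ) : Submodule k (ModuleExt.{w} E M M n)
  one_mem : ofLinear LinearMap.id ∈ deg 0
  comp_mem {m n p : ℕ} (h : m + n = p) {x : ModuleExt.{w} E M M m} {y : ModuleExt.{w} E M M n} :
    x ∈ deg m → y ∈ deg n → x.comp y h ∈ deg p

theorem ExtSubalgebra.comp_mem_deg {k : Type*} {E M N : Type u} [Field k] [Ring E] [Algebra k E]
    [AddCommGroup M] [Module E M] [AddCommGroup N] [Module E N] [HasExt.{w} (ModuleCat.{u} E)]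
    (S : ExtSubalgebra.{w} k E M) {m n p q : ℕ} {x : ModuleExt.{w} E M N m}
    {y : ModuleExt.{w} E N M n} (hp : m + n = p) (hq : m + n = q) (h : x.comp y hp ∈ S.deg p) :
    x.comp y hq ∈ S.deg q := by
  subst hp hq
  exact h

/-- The lift of the sum of the first two members minus the third member of a family of
lifts. -/
def periodLift (Y : Fin 4 → List IntComb) : List IntComb :=
  List.zipWith (· ++ ·) (Y 0) (List.zipWith (· ++ ·) (Y 1) ((Y 2).map (scale (-1))))

namespace WordBases

section PeriodMaps

variable {k : Type*} {E M : Type u} [CommRing k] [Ring E] [Algebra k E] [AddCommGroup M]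
  [Module k M] [Module E M] (B : WordBases k E M)

theorem diff1_comp_periodLift1 :
    B.chainMap 3 1 diff1 ∘ₗ B.chainMap 6 3 (periodLift quadLift1) =
      B.chainMap 5 1 (periodLift quadLift0) ∘ₗ B.chainMap 6 5 diff3 :=
  B.chainMap_comp_chainMap (by decide +kernel)

theorem diff2_comp_periodLift2 :
    B.chainMap 5 3 diff2 ∘ₗ B.chainMap 6 5 (periodLift quadLift2) =
      B.chainMap 6 3 (periodLift quadLift1) ∘ₗ B.chainMap 6 6 diff4 :=
  B.chainMap_comp_chainMap (by decide +kernel)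

theorem diff3_comp_contraction3 :
    B.chainMap 6 5 diff3 ∘ₗ B.chainMap 6 6 contraction3 =
      B.chainMap 6 5 (periodLift quadLift2) ∘ₗ B.chainMap 6 6 diff5 :=
  B.chainMap_comp_chainMap (by decide +kernel)

variable [IsScalarTower k E M]

theorem diff4_apply_ker_cover4 (x : LinearMap.ker B.cover4) : B.chainMap 6 6 diff4 x.1 = 0 :=
  congrArg (fun v => v.1.1) x.2

theorem diff5_apply_ker_cover5 (x : LinearMap.ker B.cover5) : B.chainMap 6 6 diff5 x.1 = 0 :=
  congrArg Subtype.val x.2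

/-- The action of the periodicity element on the syzygies of degree `5`. -/
noncomputable def periodMap3 : LinearMap.ker B.cover4 →ₗ[E] LinearMap.ker B.cover2 :=
  (B.chainMap 6 5 (periodLift quadLift2)).restrict fun x hx => Subtype.ext <| by
    have h := LinearMap.congr_fun B.diff2_comp_periodLift2 x
    rwa [LinearMap.comp_apply, LinearMap.comp_apply, B.diff4_apply_ker_cover4 ⟨x, hx⟩,
      map_zero] at h

/-- The contraction from the cycles of degree `5` to the boundaries of degree `3`. -/
noncomputable def toBoundaries : LinearMap.ker B.cover5 →ₗ[E] B.Boundaries :=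
  B.codRestrictBoundaries ((B.chainMap 6 6 contraction3).restrict fun x hx => Subtype.ext <| by
    have h := LinearMap.congr_fun B.diff3_comp_contraction3 x
    rwa [LinearMap.comp_apply, LinearMap.comp_apply, B.diff5_apply_ker_cover5 ⟨x, hx⟩,
      map_zero] at h) fun x => B.cycleCoeff_contraction3 (B.diff5_apply_ker_cover5 x)

/-- The contraction from the boundaries of degree `3` to the cycles of degree `5`. -/
noncomputable def ofBoundaries : B.Boundaries →ₗ[E] LinearMap.ker B.cover5 :=
  (B.chainMap 6 6 contraction3 ∘ₗ (LinearMap.ker B.cover3).subtype ∘ₗ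
    B.boundariesSubtype).codRestrict _ fun v => by
      obtain ⟨y, rfl⟩ := B.cover4_surjective v
      exact Subtype.ext (LinearMap.congr_fun B.diff5_comp_contraction3_comp_diff4 y)

theorem ofBoundaries_comp_toBoundaries : B.ofBoundaries ∘ₗ B.toBoundaries = LinearMap.id :=
  LinearMap.ext fun v =>
    Subtype.ext (LinearMap.congr_fun B.contraction3_comp_contraction3 v.1)

theorem periodMap3_comp_cover5 :
    B.periodMap3 ∘ₗ B.cover5 = B.cover3 ∘ₗ B.chainMap 6 6 contraction3 :=
  LinearMap.ext fun v => Subtype.ext (LinearMap.congr_fun B.diff3_comp_contraction3.symm v)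

theorem exists_comp_periodMap3_eq (ψ : LinearMap.ker B.cover4 →ₗ[E] M) :
    ∃ φ : LinearMap.ker B.cover2 →ₗ[E] M, φ ∘ₗ B.periodMap3 = ψ := by
  let f : (Fin 6 → E) →ₗ[E] M := ψ ∘ₗ B.cover5 ∘ₗ B.chainMap 6 6 contraction3
  have hf : f ∘ₗ B.chainMap 6 6 diff4 = 0 := LinearMap.ext fun x => by
    have h : B.cover5 (B.chainMap 6 6 contraction3 (B.chainMap 6 6 diff4 x)) = 0 :=
      Subtype.ext (LinearMap.congr_fun B.diff5_comp_contraction3_comp_diff4 x)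
    simp only [f, LinearMap.comp_apply, h, map_zero, LinearMap.zero_apply]
  obtain ⟨φ, hφ⟩ := B.exists_comp_cover3_eq (c := fun w => f (Pi.single w 1)) <|
    freeMap_injective (E := E) (by rw [freeMap_cochainMap, freeMap_eta, hf, freeMap_zero])
  rw [freeMap_eta] at hφ
  refine ⟨φ, (LinearMap.cancel_right B.cover5_surjective).1 ?_⟩
  rw [LinearMap.comp_assoc, periodMap3_comp_cover5,
    ← LinearMap.comp_assoc, hφ]
  simp only [f, LinearMap.comp_assoc, contraction3_comp_contraction3, LinearMap.comp_id]

theorem syzygyClass_cover5_comp_toBoundaries [HasExt.{w} (ModuleCat.{u} E)] :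
    (syzygyClass.{w} B.cover5 B.cover5_surjective).comp
        (ofLinear (B.boundariesSubtype ∘ₗ B.toBoundaries)) (add_zero 1) =
      (ofLinear B.periodMap3).comp (syzygyClass B.cover3 B.cover3_surjective) (zero_add 1) :=
  syzygyClass_comp_kerMap B.cover5_surjective B.cover3_surjective _ _
    B.periodMap3_comp_cover5

end PeriodMaps

variable {k : Type*} {E M : Type u} [Field k] [Ring E] [Algebra k E] [AddCommGroup M]
  [Module k M] [Module E M] [IsScalarTower k E M] {B : WordBases k E M}
  [HasExt.{w} (ModuleCat.{u} E)]

variable (B) in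
/-- The graded subalgebra `S` contains the fourteen generators. -/
structure ContainsGenerators (S : ExtSubalgebra.{w} k E M) : Prop where
  x0_mem : ∀ i, B.x0 i ∈ S.deg 0
  x1_mem : ∀ s, B.x1 s ∈ S.deg 1
  x2_mem : ∀ t, B.x2 t ∈ S.deg 2
  x3_mem : B.x3 ∈ S.deg 3
  x4_mem : B.x4 ∈ S.deg 4

theorem represents_x0_comp {N : Type u} [AddCommGroup N] [Module E N] {n r : ℕ}
    {cl : ModuleExt.{w} E M N n} {g : (Fin r → E) →ₗ[E] N} {L L' : IntComb}
    {x : ModuleExt.{w} E M M n} (hx : Represents cl g (B.cochain r L) x) {i : Fin 3}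
    (h : isZero (sub (substBelow (r * 12) (smulTable (gens0 i)) L) L')) :
    Represents cl g (B.cochain r L') ((B.x0 i).comp x (zero_add n)) := by
  rw [← B.envElem_smul_cochain h]
  exact hx.centralSMul_comp (B.commute_gens0 i)

theorem exists_mem_represents {N : Type u} [AddCommGroup N] [Module E N] {n r : ℕ}
    {cl : ModuleExt.{w} E M N n} {g : (Fin r → E) →ₗ[E] N} {ι : Type*} {gens : ι → IntComb}
    {x : ι → ModuleExt.{w} E M M n} (hx : ∀ s, Represents cl g (B.cochain r (gens s)) (x s))
    {S : Submodule k (ModuleExt.{w} E M M n)} (hxS : ∀ s, x s ∈ S)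
    (hx0S : ∀ i s, (B.x0 i).comp (x s) (zero_add n) ∈ S) {R : List IntComb}
    (hR : ∀ L ∈ R, ∃ s, L = gens s ∨ ∃ i,
      isZero (sub (substBelow (r * 12) (smulTable (gens0 i)) (gens s)) L)) :
    ∀ L ∈ R, ∃ x ∈ S, Represents cl g (B.cochain r L) x := by
  intro L hL
  obtain ⟨s, rfl | ⟨i, hi⟩⟩ := hR L hL
  · exact ⟨x s, hxS s, hx s⟩
  · exact ⟨_, hx0S i s, represents_x0_comp (hx s) hi⟩

theorem exists_mem_represents1 {S : Submodule k (ModuleExt.{w} E M M 1)} (hS : ∀ s, B.x1 s ∈ S)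
    (hS' : ∀ i s, (B.x0 i).comp (B.x1 s) (zero_add 1) ∈ S) :
    ∀ L ∈ cocycles1, ∃ x ∈ S, Represents B.truncClass1 B.cover1 (B.cochain 3 L) x :=
  exists_mem_represents B.represents_x1 hS hS' (by decide +kernel)

theorem exists_mem_represents2 {S : Submodule k (ModuleExt.{w} E M M 2)} (hS : ∀ t, B.x2 t ∈ S)
    (hS' : ∀ i t, (B.x0 i).comp (B.x2 t) (zero_add 2) ∈ S) :
    ∀ L ∈ cocycles2, ∃ x ∈ S, Represents B.truncClass2 B.cover2 (B.cochain 5 L) x :=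
  exists_mem_represents B.represents_x2 hS hS' (by decide +kernel)

theorem mem_of_x0_mem (h2 : IsUnit (2 : k)) {S : Submodule k (ModuleExt.{w} E M M 0)}
    (hone : ofLinear LinearMap.id ∈ S) (hS : ∀ i, B.x0 i ∈ S) (x : ModuleExt.{w} E M M 0) :
    x ∈ S :=
  (B.spansCocycles0 h2).mem shiftsDegree_id B.aug_surjective B.represents0_cochainMap
    B.aug_comp_diff1 S (exists_mem_represents (fun _ : Unit => B.represents_one) (fun _ => hone)
      (fun i _ => (comp_ofLinear_id (B.x0 i)).symm ▸ hS i) (by decide +kernel)) x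

theorem mem_of_x1_mem (h2 : IsUnit (2 : k)) {S : Submodule k (ModuleExt.{w} E M M 1)}
    (hS : ∀ s, B.x1 s ∈ S) (hS' : ∀ i s, (B.x0 i).comp (B.x1 s) (zero_add 1) ∈ S)
    (x : ModuleExt.{w} E M M 1) : x ∈ S :=
  (B.spansCocycles1 h2).mem B.shiftsDegree_truncClass1 B.cover1_surjective
    B.represents1_cochainMap B.cover1_comp_diff2 S (exists_mem_represents1 hS hS') x

theorem mem_of_x2_mem (h2 : IsUnit (2 : k)) {S : Submodule k (ModuleExt.{w} E M M 2)}
    (hS : ∀ t, B.x2 t ∈ S) (hS' : ∀ i t, (B.x0 i).comp (B.x2 t) (zero_add 2) ∈ S)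
    (x : ModuleExt.{w} E M M 2) : x ∈ S :=
  (B.spansCocycles2 h2).mem B.shiftsDegree_truncClass2 B.cover2_surjective
    B.represents2_cochainMap B.cover2_comp_diff3 S (exists_mem_represents2 hS hS') x

namespace ContainsGenerators

variable {S : ExtSubalgebra.{w} k E M}

theorem exists_represents3 (hS : B.ContainsGenerators S) : ∀ L ∈ cocycles3,
    ∃ x ∈ S.deg 3, Represents B.truncClass3 B.cover3 (B.cochain 6 L) x := by
  have hprod : ∀ L ∈ cocycles3, L = gen3 ∨ ∃ L' ∈ cocycles1, ∃ t,
      isZero (sub (substBelow (3 * 12) (precompTable 6 (quadLift1 t)) L') L) := by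
    decide +kernel
  intro L hL
  obtain rfl | ⟨L', hL', t, h⟩ := hprod L hL
  · exact ⟨_, hS.x3_mem, B.represents_x3⟩
  · obtain ⟨x, hxS, hx⟩ := exists_mem_represents1 hS.x1_mem
      (fun i s => S.comp_mem _ (hS.x0_mem i) (hS.x1_mem s)) L' hL'
    refine ⟨_, S.comp_mem rfl (hS.x2_mem t) hxS, ?_⟩
    rw [← B.cochainMap_cochain h]
    exact (isLift_x2_quadLift1 t).represents_comp hx

theorem exists_represents4 (hS : B.ContainsGenerators S) : ∀ L ∈ cocycles4,
    ∃ x ∈ S.deg 4, Represents B.truncClass4 B.toCycles3 (B.cochain 6 L) x := by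
  have hprod : ∀ L ∈ cocycles4, ∃ L' ∈ cocycles2, ∃ t,
      isZero (sub (substBelow (5 * 12) (precompTable 6 (quadLift2 t)) L') L) := by
    decide +kernel
  intro L hL
  obtain ⟨L', hL', t, h⟩ := hprod L hL
  obtain ⟨x, hxS, hx⟩ := exists_mem_represents2 hS.x2_mem
    (fun i t => S.comp_mem _ (hS.x0_mem i) (hS.x2_mem t)) L' hL'
  refine ⟨_, S.comp_mem rfl (hS.x2_mem t) hxS, ?_⟩
  rw [← B.cochainMap_cochain h]
  exact (isLift_x2_quadLift2 t).represents_comp hx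

theorem mem_deg3 (hS : B.ContainsGenerators S) (h6 : IsUnit (6 : k))
    (x : ModuleExt.{w} E M M 3) : x ∈ S.deg 3 :=
  (B.spansCocycles3 h6).mem B.shiftsDegree_truncClass3 B.cover3_surjective
    B.represents3_cochainMap B.cover3_comp_diff4 _ hS.exists_represents3 x

end ContainsGenerators

section Periodicity

variable (B) in
/-- The periodicity element. -/
noncomputable def periodElem : ModuleExt.{w} E M M 2 := B.x2 0 + B.x2 1 - B.x2 2

theorem represents_periodElem : Represents.{w} B.truncClass2 B.cover2
    (B.cochain 5 [(1, 0), (1, 12), (-1, 24)]) B.periodElem := by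
  have h := ((B.represents_x2 0).add (B.represents_x2 1)).add ((B.represents_x2 2).smul (-1 : k))
  convert h using 1
  · simp [cochain, gens2, add_assoc]
  · rw [neg_one_smul, periodElem, sub_eq_add_neg]

theorem ContainsGenerators.periodElem_mem {S : ExtSubalgebra.{w} k E M}
    (hS : B.ContainsGenerators S) : B.periodElem ∈ S.deg 2 :=
  (S.deg 2).sub_mem ((S.deg 2).add_mem (hS.x2_mem 0) (hS.x2_mem 1)) (hS.x2_mem 2)

theorem isLift_periodElem : IsLift.{w} B.periodElem B.truncClass4 B.toCycles3 B.truncClass2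
    B.cover2 (B.chainMap 6 5 (periodLift quadLift2)) rfl :=
  (((represents_periodElem).isLift_aug (by decide +kernel)).comp_syzygyClass _ _
    B.diff1_comp_periodLift1).comp_syzygyClass _ _ B.diff2_comp_periodLift2

/-- The periodicity element moves extensions of the syzygies of degree `3` up by one degree, to
extensions of the cycles of degree `3`. -/
theorem exists_truncClass4_comp_eq_periodElem_comp {m : ℕ}
    (z : ModuleExt.{w} E (LinearMap.ker B.cover2) M m) :
    ∃ y : ModuleExt.{w} E (LinearMap.ker B.cover3) M (m + 1),
      B.truncClass4.comp y rfl = B.periodElem.comp (B.truncClass3.comp z rfl)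
        (show 2 + (3 + m) = 4 + (m + 1) by lia) ∧
      (ofLinear B.boundariesSubtype).comp y (zero_add _) =
        (syzygyClass.{w} B.cover4 B.cover4_surjective).comp
          ((ofLinear.{w} B.periodMap3).comp z (zero_add m)) (add_comm 1 m) := by
  obtain ⟨χ, hχ, hcl⟩ := isLift_periodElem.{w} (B := B)
  have hker : (syzygyClass.{w} B.cover4 B.cover4_surjective).comp (ofLinear B.periodMap3)
      (add_zero 1) = (ofLinear (χ ∘ₗ B.boundariesSubtype)).comp
        (syzygyClass B.cover2 B.cover2_surjective) (zero_add 1) :=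
    syzygyClass_comp_kerMap B.cover4_surjective B.cover2_surjective _ _
      (by rw [LinearMap.comp_assoc, boundariesSubtype_comp_cover4, hχ])
  refine ⟨(ofLinear χ).comp ((syzygyClass B.cover2 B.cover2_surjective).comp z (add_comm 1 m))
    (zero_add _), ?_, ?_⟩
  · rw [← Ext.comp_assoc _ _ _ (add_zero 4) (zero_add _) (by lia), hcl,
      Ext.comp_assoc _ _ _ (rfl : 2 + 2 = 4) (show 2 + (m + 1) = 3 + m by lia) (by lia),
      ← Ext.comp_assoc _ _ _ (rfl : 2 + 1 = 3) (add_comm 1 m) (by lia)]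
    rfl
  · rw [ofLinear_comp_ofLinear_comp,
      ← Ext.comp_assoc _ _ _ (zero_add 1) (add_comm 1 m) (by lia), ← hker,
      Ext.comp_assoc _ _ _ (add_zero 1) (zero_add m) (by lia)]

end Periodicity

namespace ContainsGenerators

variable {S : ExtSubalgebra.{w} k E M}

theorem exists_extension0 (hS : B.ContainsGenerators S) (h6 : IsUnit (6 : k))
    (u : ModuleExt.{w} E B.Boundaries M 0) : ∃ y : ModuleExt.{w} E (LinearMap.ker B.cover3) M 0,
      B.truncClass4.comp y (add_zero 4) ∈ S.deg 4 ∧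
        (ofLinear B.boundariesSubtype).comp y (zero_add 0) = u := by
  obtain ⟨u, rfl⟩ := exists_eq_ofLinear u
  have hd : B.cochainMap 6 6 diff5 (fun w => u (B.cover4 (Pi.single w 1))) = 0 :=
    freeMap_injective (E := E) <| by
      rw [freeMap_cochainMap, freeMap_zero]
      exact (congrArg (· ∘ₗ _) (freeMap_eta (u ∘ₗ B.cover4))).trans <| by
        rw [LinearMap.comp_assoc, cover4_comp_diff5, LinearMap.comp_zero]
  obtain ⟨_, hxS, φ, hφ, rfl⟩ := (B.spansCocycles4 h6).exists_represents_mem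
    B.represents4_cochainMap (S.deg 4) hS.exists_represents4 hd
  refine ⟨ofLinear φ, hxS, ?_⟩
  rw [ofLinear_comp_ofLinear]
  congr 1
  refine (LinearMap.cancel_right B.cover4_surjective).1 ?_
  rw [LinearMap.comp_assoc, boundariesSubtype_comp_cover4, hφ]
  exact freeMap_eta (u ∘ₗ B.cover4)

theorem exists_extension1 (hS : B.ContainsGenerators S) (h6 : IsUnit (6 : k))
    (u : ModuleExt.{w} E B.Boundaries M 1) : ∃ y : ModuleExt.{w} E (LinearMap.ker B.cover3) M 1,
      B.truncClass4.comp y rfl ∈ S.deg 5 ∧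
        (ofLinear B.boundariesSubtype).comp y (zero_add 1) = u := by
  obtain ⟨u, rfl⟩ := exists_syzygyClass_comp B.cover4_surjective (add_zero 1) u
  obtain ⟨ψ, rfl⟩ := exists_eq_ofLinear u
  obtain ⟨φ, rfl⟩ := B.exists_comp_periodMap3_eq ψ
  obtain ⟨y, hy, hyu⟩ := exists_truncClass4_comp_eq_periodElem_comp (B := B) (ofLinear.{w} φ)
  refine ⟨y, ?_, ?_⟩
  · rw [hy]
    exact S.comp_mem _ hS.periodElem_mem (hS.mem_deg3 h6 _)
  · rw [hyu, ofLinear_comp_ofLinear]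

theorem exists_extension (hS : B.ContainsGenerators S) (h6 : IsUnit (6 : k)) (m : ℕ)
    (u : ModuleExt.{w} E B.Boundaries M m) : ∃ y : ModuleExt.{w} E (LinearMap.ker B.cover3) M m,
      B.truncClass4.comp y rfl ∈ S.deg (4 + m) ∧
        (ofLinear B.boundariesSubtype).comp y (zero_add m) = u := by
  induction m using Nat.twoStepInduction with
  | zero => exact hS.exists_extension0 h6 u
  | one => exact hS.exists_extension1 h6 u
  | more m ih _ =>
    obtain ⟨u, rfl⟩ := exists_syzygyClass_comp B.cover4_surjective
      (show 1 + (m + 1) = m + 2 by lia) u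
    obtain ⟨u, rfl⟩ := exists_syzygyClass_comp B.cover5_surjective (add_comm 1 m) u
    obtain ⟨y, hyS, hyu⟩ := ih ((ofLinear B.ofBoundaries).comp u (zero_add m))
    obtain ⟨y', hy', hyu'⟩ := exists_truncClass4_comp_eq_periodElem_comp (B := B)
      ((syzygyClass B.cover3 B.cover3_surjective).comp y (add_comm 1 m))
    refine ⟨y', ?_, ?_⟩
    · rw [hy']
      refine S.comp_mem _ hS.periodElem_mem ?_
      rw [← Ext.comp_assoc _ _ _ (rfl : 3 + 1 = 4) (by lia) (by lia)]
      exact S.comp_mem_deg _ _ hyS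
    · rw [hyu', ← Ext.comp_assoc _ _ _ (zero_add 1) (add_comm 1 m) (by lia),
        ← B.syzygyClass_cover5_comp_toBoundaries,
        Ext.comp_assoc _ _ _ (add_zero 1) (zero_add m) (by lia), ← ofLinear_comp_ofLinear_comp,
        hyu, ofLinear_comp_ofLinear_comp, ofBoundaries_comp_toBoundaries, ofLinear_id_comp]

theorem mem_deg (hS : B.ContainsGenerators S) (h6 : IsUnit (6 : k)) (n : ℕ)
    (x : ModuleExt.{w} E M M n) : x ∈ S.deg n := by
  have h2 : IsUnit (2 : k) := isUnit_of_dvd_unit ⟨3, by norm_num⟩ h6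
  induction n using Nat.strong_induction_on with
  | _ n ih =>
    match n with
    | 0 => exact mem_of_x0_mem h2 S.one_mem hS.x0_mem x
    | 1 =>
      exact mem_of_x1_mem h2 hS.x1_mem
        (fun i s => S.comp_mem _ (hS.x0_mem i) (hS.x1_mem s)) x
    | 2 =>
      exact mem_of_x2_mem h2 hS.x2_mem
        (fun i t => S.comp_mem _ (hS.x0_mem i) (hS.x2_mem t)) x
    | 3 => exact hS.mem_deg3 h6 x
    | m + 4 =>
      obtain ⟨x, rfl⟩ := B.shiftsDegree_truncClass4.exists_comp_eq (add_comm 4 m) x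
      obtain ⟨y, hyS, hy⟩ :=
        hS.exists_extension h6 m ((ofLinear B.boundariesSubtype).comp x (zero_add m))
      obtain ⟨z, hz⟩ := exists_of_subtype_comp_eq_zero B.homologyProj_surjective (x - y) <| by
        rw [sub_eq_add_neg, Ext.comp_add, Ext.comp_neg, ← sub_eq_add_neg, sub_eq_zero]
        exact hy.symm
      rw [← add_sub_cancel y x, Ext.comp_add, ← hz,
        ← Ext.comp_assoc _ _ _ (add_zero 4) (zero_add m) (by lia)]
      refine (S.deg _).add_mem ?_ (S.comp_mem _ hS.x4_mem (ih m (by lia) z))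
      exact S.comp_mem_deg _ _ hyS

end ContainsGenerators

end WordBases

/-! ### No generator is redundant -/

section Minimality

/-- Linear forms dual to the generators of degree `0`. -/
def dual0 : Fin 3 → IntComb := ![[(1, 6)], [(1, 5)], [(1, 11)]]

/-- Linear forms dual to the generators of degree `1`. -/
def dual1 : Fin 5 → IntComb :=
  ![[(1, 1)], [(-1, 8), (1, 22), (1, 33)], [(1, 10)], [(1, 21)], [(1, 32)]]

/-- Linear forms dual to the generators of degree `2`. -/
def dual2 (t : Fin 4) : IntComb := [(1, t * 12)]

/-- A linear form dual to the generator of degree `3`. -/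
def dual3 : IntComb := [(1, 37), (-1, 1), (-1, 14), (-1, 27)]

namespace WordBases

variable {k : Type*} {E M : Type*} [CommRing k] [Ring E] [Algebra k E] [AddCommGroup M] [Module k M]
  [Module E M] (B : WordBases k E M)

theorem linearForm_dual0_gens0 (i j : Fin 3) :
    linearForm (B.cochainBasis 1) (dual0 i)
      (B.cochain 1 (substBelow (1 * 12) (smulTable (gens0 j)) [(1, 0)])) =
        if i = j then 1 else 0 := by
  rw [cochain, linearForm_eval (n := if i = j then 1 else 0) (by revert i j; decide +kernel)]
  split_ifs <;> simp

theorem linearForm_dual0_unit (i : Fin 3) :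
    linearForm (B.cochainBasis 1) (dual0 i) (B.cochain 1 [(1, 0)]) = 0 := by
  rw [cochain, linearForm_eval (n := 0) (by revert i; decide +kernel), Int.cast_zero]

theorem linearForm_dual1_gens1 (s s' : Fin 5) :
    linearForm (B.cochainBasis 3) (dual1 s) (B.cochain 3 (gens1 s')) = if s = s' then 1 else 0 := by
  rw [cochain, linearForm_eval (n := if s = s' then 1 else 0) (by revert s s'; decide +kernel)]
  split_ifs <;> simp

theorem linearForm_dual2_gens2 (t t' : Fin 4) :
    linearForm (B.cochainBasis 5) (dual2 t) (B.cochain 5 (gens2 t')) = if t = t' then 1 else 0 := by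
  rw [cochain, linearForm_eval (n := if t = t' then 1 else 0) (by revert t t'; decide +kernel)]
  split_ifs <;> simp

theorem linearForm_dual3_gen3 : linearForm (B.cochainBasis 6) dual3 (B.cochain 6 gen3) = 1 := by
  rw [cochain, linearForm_eval (n := 1) (by decide +kernel), Int.cast_one]

end WordBases

variable {k : Type*} {E M : Type u} [Field k] [Ring E] [Algebra k E] [AddCommGroup M]
  [Module E M] [HasExt.{w} (ModuleCat.{u} E)]

/-- The graded submodule whose component of degree `d` is `P` and whose other components are
everything. -/
noncomputable def topExcept (d : ℕ) (P : Submodule k (ModuleExt.{w} E M M d)) :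
    ∀ n, Submodule k (ModuleExt.{w} E M M n) :=
  Function.update ⊤ d P

theorem mem_topExcept_self {d : ℕ} {P : Submodule k (ModuleExt.{w} E M M d)}
    {x : ModuleExt.{w} E M M d} : x ∈ topExcept d P d ↔ x ∈ P := by
  rw [topExcept, Function.update_self]

theorem mem_topExcept_of_ne {d n : ℕ} (h : n ≠ d) {P : Submodule k (ModuleExt.{w} E M M d)}
    (x : ModuleExt.{w} E M M n) : x ∈ topExcept d P n := by
  rw [topExcept, Function.update_of_ne h]
  trivial

/-- The graded subalgebra whose component of degree `d` is `P` and whose other components are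
everything. -/
noncomputable def ExtSubalgebra.topExcept (d : ℕ) (P : Submodule k (ModuleExt.{w} E M M d))
    (hone : ofLinear LinearMap.id ∈ FominKirillov.topExcept d P 0)
    (hcomp : ∀ ⦃m n : ℕ⦄ (h : m + n = d) ⦃x : ModuleExt.{w} E M M m⦄ ⦃y : ModuleExt.{w} E M M n⦄,
      x ∈ FominKirillov.topExcept d P m → y ∈ FominKirillov.topExcept d P n → x.comp y h ∈ P) :
    ExtSubalgebra.{w} k E M where
  deg := FominKirillov.topExcept d P
  one_mem := hone
  comp_mem {m n p} h x y hx hy := by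
    by_cases hp : p = d
    · subst hp
      exact mem_topExcept_self.2 (hcomp h hx hy)
    · exact mem_topExcept_of_ne hp _

section Vanishing

variable [Module k M] [IsScalarTower k E M] {N N' : Type u} [AddCommGroup N] [Module E N]
  [AddCommGroup N'] [Module E N'] {m n p r r' : ℕ} {cl : ModuleExt.{w} E M N n}
  {g : (Fin r → E) →ₗ[E] N} {cl' : ModuleExt.{w} E M N' p} {g' : (Fin r' → E) →ₗ[E] N'}

/-- The classes which are represented by a cochain on which the linear form `ℓ` vanishes. -/
def vanishing (cl : ModuleExt.{w} E M N n) (g : (Fin r → E) →ₗ[E] N) (ℓ : (Fin r → M) →ₗ[k] k) :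
    Submodule k (ModuleExt.{w} E M M n) where
  carrier := {x | ∃ c, Represents cl g c x ∧ ℓ c = 0}
  zero_mem' := ⟨0, Represents.zero, map_zero ℓ⟩
  add_mem' := by
    rintro x x' ⟨c, hc, h⟩ ⟨c', hc', h'⟩
    exact ⟨c + c', hc.add hc', by rw [map_add, h, h', add_zero]⟩
  smul_mem' := by
    rintro a x ⟨c, hc, h⟩
    exact ⟨a • c, hc.smul a, by rw [map_smul, h, smul_zero]⟩

theorem Represents.notMem_vanishing {ℓ : (Fin r → M) →ₗ[k] k} {c : Fin r → M}
    {x : ModuleExt.{w} E M M n} (hc : Represents cl g c x)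
    (h0 : ∀ c, Represents cl g c 0 → ℓ c = 0) (h1 : ℓ c ≠ 0) : x ∉ vanishing cl g ℓ := by
  rintro ⟨c', hc', h⟩
  have hdiff := h0 _ (add_neg_cancel x ▸ neg_one_smul k x ▸ hc.add (hc'.smul (-1 : k)))
  rw [map_add, map_smul, h, smul_zero, add_zero] at hdiff
  exact h1 hdiff

theorem ShiftsDegree.comp_mem_vanishing (hcl : ShiftsDegree cl) {x : ModuleExt.{w} E M M m}
    {h : m + n = p} {ψ : (Fin r → M) →ₗ[k] (Fin r' → M)} {ℓ : (Fin r' → M) →ₗ[k] k}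
    (hx : ∀ ⦃c y⦄, Represents cl g c y → Represents cl' g' (ψ c) (x.comp y h))
    (hℓ : ∀ ⦃c y⦄, Represents cl g c y → ℓ (ψ c) = 0) (y : ModuleExt.{w} E M M n) :
    x.comp y h ∈ vanishing cl' g' ℓ :=
  let ⟨c, hc⟩ := hcl.exists_represents g y
  ⟨ψ c, hx hc, hℓ hc⟩

end Vanishing

/-- Lifts, to the cycles of degree `3` which map onto the homology, of the actions of the generators
of degree `2` on the classes of degree `2`. -/
def cycleLift : Fin 4 → List IntComb := ![
  [[(-1, 183), (-1, 314), (-1, 438), (-1, 446), (-1, 459), (1, 580), (1, 581), (-1, 591),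
    (1, 636)]],
  [[(1, 183), (-1, 301), (1, 438), (-1, 469), (-1, 580), (-2, 581), (1, 591), (-1, 601),
    (-1, 624)]],
  [[(1, 580), (1, 601)]],
  [[(1, 5), (-1, 6), (-1, 7), (-1, 148), (-1, 204), (1, 228), (1, 293), (1, 302), (1, 313),
    (-1, 315), (1, 436), (-1, 447), (1, 457), (1, 470), (1, 582), (2, 583), (-1, 590), (2, 602),
    (-1, 615), (-1, 648)]]]

namespace WordBases

variable [Module k M] [IsScalarTower k E M] {B : WordBases k E M} {N N' : Type u} [AddCommGroup N]
  [Module E N] [AddCommGroup N'] [Module E N'] {m n p q r r' s : ℕ} {cl : ModuleExt.{w} E M N n}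
  {g : (Fin r → E) →ₗ[E] N} {cl' : ModuleExt.{w} E M N' p} {g' : (Fin r' → E) →ₗ[E] N'}
  {D D' R : List IntComb}

theorem SpansCocycles.comp_mem_vanishing (hB : B.SpansCocycles q r s D D' R)
    (hcl : ShiftsDegree cl) (hD' : g ∘ₗ B.chainMap s r D' = 0) {x : ModuleExt.{w} E M M m}
    {h : m + n = p} {ψ : (Fin r → M) →ₗ[k] (Fin r' → M)} {t : ℕ → IntComb} {L : IntComb}
    (hψ : HasTable (B.cochainBasis r) (vec (B.cochainBasis r')) ψ t)
    (hx : ∀ ⦃c y⦄, Represents cl g c y → Represents cl' g' (ψ c) (x.comp y h))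
    (hR : R.all fun x =>
      isZero (substBelow (r' * 12) (linearFormTable L) (substBelow (r * 12) t x)))
    (hD : allZero (q * 12) fun i => substBelow (r' * 12) (linearFormTable L)
      (substBelow (r * 12) t (precompTable r D i))) (y : ModuleExt.{w} E M M n) :
    x.comp y h ∈ vanishing cl' g' (linearForm (B.cochainBasis r') L) :=
  hcl.comp_mem_vanishing hx
    (fun _ _ hc => hB.linearForm_eq_zero hψ hR hD (B.cochainMap_eq_zero_of_represents hD' hc)) y

theorem SpansCocycles.x0_comp_mem_vanishing (hB : B.SpansCocycles q r s D D' R)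
    (hcl : ShiftsDegree cl) (hD' : g ∘ₗ B.chainMap s r D' = 0) {i : Fin 3} {L : IntComb}
    (hR : R.all fun x => isZero (substBelow (r * 12) (linearFormTable L)
      (substBelow (r * 12) (smulTable (gens0 i)) x)))
    (hD : allZero (q * 12) fun j => substBelow (r * 12) (linearFormTable L)
      (substBelow (r * 12) (smulTable (gens0 i)) (precompTable r D j)))
    (x : ModuleExt.{w} E M M n) :
    (B.x0 i).comp x (zero_add n) ∈ vanishing cl g (linearForm (B.cochainBasis r) L) :=
  hB.comp_mem_vanishing hcl hD' (B.hasTable_smul (gens0 i))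
    (fun _ _ hc => hc.centralSMul_comp (B.commute_gens0 i)) hR hD x

section Radical

variable (B) in
/-- The class `x` comes from an extension of `M` by its radical. -/
def IsRadical (x : ModuleExt.{w} E M M n) : Prop :=
  ∃ x' : ModuleExt.{w} E M B.radical n, x'.comp (ofLinear B.radical.subtype) (add_zero n) = x

theorem IsRadical.comp {y : ModuleExt.{w} E M M n} (hy : B.IsRadical y)
    (x : ModuleExt.{w} E M M m) (h : m + n = p) : B.IsRadical (x.comp y h) := by
  obtain ⟨y', rfl⟩ := hy
  exact ⟨x.comp y' h, Ext.comp_assoc _ _ _ h (add_zero n) (by lia)⟩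

theorem IsRadical.mem_vanishing {x : ModuleExt.{w} E M M n} (hx : B.IsRadical x)
    (hcl : ShiftsDegree cl) (g : (Fin r → E) →ₗ[E] N) (i : Fin r) :
    x ∈ vanishing cl g (linearForm (B.cochainBasis r) [(1, i * 12)]) := by
  obtain ⟨x', rfl⟩ := hx
  obtain ⟨φ, rfl⟩ := hcl.exists_eq_comp_ofLinear x'
  refine ⟨_, ⟨B.radical.subtype ∘ₗ φ, (freeMap_eta (_ ∘ₗ g)).symm, ?_⟩, ?_⟩
  · rw [comp_ofLinear_comp_ofLinear]
  · rw [linearForm_eq_coeff]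
    exact (φ (g (Pi.single i 1))).2

theorem _root_.FominKirillov.Represents.isRadical {c : Fin r → M} {x : ModuleExt.{w} E M M n}
    (hx : Represents cl g c x) (hg : Function.Surjective g) (hc : ∀ i, c i ∈ B.radical) :
    B.IsRadical x := by
  obtain ⟨φ, hφ, rfl⟩ := hx
  have hrange : ∀ y, φ y ∈ B.radical := fun y => by
    obtain ⟨v, rfl⟩ := hg y
    rw [← LinearMap.comp_apply, hφ, freeMap_apply]
    exact B.radical.sum_mem fun i _ => B.radical.smul_mem _ (hc i)
  refine ⟨cl.comp (ofLinear (φ.codRestrict B.radical hrange)) (add_zero n), ?_⟩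
  rw [comp_ofLinear_comp_ofLinear, LinearMap.subtype_comp_codRestrict]

theorem SpansCocycles.isRadical (hB : B.SpansCocycles q r s D D' R) (hcl : ShiftsDegree cl)
    (hg : Function.Surjective g) (hD' : g ∘ₗ B.chainMap s r D' = 0)
    (hR : ∀ i < r, R.all fun x => isZero (substBelow (r * 12) (linearFormTable [(1, i * 12)])
      (substBelow (r * 12) (fun j => [(1, j)]) x)))
    (hD : ∀ i < r, allZero (q * 12) fun j => substBelow (r * 12) (linearFormTable [(1, i * 12)])
      (substBelow (r * 12) (fun j => [(1, j)]) (precompTable r D j)))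
    (x : ModuleExt.{w} E M M n) : B.IsRadical x := by
  obtain ⟨c, hc⟩ := hcl.exists_represents g x
  refine hc.isRadical hg fun i => ?_
  rw [mem_radical, ← linearForm_eq_coeff]
  exact hB.linearForm_eq_zero (ψ := LinearMap.id) (fun j => by simp [vec_coe]) (hR i i.2) (hD i i.2)
    (B.cochainMap_eq_zero_of_represents hD' hc)

end Radical

section Decomposables

variable (B) in
/-- The subspace `P` contains all products of an element of degree `d` with a generator of degree
`0` and all products of elements of positive degrees. -/
structure ContainsDecomposables {d : ℕ} (P : Submodule k (ModuleExt.{w} E M M d)) : Prop where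
  x0_comp_mem : ∀ i x, (B.x0 i).comp x (zero_add d) ∈ P
  comp_mem : ∀ ⦃m n : ℕ⦄, 0 < m → 0 < n → ∀ (h : m + n = d) (x : ModuleExt.{w} E M M m)
    (y : ModuleExt.{w} E M M n), x.comp y h ∈ P

theorem comp_mem_of_x0_comp_mem (h2 : IsUnit (2 : k)) {d : ℕ}
    {P : Submodule k (ModuleExt.{w} E M M d)} {y : ModuleExt.{w} E M M d} (hyP : y ∈ P)
    (hy : ∀ i, (B.x0 i).comp y (zero_add d) ∈ P) (x : ModuleExt.{w} E M M 0) :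
    x.comp y (zero_add d) ∈ P :=
  mem_of_x0_mem (B := B) h2
    (S := P.comap ((Ext.bilinearCompOfLinear k _ _ _ 0 d d (zero_add d)).flip y))
    (by simpa [ofLinear_id_comp] using hyP) hy x

theorem comp_mem_of_comp_x0_mem (h2 : IsUnit (2 : k)) {d : ℕ}
    {P : Submodule k (ModuleExt.{w} E M M d)} {x : ModuleExt.{w} E M M d} (hxP : x ∈ P)
    (hx : ∀ i, x.comp (B.x0 i) (add_zero d) ∈ P) (y : ModuleExt.{w} E M M 0) :
    x.comp y (add_zero d) ∈ P :=
  mem_of_x0_mem (B := B) h2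
    (S := P.comap (Ext.bilinearCompOfLinear k _ _ _ d 0 d (add_zero d) x))
    (by simpa [comp_ofLinear_id] using hxP) hx y

theorem comp_mem_of_x1_comp_mem (h2 : IsUnit (2 : k)) {P : Submodule k (ModuleExt.{w} E M M p)}
    (hP : ∀ i x, (B.x0 i).comp x (zero_add p) ∈ P) (h : 1 + n = p) {y : ModuleExt.{w} E M M n}
    (hy : ∀ s, (B.x1 s).comp y h ∈ P) (x : ModuleExt.{w} E M M 1) : x.comp y h ∈ P :=
  mem_of_x1_mem h2 (S := P.comap ((Ext.bilinearCompOfLinear k _ _ _ 1 n p h).flip y)) hy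
    (fun i s => by
      have := hP i ((B.x1 s).comp y h)
      rwa [← Ext.comp_assoc _ _ _ (zero_add 1) h (by lia)] at this) x

theorem comp_mem_of_x2_comp_mem (h2 : IsUnit (2 : k)) {P : Submodule k (ModuleExt.{w} E M M p)}
    (hP : ∀ i x, (B.x0 i).comp x (zero_add p) ∈ P) (h : 2 + n = p) {y : ModuleExt.{w} E M M n}
    (hy : ∀ t, (B.x2 t).comp y h ∈ P) (x : ModuleExt.{w} E M M 2) : x.comp y h ∈ P :=
  mem_of_x2_mem h2 (S := P.comap ((Ext.bilinearCompOfLinear k _ _ _ 2 n p h).flip y)) hy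
    (fun i t => by
      have := hP i ((B.x2 t).comp y h)
      rwa [← Ext.comp_assoc _ _ _ (zero_add 2) h (by lia)] at this) x

theorem ContainsDecomposables.exists_extSubalgebra {d : ℕ}
    {P : Submodule k (ModuleExt.{w} E M M d)} (hP : B.ContainsDecomposables P)
    (h2 : IsUnit (2 : k)) (hd : d ≠ 0) :
    ∃ S : ExtSubalgebra.{w} k E M, S.deg = topExcept d P := by
  refine ⟨.topExcept d P (mem_topExcept_of_ne hd.symm _) fun m n h x y hx hy => ?_, rfl⟩
  obtain rfl | hm := m.eq_zero_or_pos
  · obtain rfl : n = d := by lia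
    rw [mem_topExcept_self] at hy
    exact comp_mem_of_x0_comp_mem (B := B) h2 hy (fun i => hP.x0_comp_mem i y) x
  obtain rfl | hn := n.eq_zero_or_pos
  · obtain rfl : m = d := by lia
    rw [mem_topExcept_self] at hx
    exact comp_mem_of_comp_x0_mem (B := B) h2 hx
      (fun i => centralSMul_comp (B.commute_gens0 i) x ▸ hP.x0_comp_mem i x) y
  exact hP.comp_mem hm hn h x y

end Decomposables

theorem isRadical_of_degree_one (h2 : IsUnit (2 : k)) (x : ModuleExt.{w} E M M 1) :
    B.IsRadical x :=
  (B.spansCocycles1 h2).isRadical B.shiftsDegree_truncClass1 B.cover1_surjective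
    B.cover1_comp_diff2 (by decide +kernel) (by decide +kernel) x

theorem isRadical_of_degree_three (h6 : IsUnit (6 : k)) (x : ModuleExt.{w} E M M 3) :
    B.IsRadical x :=
  (B.spansCocycles3 h6).isRadical B.shiftsDegree_truncClass3 B.cover3_surjective
    B.cover3_comp_diff4 (by decide +kernel) (by decide +kernel) x

theorem containsDecomposables1 (h2 : IsUnit (2 : k)) (s : Fin 5) :
    B.ContainsDecomposables
      (vanishing.{w} B.truncClass1 B.cover1 (linearForm (B.cochainBasis 3) (dual1 s))) where
  x0_comp_mem i := (B.spansCocycles1 h2).x0_comp_mem_vanishing B.shiftsDegree_truncClass1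
    B.cover1_comp_diff2 (by revert i s; decide +kernel) (by revert i s; decide +kernel)
  comp_mem m n hm hn h := by lia

theorem containsDecomposables2 (h2 : IsUnit (2 : k)) (t : Fin 4) :
    B.ContainsDecomposables
      (vanishing.{w} B.truncClass2 B.cover2 (linearForm (B.cochainBasis 5) (dual2 t))) where
  x0_comp_mem i := (B.spansCocycles2 h2).x0_comp_mem_vanishing B.shiftsDegree_truncClass2
    B.cover2_comp_diff3 (by revert i t; decide +kernel) (by revert i t; decide +kernel)
  comp_mem m n hm hn h x y := by
    obtain rfl : n = 1 := by lia
    exact ((isRadical_of_degree_one h2 y).comp x h).mem_vanishing B.shiftsDegree_truncClass2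
      B.cover2 t.castSucc

theorem containsDecomposables3 (h6 : IsUnit (6 : k)) :
    B.ContainsDecomposables
      (vanishing.{w} B.truncClass3 B.cover3 (linearForm (B.cochainBasis 6) dual3)) := by
  have h2 : IsUnit (2 : k) := isUnit_of_dvd_unit ⟨3, by norm_num⟩ h6
  have hx0 := fun i => (B.spansCocycles3 h6).x0_comp_mem_vanishing (i := i) (L := dual3)
    B.shiftsDegree_truncClass3 B.cover3_comp_diff4
    (by revert i; decide +kernel) (by revert i; decide +kernel)
  refine ⟨hx0, fun m n hm hn h x y => ?_⟩
  obtain ⟨rfl, rfl⟩ | ⟨rfl, rfl⟩ : m = 1 ∧ n = 2 ∨ m = 2 ∧ n = 1 := by lia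
  · exact comp_mem_of_x1_comp_mem h2 hx0 h (fun s => (B.spansCocycles2 h2).comp_mem_vanishing
      B.shiftsDegree_truncClass2 B.cover2_comp_diff3 (B.hasTable_cochainMap _)
      (fun _ _ => (isLift_x1_derivationLift2 s).represents_comp)
      (by revert s; decide +kernel) (by revert s; decide +kernel) y) x
  · exact comp_mem_of_x2_comp_mem h2 hx0 h (fun t => (B.spansCocycles1 h2).comp_mem_vanishing
      B.shiftsDegree_truncClass1 B.cover1_comp_diff2 (B.hasTable_cochainMap _)
      (fun _ _ => (isLift_x2_quadLift1 t).represents_comp)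
      (by revert t; decide +kernel) (by revert t; decide +kernel) y) x

theorem x1_mem_vanishing {s s' : Fin 5} (h : s ≠ s') :
    B.x1 s' ∈ vanishing.{w} B.truncClass1 B.cover1 (linearForm (B.cochainBasis 3) (dual1 s)) :=
  ⟨_, B.represents_x1 s', by rw [linearForm_dual1_gens1, if_neg h]⟩

theorem x1_notMem_vanishing (s : Fin 5) :
    B.x1 s ∉ vanishing.{w} B.truncClass1 B.cover1 (linearForm (B.cochainBasis 3) (dual1 s)) := by
  refine (B.represents_x1 s).notMem_vanishing (fun c hc => ?_)
    (by rw [linearForm_dual1_gens1, if_pos rfl]; exact one_ne_zero)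
  obtain ⟨c, rfl⟩ := B.exists_eq_cochainMap_of_represents1 hc
  exact LinearMap.congr_fun (linearForm_comp_eq_zero (B.hasTable_cochainMap diff1)
    (by revert s; decide +kernel)) c

theorem x2_mem_vanishing {t t' : Fin 4} (h : t ≠ t') :
    B.x2 t' ∈ vanishing.{w} B.truncClass2 B.cover2 (linearForm (B.cochainBasis 5) (dual2 t)) :=
  ⟨_, B.represents_x2 t', by rw [linearForm_dual2_gens2, if_neg h]⟩

theorem x2_notMem_vanishing (t : Fin 4) :
    B.x2 t ∉ vanishing.{w} B.truncClass2 B.cover2 (linearForm (B.cochainBasis 5) (dual2 t)) := by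
  refine (B.represents_x2 t).notMem_vanishing (fun c hc => ?_)
    (by rw [linearForm_dual2_gens2, if_pos rfl]; exact one_ne_zero)
  obtain ⟨c, rfl⟩ := B.exists_eq_cochainMap_of_represents2 hc
  exact LinearMap.congr_fun (linearForm_comp_eq_zero (B.hasTable_cochainMap diff2)
    (by revert t; decide +kernel)) c

theorem x3_notMem_vanishing :
    B.x3 ∉ vanishing.{w} B.truncClass3 B.cover3 (linearForm (B.cochainBasis 6) dual3) := by
  refine B.represents_x3.notMem_vanishing (fun c hc => ?_)
    (by rw [linearForm_dual3_gen3]; exact one_ne_zero)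
  obtain ⟨c, rfl⟩ := B.exists_eq_cochainMap_of_represents3 hc
  exact LinearMap.congr_fun (linearForm_comp_eq_zero (B.hasTable_cochainMap diff3)
    (by decide +kernel)) c

variable (B) in
/-- The cycle which generates the homology of the Koszul bimodule complex in degree `3`, as a map to
the cycles. -/
noncomputable def cycleCover : (Fin 1 → E) →ₗ[E] LinearMap.ker B.cover3 :=
  B.cycleMap.codRestrict _ fun x => Subtype.ext (LinearMap.congr_fun B.diff3_comp_cycleMap x)

theorem represents_x4 :
    Represents.{w} B.truncClass4 B.cycleCover (B.cochain 1 [(1, 0)]) B.x4 := by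
  refine ⟨B.homologyProj, ?_, rfl⟩
  rw [freeMap_cochain_unit]
  exact LinearMap.ext B.cycleCoeff_cycleMap

theorem isLift_x2_cycleLift (t : Fin 4) :
    IsLift.{w} (B.x2 t) B.truncClass4 B.cycleCover B.truncClass2 B.cover2
      (B.chainMap 1 5 (cycleLift t)) rfl :=
  (isLift_x2_quadLift1 t).comp_syzygyClass _ _
    (B.chainMap_comp_chainMap (D₂ := diff2) (D₃ := cycle3) (by revert t; decide +kernel))

theorem x0_comp_mem_vanishing_cycleCover (i : Fin 3) (x : ModuleExt.{w} E M M 4) :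
    (B.x0 i).comp x (zero_add 4) ∈
      vanishing B.truncClass4 B.cycleCover (linearForm (B.cochainBasis 1) [(1, 0)]) := by
  have hzero : linearForm (B.cochainBasis 1) [(1, 0)] ∘ₗ
      Algebra.lsmul k k (Fin 1 → M) (B.envElem (gens0 i)) = 0 :=
    linearForm_comp_eq_zero (B.hasTable_smul (gens0 i)) (by revert i; decide +kernel)
  exact B.shiftsDegree_truncClass4.comp_mem_vanishing
    (fun _ _ hc => hc.centralSMul_comp (B.commute_gens0 i))
    (fun c _ _ => LinearMap.congr_fun hzero c) x

theorem containsDecomposables4 (h6 : IsUnit (6 : k)) :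
    B.ContainsDecomposables
      (vanishing.{w} B.truncClass4 B.cycleCover (linearForm (B.cochainBasis 1) [(1, 0)])) := by
  have h2 : IsUnit (2 : k) := isUnit_of_dvd_unit ⟨3, by norm_num⟩ h6
  refine ⟨x0_comp_mem_vanishing_cycleCover, fun m n hm hn h x y => ?_⟩
  obtain ⟨rfl, rfl⟩ | ⟨rfl, rfl⟩ | ⟨rfl, rfl⟩ :
    m = 1 ∧ n = 3 ∨ m = 2 ∧ n = 2 ∨ m = 3 ∧ n = 1 := by lia
  · exact ((isRadical_of_degree_three h6 y).comp x h).mem_vanishing B.shiftsDegree_truncClass4 _ 0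
  · exact comp_mem_of_x2_comp_mem h2 x0_comp_mem_vanishing_cycleCover h
      (fun t => B.shiftsDegree_truncClass2.comp_mem_vanishing
        (fun _ _ => (isLift_x2_cycleLift t).represents_comp)
        (fun c _ _ => LinearMap.congr_fun (linearForm_comp_eq_zero
          (B.hasTable_cochainMap (cycleLift t)) (by revert t; decide +kernel)) c) y) x
  · exact ((isRadical_of_degree_one h2 y).comp x h).mem_vanishing B.shiftsDegree_truncClass4 _ 0

theorem x4_notMem_vanishing :
    B.x4 ∉ vanishing.{w} B.truncClass4 B.cycleCover (linearForm (B.cochainBasis 1) [(1, 0)]) := by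
  refine represents_x4.notMem_vanishing (fun c hc => ?_) ?_
  · obtain ⟨c, rfl⟩ : ∃ c', c = B.cochainMap 6 1 cycle3 c' :=
      B.shiftsDegree_truncClass3.exists_eq_precomp (d := B.cycleCover) rfl hc
    exact LinearMap.congr_fun (linearForm_comp_eq_zero (B.hasTable_cochainMap cycle3)
      (by decide +kernel)) c
  · rw [cochain, linearForm_eval (n := 1) (by decide +kernel), Int.cast_one]
    exact one_ne_zero

section DegreeZero

theorem represents_x0 (i : Fin 3) :
    Represents.{w} (ofLinear LinearMap.id) B.aug
      (B.cochain 1 (substBelow (1 * 12) (smulTable (gens0 i)) [(1, 0)])) (B.x0 i) := by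
  rw [← comp_ofLinear_id (B.x0 i)]
  exact represents_x0_comp B.represents_one (by revert i; decide +kernel)

theorem x0_comp_x0 (i j : Fin 3) :
    (B.x0 i).comp (B.x0 j) (zero_add 0) = (0 : ModuleExt.{w} E M M 0) := by
  refine (represents_x0_comp (L' := []) (represents_x0 j) ?_).unique B.aug_surjective
    Represents.zero
  revert i j
  decide +kernel

variable (B) in
/-- The subspace spanned by the unit and the generators of degree `0` other than the `i`-th. -/
noncomputable def spanExcept (i : Fin 3) : Submodule k (ModuleExt.{w} E M M 0) :=
  Submodule.span k (insert (ofLinear LinearMap.id) (B.x0 '' {i}ᶜ))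

theorem comp_mem_spanExcept {i : Fin 3} {x y : ModuleExt.{w} E M M 0} (hx : x ∈ B.spanExcept i)
    (hy : y ∈ B.spanExcept i) : x.comp y (zero_add 0) ∈ B.spanExcept i := by
  refine LinearMap.BilinMap.apply_apply_mem_of_mem_span (R := k) (B.spanExcept i) _ _
    (Ext.bilinearCompOfLinear k _ _ _ 0 0 0 (zero_add 0)) ?_ x y hx hy
  rintro x (rfl | ⟨j, hj, rfl⟩) y hy
  · exact Set.mem_of_eq_of_mem (ofLinear_id_comp y) (Submodule.subset_span hy)
  · obtain rfl | ⟨j', -, rfl⟩ := hy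
    · exact Set.mem_of_eq_of_mem (comp_ofLinear_id _) (Submodule.subset_span (.inr ⟨j, hj, rfl⟩))
    · exact Set.mem_of_eq_of_mem (x0_comp_x0 j j') (Submodule.zero_mem _)

variable (B) in
theorem exists_extSubalgebra_spanExcept (i : Fin 3) :
    ∃ S : ExtSubalgebra.{w} k E M, S.deg = topExcept 0 (B.spanExcept i) := by
  refine ⟨.topExcept 0 (B.spanExcept i) ?_ fun m n h x y hx hy => ?_, rfl⟩
  · exact mem_topExcept_self.2 (Submodule.subset_span (.inl rfl))
  · obtain rfl : m = 0 := by lia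
    obtain rfl : n = 0 := by lia
    rw [mem_topExcept_self] at hx hy
    exact comp_mem_spanExcept hx hy

theorem spanExcept_le_vanishing (i : Fin 3) :
    B.spanExcept i ≤ vanishing.{w} (ofLinear LinearMap.id) B.aug
      (linearForm (B.cochainBasis 1) (dual0 i)) := by
  rw [spanExcept, Submodule.span_le]
  rintro x (rfl | ⟨j, hj, rfl⟩)
  · exact ⟨_, B.represents_one, B.linearForm_dual0_unit i⟩
  · exact ⟨_, represents_x0 j, by rw [linearForm_dual0_gens0, if_neg (Ne.symm hj)]⟩

theorem x0_notMem_spanExcept (i : Fin 3) : B.x0 i ∉ B.spanExcept.{w} i := fun h => by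
  refine (represents_x0 i).notMem_vanishing (fun c hc => ?_) ?_ (spanExcept_le_vanishing i h)
  · obtain ⟨φ, hφ, h0⟩ := hc
    rw [ofLinear_id_comp, ← ofLinear_zero] at h0
    rw [← ofLinear_injective h0, LinearMap.zero_comp, ← freeMap_zero] at hφ
    rw [← freeMap_injective hφ, map_zero]
  · rw [linearForm_dual0_gens0, if_pos rfl]
    exact one_ne_zero

end DegreeZero

end WordBases

end Minimality

/-! ### The fourteen generators -/

namespace WordBases

variable {k E M : Type} [Field k] [Ring E] [Algebra k E] [AddCommGroup M] [Module k M] [Module E M]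
  [IsScalarTower k E M] [HasExt.{w} (ModuleCat.{0} E)]

/-- The generators `X₁, …, X₁₄`, numbered from `0`. -/
noncomputable def generator (B : WordBases k E M) : ∀ i : Fin 14, ModuleExt.{w} E M M (hhDegs i)
  | 0 => B.x0 0
  | 1 => B.x0 1
  | 2 => B.x0 2
  | 3 => B.x1 0
  | 4 => B.x1 1
  | 5 => B.x1 2
  | 6 => B.x1 3
  | 7 => B.x1 4
  | 8 => B.x2 0
  | 9 => B.x2 1
  | 10 => B.x2 2
  | 11 => B.x2 3
  | 12 => B.x3
  | 13 => B.x4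

variable {B : WordBases k E M}

theorem generator_cases {Q : ℕ → ∀ n, ModuleExt.{w} E M M n → Prop}
    (h0 : ∀ i : Fin 3, Q i 0 (B.x0 i)) (h1 : ∀ s : Fin 5, Q (3 + s) 1 (B.x1 s))
    (h2 : ∀ t : Fin 4, Q (8 + t) 2 (B.x2 t)) (h3 : Q 12 3 B.x3) (h4 : Q 13 4 B.x4) :
    ∀ i : Fin 14, Q i (hhDegs i) (B.generator i)
  | 0 => h0 0
  | 1 => h0 1
  | 2 => h0 2
  | 3 => h1 0
  | 4 => h1 1
  | 5 => h1 2
  | 6 => h1 3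
  | 7 => h1 4
  | 8 => h2 0
  | 9 => h2 1
  | 10 => h2 2
  | 11 => h2 3
  | 12 => h3
  | 13 => h4

theorem containsGenerators_of_generator_mem {S : ExtSubalgebra.{w} k E M}
    (h : ∀ i, B.generator i ∈ S.deg (hhDegs i)) : B.ContainsGenerators S where
  x0_mem i := match i with
    | 0 => h 0
    | 1 => h 1
    | 2 => h 2
  x1_mem s := match s with
    | 0 => h 3
    | 1 => h 4
    | 2 => h 5
    | 3 => h 6
    | 4 => h 7
  x2_mem t := match t with
    | 0 => h 8
    | 1 => h 9
    | 2 => h 10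
    | 3 => h 11
  x3_mem := h 12
  x4_mem := h 13

variable (B) in
/-- Some graded subalgebra contains all generators except the one numbered `i`, which is the class
`x` of degree `n`. -/
def IsSeparated (i n : ℕ) (x : ModuleExt.{w} E M M n) : Prop :=
  ∃ S : ExtSubalgebra.{w} k E M,
    (∀ j : Fin 14, j.1 ≠ i → B.generator j ∈ S.deg (hhDegs j)) ∧ x ∉ S.deg n

theorem isSeparated_of_deg_eq_update {i d : ℕ} {P : Submodule k (ModuleExt.{w} E M M d)}
    {x : ModuleExt.{w} E M M d}
    (hS : ∃ S : ExtSubalgebra.{w} k E M, S.deg = topExcept d P)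
    (hmem : ∀ j : Fin 14, j.1 ≠ i → B.generator j ∈ topExcept d P (hhDegs j))
    (hx : x ∉ P) :
    B.IsSeparated i d x := by
  obtain ⟨S, hS⟩ := hS
  exact ⟨S, hS ▸ hmem, by rwa [hS, mem_topExcept_self]⟩

theorem isSeparated_x0 (i : Fin 3) : B.IsSeparated.{w} i 0 (B.x0 i) := by
  refine isSeparated_of_deg_eq_update (B.exists_extSubalgebra_spanExcept i) ?_
    (x0_notMem_spanExcept i)
  refine generator_cases (Q := fun j n x => j ≠ i → x ∈ topExcept 0 _ n)
    (fun j hj => mem_topExcept_self.2 ?_) ?_ ?_ ?_ ?_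
  · exact Submodule.subset_span (.inr ⟨j, by rintro rfl; exact hj rfl, rfl⟩)
  all_goals intros; exact mem_topExcept_of_ne (by decide) _

theorem isSeparated_x1 (h2 : IsUnit (2 : k)) (s : Fin 5) :
    B.IsSeparated.{w} (3 + s) 1 (B.x1 s) := by
  refine isSeparated_of_deg_eq_update
    ((containsDecomposables1 h2 s).exists_extSubalgebra h2 one_ne_zero) ?_ (x1_notMem_vanishing s)
  refine generator_cases (Q := fun j n x => j ≠ 3 + s → x ∈ topExcept 1 _ n) ?_
    (fun s' hs => mem_topExcept_self.2 (x1_mem_vanishing (fun h => hs (h ▸ rfl)))) ?_ ?_ ?_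
  all_goals intros; exact mem_topExcept_of_ne (by decide) _

theorem isSeparated_x2 (h2 : IsUnit (2 : k)) (t : Fin 4) :
    B.IsSeparated.{w} (8 + t) 2 (B.x2 t) := by
  refine isSeparated_of_deg_eq_update
    ((containsDecomposables2 h2 t).exists_extSubalgebra h2 two_ne_zero) ?_ (x2_notMem_vanishing t)
  refine generator_cases (Q := fun j n x => j ≠ 8 + t → x ∈ topExcept 2 _ n) ?_ ?_
    (fun t' ht => mem_topExcept_self.2 (x2_mem_vanishing (fun h => ht (h ▸ rfl)))) ?_ ?_
  all_goals intros; exact mem_topExcept_of_ne (by decide) _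

theorem isSeparated_x3 (h6 : IsUnit (6 : k)) : B.IsSeparated.{w} 12 3 B.x3 := by
  have h2 : IsUnit (2 : k) := isUnit_of_dvd_unit ⟨3, by norm_num⟩ h6
  refine isSeparated_of_deg_eq_update
    ((containsDecomposables3 h6).exists_extSubalgebra h2 three_ne_zero) ?_ x3_notMem_vanishing
  refine generator_cases (Q := fun j n x => j ≠ 12 → x ∈ topExcept 3 _ n) ?_ ?_ ?_
    (fun h => absurd rfl h) ?_
  all_goals intros; exact mem_topExcept_of_ne (by decide) _

theorem isSeparated_x4 (h6 : IsUnit (6 : k)) : B.IsSeparated.{w} 13 4 B.x4 := by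
  have h2 : IsUnit (2 : k) := isUnit_of_dvd_unit ⟨3, by norm_num⟩ h6
  refine isSeparated_of_deg_eq_update
    ((containsDecomposables4 h6).exists_extSubalgebra h2 four_ne_zero) ?_ x4_notMem_vanishing
  refine generator_cases (Q := fun j n x => j ≠ 13 → x ∈ topExcept 4 _ n) ?_ ?_ ?_ ?_
    (fun h => absurd rfl h)
  all_goals intros; exact mem_topExcept_of_ne (by decide) _

theorem isSeparated_generator (h6 : IsUnit (6 : k)) (i : Fin 14) :
    B.IsSeparated.{w} i (hhDegs i) (B.generator i) :=
  have h2 : IsUnit (2 : k) := isUnit_of_dvd_unit ⟨3, by norm_num⟩ h6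
  generator_cases (Q := fun i n x => B.IsSeparated i n x) isSeparated_x0 (isSeparated_x1 h2)
    (isSeparated_x2 h2) (isSeparated_x3 h6) (isSeparated_x4 h6) i

end WordBases

section

variable {k : Type} [Field k] {T : ∀ n : ℕ, Set (HHExt k n)}

/-- The graded subalgebra of the Hochschild cohomology which is generated by `T`. -/
noncomputable def extGenSubalgebra (T : ∀ n : ℕ, Set (HHExt k n)) :
    ExtSubalgebra.{1} k (FKAe k) (FK3 k) where
  deg n :=
    { carrier := {x | ExtGen k T n x}
      zero_mem' := .zero n
      add_mem' := .add _ _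
      smul_mem' c x hx := by
        rw [← mk₀_smul_id_comp]
        exact .smul c x hx }
  one_mem := .one
  comp_mem h _ _ hx hy := by
    subst h
    exact .mul _ _ hx hy

theorem mem_deg_of_extGen {S : ExtSubalgebra.{1} k (FKAe k) (FK3 k)}
    (hT : ∀ n, ∀ x ∈ T n, x ∈ S.deg n) {n : ℕ} {x : HHExt k n} (h : ExtGen k T n x) :
    x ∈ S.deg n := by
  induction h with
  | of x hx => exact hT _ x hx
  | zero n => exact zero_mem _
  | one => exact S.one_mem
  | add x y _ _ hx hy => exact add_mem hx hy
  | neg x _ hx => exact neg_mem hx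
  | smul c x _ hx =>
    rw [mk₀_smul_id_comp]
    exact Submodule.smul_mem _ c hx
  | mul x y _ _ hx hy => exact S.comp_mem rfl hx hy

end

theorem isUnit_six_of_ringChar_ne {k : Type*} [Field k] (h2 : ringChar k ≠ 2)
    (h3 : ringChar k ≠ 3) : IsUnit (6 : k) := by
  have h : (3 : k) ≠ 0 := fun h => by
    obtain h | h := (Nat.dvd_prime Nat.prime_three).1
      ((ringChar.spec k 3).1 (by exact_mod_cast h))
    exacts [CharP.ringChar_ne_one h, h3 h]
  rw [show (6 : k) = 2 * 3 by norm_num]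
  exact (mul_ne_zero (Ring.two_ne_zero h2) h).isUnit

end FominKirillov

open FominKirillov in
/-- `HH^•(FK(3))` is a finitely generated `k`-algebra: it admits a minimal
generating set of exactly `14` homogeneous elements, of cohomological degrees
`0,0,0,1,1,1,1,1,2,2,2,2,3,4`. -/
theorem FK3_hochschildCohomology_finitelyGenerated
    (h2 : ringChar k ≠ 2) (h3 : ringChar k ≠ 3) :
    ∃ g : ∀ i : Fin 14, HHExt k (hhDegs i),
      (∀ (n : ℕ) (x : HHExt k n), ExtGen k (famSet k g Set.univ) n x) ∧
      (∀ i : Fin 14, ¬ ∀ (n : ℕ) (x : HHExt k n), ExtGen k (famSet k g {i}ᶜ) n x) := by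
  have h6 : IsUnit (6 : k) := isUnit_six_of_ringChar_ne h2 h3
  let g := (fkWordBases k).generator
  refine ⟨g, fun n x => ?_, fun i hgen => ?_⟩
  · have hg (i : Fin 14) : ExtGen k (famSet k g Set.univ) (hhDegs i) (g i) :=
      .of _ ⟨i, trivial, rfl, rfl⟩
    exact (WordBases.containsGenerators_of_generator_mem
      (S := extGenSubalgebra (famSet k g Set.univ)) hg).mem_deg h6 n x
  · obtain ⟨S, hS, hi⟩ := WordBases.isSeparated_generator (B := fkWordBases k) h6 i
    refine hi (mem_deg_of_extGen ?_ (hgen _ (g i)))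
    rintro n x ⟨j, hj, rfl, rfl⟩
    exact hS j fun h => hj (Fin.ext h)
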